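/- (Lemma 2.7.) Let A := (π·λ₁(𝔻), π·μ₁(𝔻)) be the point of 𝓔 corresponding to the unit disc 𝔻 and let C := (π·λ₁(𝔻), 0). For every η > 0 there exists a continuous path γ : [0,1) → ℝ² such that γ(0) = A, γ(t) ∈ 𝓔 for every t ∈ [0,1), γ(t) ∈ [π·λ₁(𝔻), π·λ₁(𝔻) + η] × [0, π·μ₁(𝔻)] for every t ∈ [0,1), and γ(t) → C as t → 1⁻. -/

import Mathlib

open MeasureTheory Filter Set Real RealInnerProductSpace

noncomputable section

abbrev E2 : Type := EuclideanSpace ℝ (Fin 2)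

/-- First Dirichlet eigenvalue, variational characterization. -/
noncomputable def dEig1 (Ω : Set E2) : ℝ :=
  sInf { R : ℝ | ∃ u : E2 → ℝ, ContDiff ℝ (⊤ : ℕ∞) u ∧ HasCompactSupport u ∧
    tsupport u ⊆ Ω ∧ (∫ x, (u x)^2) ≠ 0 ∧
    R = (∫ x, ‖fderiv ℝ u x‖^2) / (∫ x, (u x)^2) }

/-- First nontrivial Neumann eigenvalue, variational characterization. -/
noncomputable def nEig1 (Ω : Set E2) : ℝ :=
  sInf { R : ℝ | ∃ u : E2 → ℝ, ContDiff ℝ (⊤ : ℕ∞) u ∧ (∫ x in Ω, u x) = 0 ∧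
    (∫ x in Ω, (u x)^2) ≠ 0 ∧
    R = (∫ x in Ω, ‖fderiv ℝ u x‖^2) / (∫ x in Ω, (u x)^2) }

/-- The cone C(y, ξ, ε). -/
def coneSet (y ξ : E2) (ε : ℝ) : Set E2 :=
  { z | Real.cos ε * ‖z - y‖ ≤ ⟪z - y, ξ⟫ ∧ 0 < ‖z - y‖ ∧ ‖z - y‖ < ε }

/-- The uniform ε-cone property. -/
def ConeProperty (Ω : Set E2) (ε : ℝ) : Prop :=
  ∀ x ∈ frontier Ω, ∃ ξ : E2, ‖ξ‖ = 1 ∧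
    ∀ y ∈ closure Ω ∩ Metric.ball x ε, coneSet y ξ ε ⊆ Ω

/-- The Blaschke–Santaló diagram 𝓔 for general (cone-property, i.e. Lipschitz) open sets. -/
def diagE : Set (ℝ × ℝ) :=
  { p | ∃ Ω : Set E2, Ω.Nonempty ∧ IsOpen Ω ∧ Bornology.IsBounded Ω ∧
      (∃ ε > 0, ConeProperty Ω ε) ∧
      p = ((volume Ω).toReal * dEig1 Ω, (volume Ω).toReal * nEig1 Ω) }

/-- The open unit disc in the plane. -/
def unitDisc : Set E2 := Metric.ball 0 1

/-!
Attach to the unit disc the horizontal strip `(-M, M) × (-w, w)` with `M = 1 / (1 - t)` and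
`w = c t (1 - t)²`, where `c` is small. Let `Ω` be the resulting domain, symmetric about the origin.

* `|Ω| λ₁(Ω) ≥ π λ₁(𝔻)`: the area grows by order `w (M - 1)`, while `λ₁` drops only by order
  `w² (M + 1)`. Indeed, a function vanishing on the boundary of a strip of width `2w` has small mass
  there, and its trace on the unit circle is small compared with its energy in the strip.
* `|Ω| λ₁(Ω) ≤ (π + 4 w M) λ₁(𝔻)` by monotonicity of `λ₁`, and `w M ≤ c`.
* `|Ω| μ₁(Ω) ≤ π μ₁(𝔻)`: expanding in angular Fourier modes, `μ₁(𝔻)` is attained in the limit by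
  functions `f(r) cos θ` with `f` constant near `r = 1`. Such a function extends to the strip with
  little energy but, since `f(1)²` is bounded below, with substantial mass.
* `μ₁(Ω) → 0`: the coordinate function `x₀` has energy `|Ω|`, but its second moment is of order
  `w M³ → ∞`.
* Continuity in `t`: the domains are star-shaped, and nearby ones contain each other's dilations by
  factors close to `1`, so volumes and eigenvalues can be compared.
-/

open scoped Topology ContDiff

/-! ### Integrals of one real variable -/

section IntegralInequalities

theorem tendsto_intervalIntegral_comp_of_bounded {ι X : Type*} {l : Filter ι}
    [l.IsCountablyGenerated] [NormedAddCommGroup X] [ProperSpace X] [MeasurableSpace X]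
    [BorelSpace X] {H : X → ℝ} (hH : Continuous H) {a b C : ℝ} {v : ι → ℝ → X} {v₀ : ℝ → X}
    (hv : ∀ᶠ i in l, Measurable (v i)) (hbound : ∀ᶠ i in l, ∀ r ∈ uIoc a b, ‖v i r‖ ≤ C)
    (hlim : ∀ᵐ r, r ∈ uIoc a b → Tendsto (fun i => v i r) l (𝓝 (v₀ r))) :
    Tendsto (fun i => ∫ r in a..b, H (v i r)) l (𝓝 (∫ r in a..b, H (v₀ r))) := by
  obtain ⟨B, hB⟩ := (isCompact_closedBall (0 : X) C).exists_bound_of_continuousOn hH.continuousOn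
  refine intervalIntegral.tendsto_integral_filter_of_dominated_convergence (fun _ => B) ?_ ?_
    intervalIntegrable_const ?_
  · filter_upwards [hv] with i hi using (hH.measurable.comp hi).aestronglyMeasurable
  · filter_upwards [hbound] with i hi
    exact Eventually.of_forall fun r hr => hB _ (mem_closedBall_zero_iff.2 (hi r hr))
  · filter_upwards [hlim] with r hr hmem using (hH.tendsto _).comp (hr hmem)

theorem sq_integral_abs_le {α : Type*} [MeasurableSpace α] {μ : Measure α} [IsFiniteMeasure μ]
    {g : α → ℝ} (hg : MemLp g 2 μ) :
    (∫ x, |g x| ∂μ) ^ 2 ≤ μ.real univ * ∫ x, g x ^ 2 ∂μ := by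
  have hgi : Integrable (fun x => |g x|) μ := (hg.integrable (by norm_num)).abs
  have hg2 : Integrable (fun x => g x ^ 2) μ := hg.integrable_sq
  set J := ∫ x, |g x| ∂μ
  set m := μ.real univ
  have hquadratic : ∀ t : ℝ, 0 ≤ m * (t * t) + (-(2 * J)) * t + ∫ x, g x ^ 2 ∂μ := fun t =>
    calc 0 ≤ ∫ x, (t - |g x|) ^ 2 ∂μ := integral_nonneg fun x => sq_nonneg _
      _ = ∫ x, (t ^ 2 - 2 * t * |g x| + g x ^ 2) ∂μ := by
        congr 1; ext x; rw [← sq_abs (g x)]; ring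
      _ = m * (t * t) + (-(2 * J)) * t + ∫ x, g x ^ 2 ∂μ := by
        have hlin : Integrable (fun x => t ^ 2 - 2 * t * |g x|) μ :=
          (integrable_const _).sub (hgi.const_mul _)
        rw [integral_add hlin hg2, integral_sub (integrable_const _) (hgi.const_mul _),
          integral_const, integral_const_mul, smul_eq_mul]
        ring
  have := discrim_le_zero hquadratic
  unfold discrim at this
  linarith

theorem sq_setIntegral_abs_le {α : Type*} [MeasurableSpace α] {μ : Measure α} {S : Set α}
    (hS : μ S ≠ ⊤) {g : α → ℝ} (hg : MemLp g 2 (μ.restrict S)) :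
    (∫ x in S, |g x| ∂μ) ^ 2 ≤ μ.real S * ∫ x in S, g x ^ 2 ∂μ := by
  have : IsFiniteMeasure (μ.restrict S) := isFiniteMeasure_restrict.2 hS
  simpa using sq_integral_abs_le hg

theorem setIntegral_eq_zero_of_odd {G : Type*} [AddGroup G] [MeasurableSpace G] [MeasurableNeg G]
    {μ : Measure G} [μ.IsNegInvariant] {S : Set G} (hS : MeasurableSet S)
    (hneg : ∀ x, x ∈ S ↔ -x ∈ S) {v : G → ℝ} (hv : ∀ x, v (-x) = -v x) :
    ∫ x in S, v x ∂μ = 0 := by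
  have hodd : ∀ x, S.indicator v (-x) = -S.indicator v x := fun x => by
    by_cases hx : x ∈ S
    · rw [indicator_of_mem hx, indicator_of_mem ((hneg x).1 hx), hv]
    · rw [indicator_of_notMem hx, indicator_of_notMem (mt (hneg x).2 hx), neg_zero]
  have hself := integral_neg_eq_self (fun x => S.indicator v x) μ
  simp only [hodd, integral_neg] at hself
  rw [← integral_indicator hS]
  linarith

theorem intervalIntegral_swap_of_continuous {E : Type*} [NormedAddCommGroup E] [NormedSpace ℝ E]
    {f : ℝ → ℝ → E} (hf : Continuous fun p : ℝ × ℝ => f p.1 p.2) {a b c d : ℝ}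
    (hab : a ≤ b) (hcd : c ≤ d) :
    ∫ x in a..b, ∫ y in c..d, f x y = ∫ y in c..d, ∫ x in a..b, f x y := by
  simp only [intervalIntegral.integral_of_le hab, intervalIntegral.integral_of_le hcd]
  apply integral_integral_swap
  rw [Measure.prod_restrict, ← Measure.volume_eq_prod]
  have hrect : IntegrableOn (Function.uncurry f) (Icc a b ×ˢ Icc c d) volume :=
    (hf.continuousOn (s := Icc a b ×ˢ Icc c d)).integrableOn_compact
      (isCompact_Icc.prod isCompact_Icc)
  exact hrect.mono_set (prod_mono Ioc_subset_Icc_self Ioc_subset_Icc_self)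

variable {h h' : ℝ → ℝ}

theorem sq_sub_le_length_mul_integral_deriv_sq
    (hd : ∀ x, HasDerivAt h (h' x) x) (hc : Continuous h') {a b : ℝ} {S : Set ℝ}
    (hvanish : ∀ x, x ∉ S → h' x = 0) {x y : ℝ} (hx : x ∈ Icc a b) (hy : y ∈ Icc a b) :
    (h x - h y) ^ 2 ≤ volume.real (S ∩ Ioc a b) * ∫ t in a..b, h' t ^ 2 := by
  wlog hxy : y ≤ x generalizing x y
  · rw [← neg_sq, neg_sub]; exact this hy hx (le_of_not_ge hxy)
  have hab : a ≤ b := hx.1.trans hx.2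
  have hvar : |h x - h y| ≤ ∫ t in S ∩ Ioc a b, |h' t| := by
    rw [← intervalIntegral.integral_eq_sub_of_hasDerivAt (fun t _ => hd t)
      (hc.intervalIntegrable _ _)]
    refine (intervalIntegral.abs_integral_le_integral_abs hxy).trans ?_
    rw [inter_comm, ← setIntegral_eq_of_subset_of_forall_sdiff_eq_zero measurableSet_Ioc
      inter_subset_left (fun t ht => by simp [hvanish t fun h => ht.2 ⟨ht.1, h⟩]),
      ← intervalIntegral.integral_of_le hab]
    exact intervalIntegral.integral_mono_interval hy.1 hxy hx.2
      (Eventually.of_forall fun _ => abs_nonneg _) (hc.abs.intervalIntegrable _ _)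
  have hmem : MemLp h' 2 (volume.restrict (S ∩ Ioc a b)) :=
    ((memLp_two_iff_integrable_sq hc.aestronglyMeasurable).2
      ((hc.pow 2).continuousOn.integrableOn_Icc.mono_set Ioc_subset_Icc_self)).mono_measure
      (Measure.restrict_mono inter_subset_right le_rfl)
  have hfin : volume (S ∩ Ioc a b) ≠ ⊤ :=
    (measure_mono inter_subset_right |>.trans_lt measure_Ioc_lt_top).ne
  calc (h x - h y) ^ 2 = |h x - h y| ^ 2 := (sq_abs _).symm
    _ ≤ (∫ t in S ∩ Ioc a b, |h' t|) ^ 2 := by gcongr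
    _ ≤ _ := sq_setIntegral_abs_le hfin hmem
    _ ≤ _ := by
      rw [intervalIntegral.integral_of_le hab]
      gcongr
      · exact Eventually.of_forall fun t => sq_nonneg _
      · exact (hc.pow 2).continuousOn.integrableOn_Icc.mono_set Ioc_subset_Icc_self
      · exact inter_subset_right

theorem sq_sub_le_mul_integral_deriv_sq
    (hd : ∀ x, HasDerivAt h (h' x) x) (hc : Continuous h')
    {a b x y : ℝ} (hx : x ∈ Icc a b) (hy : y ∈ Icc a b) :
    (h x - h y) ^ 2 ≤ (b - a) * ∫ t in a..b, h' t ^ 2 := by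
  have := sq_sub_le_length_mul_integral_deriv_sq hd hc (S := univ) (by simp) hx hy
  rwa [univ_inter, measureReal_def, Real.volume_Ioc,
    ENNReal.toReal_ofReal (sub_nonneg.2 (hx.1.trans hx.2))] at this

theorem integral_sq_le_sq_length_mul_integral_deriv_sq
    (hd : ∀ x, HasDerivAt h (h' x) x) (hc : Continuous h') {a b c : ℝ} {S : Set ℝ}
    (hS : MeasurableSet S) (hc_mem : c ∈ Icc a b) (hcS : c ∉ S) (hh : ∀ x, x ∉ S → h x = 0)
    (hh' : ∀ x, x ∉ S → h' x = 0) :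
    ∫ x in a..b, h x ^ 2 ≤ volume.real (S ∩ Ioc a b) ^ 2 * ∫ x in a..b, h' x ^ 2 := by
  have hab : a ≤ b := hc_mem.1.trans hc_mem.2
  have hfin : volume (S ∩ Ioc a b) < ⊤ :=
    measure_mono inter_subset_right |>.trans_lt measure_Ioc_lt_top
  have hsupp : ∫ x in a..b, h x ^ 2 = ∫ x in S ∩ Ioc a b, h x ^ 2 := by
    rw [intervalIntegral.integral_of_le hab]
    exact setIntegral_eq_of_subset_of_forall_sdiff_eq_zero measurableSet_Ioc
      inter_subset_right (fun t ht => by simp [hh t fun h => ht.2 ⟨h, ht.1⟩])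
  have hpoint : ∀ x ∈ S ∩ Ioc a b,
      h x ^ 2 ≤ volume.real (S ∩ Ioc a b) * ∫ t in a..b, h' t ^ 2 := fun x hx => by
    simpa [hh c hcS] using
      sq_sub_le_length_mul_integral_deriv_sq hd hc hh' (Ioc_subset_Icc_self hx.2) hc_mem
  have hcont : Continuous h := continuous_iff_continuousAt.2 fun x => (hd x).continuousAt
  have h_int : IntegrableOn (fun x => h x ^ 2) (S ∩ Ioc a b) :=
    (hcont.pow 2).continuousOn.integrableOn_Icc.mono_set
      (inter_subset_right.trans Ioc_subset_Icc_self)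
  have := setIntegral_mono_on h_int (integrableOn_const hfin.ne)
    (hS.inter measurableSet_Ioc) hpoint
  rw [setIntegral_const, smul_eq_mul] at this
  linarith

theorem sq_le_mean_sq_add_integral_deriv_sq
    (hd : ∀ x, HasDerivAt h (h' x) x) (hc : Continuous h') {a b x : ℝ} (hab : a < b)
    (hx : x ∈ Icc a b) :
    h x ^ 2 ≤ 2 / (b - a) * (∫ t in a..b, h t ^ 2) + 2 * (b - a) * ∫ t in a..b, h' t ^ 2 := by
  have hcont : Continuous h := continuous_iff_continuousAt.2 fun x => (hd x).continuousAt
  have hba : 0 < b - a := sub_pos.2 hab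
  have hmean : ∫ _ in a..b, h x ^ 2 ≤
      ∫ y in a..b, (2 * h y ^ 2 + 2 * (b - a) * ∫ t in a..b, h' t ^ 2) := by
    refine intervalIntegral.integral_mono_on hab.le (by simp)
      (Continuous.intervalIntegrable (by fun_prop) _ _) fun y hy => ?_
    have := sq_sub_le_mul_integral_deriv_sq hd hc hx hy
    nlinarith [sq_nonneg (h x - 2 * h y)]
  rw [intervalIntegral.integral_const, intervalIntegral.integral_add
    (Continuous.intervalIntegrable (by fun_prop) _ _) (by simp),
    intervalIntegral.integral_const_mul, intervalIntegral.integral_const, smul_eq_mul,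
    smul_eq_mul] at hmean
  rw [show 2 / (b - a) * (∫ t in a..b, h t ^ 2) + 2 * (b - a) * (∫ t in a..b, h' t ^ 2) =
    (2 * (∫ t in a..b, h t ^ 2) + (b - a) * (2 * (b - a) * ∫ t in a..b, h' t ^ 2)) / (b - a) by
    field_simp, le_div_iff₀ hba]
  linarith

theorem sq_le_integral_inv_mul_sq_add_mul_deriv_sq
    (hd : ∀ x, HasDerivAt h (h' x) x) (hc : Continuous h') {a b q : ℝ} (hab : a ≤ b)
    (hq : 0 < q) (hb : h b = 0) :
    h a ^ 2 ≤ ∫ t in a..b, (q⁻¹ * h t ^ 2 + q * h' t ^ 2) := by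
  have hcont : Continuous h := continuous_iff_continuousAt.2 fun x => (hd x).continuousAt
  have hsq : ∀ t, HasDerivAt (fun t => h t ^ 2) (2 * h t * h' t) t := fun t => by
    simpa using (hd t).fun_pow 2
  have hftc := intervalIntegral.integral_eq_sub_of_hasDerivAt (a := a) (b := b)
    (fun t _ => hsq t) (Continuous.intervalIntegrable (by fun_prop) _ _)
  calc h a ^ 2 = ∫ t in a..b, -(2 * h t * h' t) := by
        rw [intervalIntegral.integral_neg, hftc, hb]; ring
    _ ≤ _ := by
        refine intervalIntegral.integral_mono_on hab
          (Continuous.intervalIntegrable (by fun_prop) _ _)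
          (Continuous.intervalIntegrable (by fun_prop) _ _) fun t _ => ?_
        have hsquare : q⁻¹ * h t ^ 2 + q * h' t ^ 2 + 2 * h t * h' t =
            q⁻¹ * (h t + q * h' t) ^ 2 := by field_simp; ring
        have : 0 ≤ q⁻¹ * (h t + q * h' t) ^ 2 := by positivity
        linarith

end IntegralInequalities

section ParametricIntegrals

variable {E : Type*} [NormedAddCommGroup E] [NormedSpace ℝ E] {G G' : ℝ → ℝ → E}

theorem hasDerivAt_intervalIntegral_of_continuous (hc : Continuous fun p : ℝ × ℝ => G p.1 p.2)
    (hc' : Continuous fun p : ℝ × ℝ => G' p.1 p.2)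
    (hd : ∀ r θ, HasDerivAt (fun r => G r θ) (G' r θ) r) (a b r : ℝ) :
    HasDerivAt (fun r => ∫ θ in a..b, G r θ) (∫ θ in a..b, G' r θ) r := by
  obtain ⟨C, hC⟩ := ((isCompact_Icc (a := r - 1) (b := r + 1)).prod
    (isCompact_uIcc (a := a) (b := b))).exists_bound_of_continuousOn hc'.continuousOn
  refine (intervalIntegral.hasDerivAt_integral_of_dominated_loc_of_deriv_le (F := G) (F' := G')
    (s := Icc (r - 1) (r + 1)) (bound := fun _ => C) (Icc_mem_nhds (by linarith) (by linarith))
    (Eventually.of_forall fun x => ?_) ?_ ?_ ?_ ?_ ?_).2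
  · exact Continuous.aestronglyMeasurable (by fun_prop)
  · exact Continuous.intervalIntegrable (by fun_prop) _ _
  · exact Continuous.aestronglyMeasurable (by fun_prop)
  · exact Eventually.of_forall fun t ht x hx => hC (x, t) ⟨hx, uIoc_subset_uIcc ht⟩
  · exact intervalIntegrable_const
  · exact Eventually.of_forall fun t _ x _ => hd x t

theorem contDiff_nat_intervalIntegral (n : ℕ) (hG : ContDiff ℝ n fun p : ℝ × ℝ => G p.1 p.2)
    (a b : ℝ) : ContDiff ℝ n fun r => ∫ θ in a..b, G r θ := by
  induction n generalizing G with
  | zero =>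
    have := hG.continuous
    exact contDiff_zero.2 (by fun_prop)
  | succ n ih =>
    push_cast at hG ⊢
    let G' : ℝ → ℝ → E := fun r θ => fderiv ℝ (fun p : ℝ × ℝ => G p.1 p.2) (r, θ) (1, 0)
    have hG' : ContDiff ℝ n fun p : ℝ × ℝ => G' p.1 p.2 :=
      (hG.fderiv_right le_rfl).clm_apply contDiff_const
    have hd : ∀ r θ, HasDerivAt (fun r => G r θ) (G' r θ) r := fun r θ => by
      have houter := (hG.differentiable (by simp) (r, θ)).hasFDerivAt
      have hinner : HasDerivAt (fun r : ℝ => (r, θ)) (1, 0) r :=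
        (hasDerivAt_id r).prodMk (hasDerivAt_const r θ)
      exact houter.comp_hasDerivAt r hinner
    have hD := hasDerivAt_intervalIntegral_of_continuous hG.continuous hG'.continuous hd a b
    rw [contDiff_succ_iff_deriv]
    refine ⟨fun r => (hD r).differentiableAt, by simp, ?_⟩
    rw [funext fun r => (hD r).deriv]
    exact ih hG'

theorem contDiff_infty_intervalIntegral (hG : ContDiff ℝ ∞ fun p : ℝ × ℝ => G p.1 p.2)
    (a b : ℝ) : ContDiff ℝ ∞ fun r => ∫ θ in a..b, G r θ :=
  contDiff_infty.2 fun n => contDiff_nat_intervalIntegral n (contDiff_infty.1 hG n) a b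

end ParametricIntegrals

section DslopeAtZero

variable {a : ℝ → ℝ}

theorem continuous_dslope_zero (ha : ContDiff ℝ 1 a) : Continuous (dslope a 0) := by
  rw [← continuousOn_univ, continuousOn_dslope univ_mem]
  exact ⟨ha.continuous.continuousOn, ha.differentiable (by simp) 0⟩

theorem eq_mul_dslope_zero (h0 : a 0 = 0) (r : ℝ) : a r = r * dslope a 0 r := by
  simpa [h0] using (sub_smul_dslope a 0 r).symm

theorem sq_div_eq_mul_dslope_zero_sq (h0 : a 0 = 0) (r : ℝ) :
    a r ^ 2 / r = r * dslope a 0 r ^ 2 := by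
  rcases eq_or_ne r 0 with rfl | hr
  · simp
  · rw [eq_mul_dslope_zero h0 r]; field_simp

theorem continuous_sq_div_self (ha : ContDiff ℝ 1 a) (h0 : a 0 = 0) :
    Continuous fun r => a r ^ 2 / r := by
  simp only [sq_div_eq_mul_dslope_zero_sq h0]
  have := continuous_dslope_zero ha
  fun_prop

end DslopeAtZero

/-! ### Polar coordinates in the plane -/

section PolarCoordinates

/-- The radial unit vector `e_r = (cos θ, sin θ)`. -/
def unitRadial (θ : ℝ) : E2 := !₂[cos θ, sin θ]

/-- The angular unit vector `e_θ = (-sin θ, cos θ)`, the derivative of `unitRadial`. -/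
def unitAngular (θ : ℝ) : E2 := !₂[-sin θ, cos θ]

@[simp] theorem unitRadial_zero (θ : ℝ) : unitRadial θ 0 = cos θ := by simp [unitRadial]

@[simp] theorem unitRadial_one (θ : ℝ) : unitRadial θ 1 = sin θ := by simp [unitRadial]

theorem norm_unitRadial (θ : ℝ) : ‖unitRadial θ‖ = 1 := by
  rw [EuclideanSpace.norm_eq]; simp [unitRadial]

theorem norm_smul_unitRadial {r : ℝ} (hr : 0 ≤ r) (θ : ℝ) : ‖r • unitRadial θ‖ = r := by
  rw [norm_smul, norm_unitRadial, mul_one, Real.norm_of_nonneg hr]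

theorem hasDerivAt_unitRadial (θ : ℝ) : HasDerivAt unitRadial (unitAngular θ) θ := by
  have hradial : unitRadial = fun θ => cos θ • (!₂[1, 0] : E2) + sin θ • (!₂[0, 1] : E2) := by
    ext θ i; fin_cases i <;> simp
  have hangular : unitAngular θ = -sin θ • (!₂[1, 0] : E2) + cos θ • (!₂[0, 1] : E2) := by
    ext i; fin_cases i <;> simp [unitAngular]
  rw [hradial, hangular]
  exact ((hasDerivAt_cos θ).smul_const _).add ((hasDerivAt_sin θ).smul_const _)

@[fun_prop]
theorem contDiff_unitRadial {n : WithTop ℕ∞} : ContDiff ℝ n unitRadial := by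
  rw [contDiff_euclidean]
  intro i
  fin_cases i
  · simpa [unitRadial] using contDiff_cos
  · simpa [unitRadial] using contDiff_sin

@[fun_prop]
theorem continuous_unitAngular : Continuous unitAngular := by
  unfold unitAngular; fun_prop

theorem norm_sq_eq_sq_radial_add_sq_angular (l : E2 →L[ℝ] ℝ) (θ : ℝ) :
    ‖l‖ ^ 2 = l (unitRadial θ) ^ 2 + l (unitAngular θ) ^ 2 := by
  obtain ⟨v, rfl⟩ := (InnerProductSpace.toDual ℝ E2).surjective l
  rw [LinearIsometryEquiv.norm_map, EuclideanSpace.norm_sq_eq]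
  simp only [InnerProductSpace.toDual_apply_apply, PiLp.inner_apply, Fin.sum_univ_two, unitRadial,
    unitAngular, Matrix.cons_val_zero, Matrix.cons_val_one, RCLike.inner_apply,
    conj_trivial, Real.norm_eq_abs, sq_abs]
  linear_combination (-(v 0 ^ 2) - v 1 ^ 2) * sin_sq_add_cos_sq θ

theorem exists_eq_norm_smul_unitRadial (x : E2) : ∃ θ : ℝ, x = ‖x‖ • unitRadial θ := by
  let z : ℂ := ⟨x 0, x 1⟩
  have hz : ‖x‖ = ‖z‖ := by
    rw [EuclideanSpace.norm_eq, Complex.norm_eq_sqrt_sq_add_sq]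
    simp [z]
  refine ⟨Complex.arg z, ?_⟩
  ext i
  fin_cases i
  · simp [hz, Complex.norm_mul_cos_arg, z]
  · simp [hz, Complex.norm_mul_sin_arg, z]

theorem integral_eq_integral_prod (g : E2 → ℝ) : ∫ x, g x = ∫ p : ℝ × ℝ, g !₂[p.1, p.2] := by
  rw [← (PiLp.volume_preserving_toLp (Fin 2)).integral_comp
    (MeasurableEquiv.toLp 2 (Fin 2 → ℝ)).measurableEmbedding g]
  exact (((volume_preserving_finTwoArrow ℝ).symm).integral_comp
    (MeasurableEquiv.finTwoArrow (α := ℝ)).symm.measurableEmbedding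
    (fun y => g (WithLp.toLp 2 y))).symm

theorem polarCoord_symm_eq_smul_unitRadial (p : ℝ × ℝ) :
    (!₂[(polarCoord.symm p).1, (polarCoord.symm p).2] : E2) = p.1 • unitRadial p.2 := by
  ext i; fin_cases i <;> simp [polarCoord_symm_apply]

theorem setIntegral_ball_eq_setIntegral_prod (g : E2 → ℝ) (R : ℝ) :
    ∫ x in Metric.ball (0 : E2) R, g x =
      ∫ p in Ioo 0 R ×ˢ Ioo (-π) π, p.1 * g (p.1 • unitRadial p.2) := by
  have hmeas : MeasurableSet (Ioo 0 R ×ˢ Ioo (-π) π) := measurableSet_Ioo.prod measurableSet_Ioo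
  have hsub : Ioo 0 R ×ˢ Ioo (-π) π ⊆ polarCoord.target := by
    rw [polarCoord_target]; exact prod_mono Ioo_subset_Ioi_self le_rfl
  rw [← integral_indicator Metric.isOpen_ball.measurableSet, integral_eq_integral_prod,
    ← integral_comp_polarCoord_symm, ← inter_eq_left.2 hsub, ← Measure.restrict_restrict hmeas,
    ← integral_indicator hmeas]
  refine setIntegral_congr_fun polarCoord.open_target.measurableSet fun p hp => ?_
  obtain ⟨hr, hθ⟩ : 0 < p.1 ∧ p.2 ∈ Ioo (-π) π := hp
  have hball : p.1 • unitRadial p.2 ∈ Metric.ball (0 : E2) R ↔ p.1 < R := by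
    rw [mem_ball_zero_iff, norm_smul_unitRadial hr.le]
  simp only [polarCoord_symm_eq_smul_unitRadial]
  by_cases h : p.1 < R
  · have hmem : p ∈ Ioo 0 R ×ˢ Ioo (-π) π := ⟨⟨hr, h⟩, hθ⟩
    rw [indicator_of_mem (hball.2 h), indicator_of_mem hmem, smul_eq_mul]
  · rw [indicator_of_notMem (mt hball.1 h), indicator_of_notMem (fun hp => h hp.1.2), smul_zero]

theorem setIntegral_ball_eq_polar {g : E2 → ℝ} (hg : Continuous g) {R : ℝ} (hR : 0 ≤ R) :
    ∫ x in Metric.ball (0 : E2) R, g x =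
      ∫ r in (0 : ℝ)..R, ∫ θ in (-π)..π, r * g (r • unitRadial θ) := by
  have hpi : -π ≤ π := by linarith [pi_pos]
  have hcont : Continuous fun p : ℝ × ℝ => p.1 * g (p.1 • unitRadial p.2) := by fun_prop
  have h_int : IntegrableOn (fun p : ℝ × ℝ => p.1 * g (p.1 • unitRadial p.2))
      (Ioo 0 R ×ˢ Ioo (-π) π) volume :=
    (hcont.continuousOn.integrableOn_compact (isCompact_Icc.prod isCompact_Icc)).mono_set
      (prod_mono Ioo_subset_Icc_self Ioo_subset_Icc_self)
  rw [setIntegral_ball_eq_setIntegral_prod, Measure.volume_eq_prod, setIntegral_prod _ h_int,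
    intervalIntegral.integral_of_le hR, ← integral_Ioc_eq_integral_Ioo]
  simp only [intervalIntegral.integral_of_le hpi, ← integral_Ioc_eq_integral_Ioo]

/-- The radial derivative `∂u/∂r` at the point with polar coordinates `(r, θ)`. -/
def radialDeriv (u : E2 → ℝ) (r θ : ℝ) : ℝ := fderiv ℝ u (r • unitRadial θ) (unitRadial θ)

/-- The tangential derivative `r⁻¹ ∂u/∂θ`, well defined also at `r = 0`. -/
def angularDeriv (u : E2 → ℝ) (r θ : ℝ) : ℝ := fderiv ℝ u (r • unitRadial θ) (unitAngular θ)

variable {u : E2 → ℝ}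

theorem hasDerivAt_radial (hu : ContDiff ℝ 1 u) (r θ : ℝ) :
    HasDerivAt (fun r => u (r • unitRadial θ)) (radialDeriv u r θ) r := by
  have houter := (hu.differentiable (by simp) (r • unitRadial θ)).hasFDerivAt
  have hinner : HasDerivAt (fun r : ℝ => r • unitRadial θ) (unitRadial θ) r := by
    simpa using (hasDerivAt_id r).smul_const (unitRadial θ)
  exact houter.comp_hasDerivAt r hinner

theorem hasDerivAt_angular (hu : ContDiff ℝ 1 u) (r θ : ℝ) :
    HasDerivAt (fun θ => u (r • unitRadial θ)) (r * angularDeriv u r θ) θ := by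
  have houter := (hu.differentiable (by simp) (r • unitRadial θ)).hasFDerivAt
  have hinner : HasDerivAt (fun θ : ℝ => r • unitRadial θ) (r • unitAngular θ) θ :=
    (hasDerivAt_unitRadial θ).const_smul r
  have := houter.comp_hasDerivAt θ hinner
  rwa [map_smul, smul_eq_mul] at this

@[fun_prop]
theorem continuous_radialDeriv (hu : ContDiff ℝ 1 u) {X : Type*} [TopologicalSpace X]
    {ρ φ : X → ℝ} (hρ : Continuous ρ) (hφ : Continuous φ) :
    Continuous fun x => radialDeriv u (ρ x) (φ x) := by
  have := hu.continuous_fderiv (by simp)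
  unfold radialDeriv
  fun_prop

@[fun_prop]
theorem continuous_angularDeriv (hu : ContDiff ℝ 1 u) {X : Type*} [TopologicalSpace X]
    {ρ φ : X → ℝ} (hρ : Continuous ρ) (hφ : Continuous φ) :
    Continuous fun x => angularDeriv u (ρ x) (φ x) := by
  have := hu.continuous_fderiv (by simp)
  unfold angularDeriv
  fun_prop

theorem setIntegral_ball_norm_fderiv_sq_eq_polar (hu : ContDiff ℝ 1 u) {R : ℝ} (hR : 0 ≤ R) :
    ∫ x in Metric.ball (0 : E2) R, ‖fderiv ℝ u x‖ ^ 2 =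
      ∫ r in (0 : ℝ)..R, ∫ θ in (-π)..π, r * (radialDeriv u r θ ^ 2 + angularDeriv u r θ ^ 2) := by
  have := hu.continuous_fderiv (by simp)
  rw [setIntegral_ball_eq_polar (by fun_prop) hR]
  congr! 4
  exact congrArg _ (norm_sq_eq_sq_radial_add_sq_angular _ _)

end PolarCoordinates

section SeparatedFunctions

variable {u : E2 → ℝ} {F F' g g' : ℝ → ℝ}

theorem radialDeriv_of_separated (hu : ContDiff ℝ 1 u)
    (hsep : ∀ r > 0, ∀ θ, u (r • unitRadial θ) = F r * g θ) {F' r : ℝ} (hF : HasDerivAt F F' r)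
    (hr : 0 < r) (θ : ℝ) : radialDeriv u r θ = F' * g θ := by
  refine (hasDerivAt_radial hu r θ).unique ((hF.mul_const (g θ)).congr_of_eventuallyEq ?_)
  filter_upwards [lt_mem_nhds hr] with s hs using hsep s hs θ

theorem angularDeriv_of_separated (hu : ContDiff ℝ 1 u)
    (hsep : ∀ r > 0, ∀ θ, u (r • unitRadial θ) = F r * g θ) {g' r θ : ℝ} (hr : 0 < r)
    (hg : HasDerivAt g g' θ) : angularDeriv u r θ = F r / r * g' := by
  have hprod : HasDerivAt (fun θ => u (r • unitRadial θ)) (F r * g') θ := by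
    simpa only [hsep r hr] using hg.const_mul (F r)
  have := (hasDerivAt_angular hu r θ).unique hprod
  field_simp
  linarith

theorem setIntegral_ball_sq_of_separated (hu : Continuous u)
    (hsep : ∀ r > 0, ∀ θ, u (r • unitRadial θ) = F r * g θ) {R : ℝ} (hR : 0 ≤ R) :
    ∫ x in Metric.ball (0 : E2) R, u x ^ 2 =
      (∫ θ in (-π)..π, g θ ^ 2) * ∫ r in (0 : ℝ)..R, r * F r ^ 2 := by
  rw [setIntegral_ball_eq_polar (by fun_prop) hR, ← intervalIntegral.integral_const_mul]
  refine intervalIntegral.integral_congr_ae (Eventually.of_forall fun r hr => ?_)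
  rw [uIoc_of_le hR] at hr
  simp only [hsep r hr.1, mul_pow, ← mul_assoc, intervalIntegral.integral_const_mul]
  ring

theorem setIntegral_ball_norm_fderiv_sq_of_separated (hu : ContDiff ℝ 1 u)
    (hsep : ∀ r > 0, ∀ θ, u (r • unitRadial θ) = F r * g θ) (hF : ∀ r, HasDerivAt F (F' r) r)
    (hg : ∀ θ, HasDerivAt g (g' θ) θ) (hg' : Continuous g') {R : ℝ} (hR : 0 ≤ R) :
    ∫ x in Metric.ball (0 : E2) R, ‖fderiv ℝ u x‖ ^ 2 =
      ∫ r in (0 : ℝ)..R, ((∫ θ in (-π)..π, g θ ^ 2) * (r * F' r ^ 2) +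
        (∫ θ in (-π)..π, g' θ ^ 2) * (F r ^ 2 / r)) := by
  have hgc : Continuous g := continuous_iff_continuousAt.2 fun θ => (hg θ).continuousAt
  rw [setIntegral_ball_norm_fderiv_sq_eq_polar hu hR]
  refine intervalIntegral.integral_congr_ae (Eventually.of_forall fun r hr => ?_)
  rw [uIoc_of_le hR] at hr
  have hintegrand : ∀ θ, r * (radialDeriv u r θ ^ 2 + angularDeriv u r θ ^ 2) =
      r * F' r ^ 2 * g θ ^ 2 + F r ^ 2 / r * g' θ ^ 2 := fun θ => by
    rw [radialDeriv_of_separated hu hsep (hF r) hr.1, angularDeriv_of_separated hu hsep hr.1 (hg θ)]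
    have := hr.1.ne'
    field_simp
  simp only [hintegrand]
  rw [intervalIntegral.integral_add (Continuous.intervalIntegrable (by fun_prop) _ _)
    (Continuous.intervalIntegrable (by fun_prop) _ _), intervalIntegral.integral_const_mul,
    intervalIntegral.integral_const_mul]
  ring

/-- The radial function `x ↦ F ‖x‖` with profile `F`. -/
def radialFun (F : ℝ → ℝ) (x : E2) : ℝ := F ‖x‖

/-- The function `F(r) cos θ` with profile `F`, written in Cartesian coordinates. At the origin the
quotient is `0 / 0 = 0`, which is the right value when `F 0 = 0`. -/
def cosineMode (F : ℝ → ℝ) (x : E2) : ℝ := F ‖x‖ * (x 0 / ‖x‖)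

theorem contDiff_radialFun (hF : ContDiff ℝ ∞ F) {δ : ℝ} (hδ : 0 < δ)
    (hconst : ∀ r ≤ δ, F r = F 0) : ContDiff ℝ ∞ (radialFun F) := by
  rw [contDiff_iff_contDiffAt]
  intro x
  rcases eq_or_ne x 0 with rfl | hx
  · refine (contDiffAt_const (c := F 0)).congr_of_eventuallyEq ?_
    filter_upwards [Metric.ball_mem_nhds (0 : E2) hδ] with y hy
      using hconst _ (mem_ball_zero_iff.1 hy).le
  · exact hF.contDiffAt.comp x (contDiffAt_norm ℝ hx)

theorem contDiff_cosineMode (hF : ContDiff ℝ ∞ F) {δ : ℝ} (hδ : 0 < δ)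
    (hzero : ∀ r ≤ δ, F r = 0) : ContDiff ℝ ∞ (cosineMode F) := by
  rw [contDiff_iff_contDiffAt]
  intro x
  rcases eq_or_ne x 0 with rfl | hx
  · refine (contDiffAt_const (c := (0 : ℝ))).congr_of_eventuallyEq ?_
    filter_upwards [Metric.ball_mem_nhds (0 : E2) hδ] with y hy
    simp [cosineMode, hzero _ (mem_ball_zero_iff.1 hy).le]
  · have hcoord : ContDiff ℝ ∞ fun x : E2 => x 0 := by fun_prop
    exact (hF.contDiffAt.comp x (contDiffAt_norm ℝ hx)).mul
      (hcoord.contDiffAt.div (contDiffAt_norm ℝ hx) (norm_ne_zero_iff.2 hx))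

theorem radialFun_smul_unitRadial (F : ℝ → ℝ) (r : ℝ) (hr : 0 < r) (θ : ℝ) :
    radialFun F (r • unitRadial θ) = F r * 1 := by
  simp [radialFun, norm_smul_unitRadial hr.le]

theorem cosineMode_smul_unitRadial (F : ℝ → ℝ) (r : ℝ) (hr : 0 < r) (θ : ℝ) :
    cosineMode F (r • unitRadial θ) = F r * cos θ := by
  have := hr.ne'
  simp only [cosineMode, norm_smul_unitRadial hr.le, PiLp.smul_apply, unitRadial_zero, smul_eq_mul]
  field_simp

theorem cosineMode_neg (F : ℝ → ℝ) (x : E2) : cosineMode F (-x) = -cosineMode F x := by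
  simp [cosineMode, neg_div]

theorem setIntegral_ball_radialFun_sq (hu : Continuous (radialFun F)) {R : ℝ} (hR : 0 ≤ R) :
    ∫ x in Metric.ball (0 : E2) R, radialFun F x ^ 2 =
      2 * π * ∫ r in (0 : ℝ)..R, r * F r ^ 2 := by
  rw [setIntegral_ball_sq_of_separated hu (radialFun_smul_unitRadial F) hR]
  simp [two_mul]

theorem setIntegral_ball_norm_fderiv_radialFun_sq (hu : ContDiff ℝ 1 (radialFun F))
    (hF : ∀ r, HasDerivAt F (F' r) r) {R : ℝ} (hR : 0 ≤ R) :
    ∫ x in Metric.ball (0 : E2) R, ‖fderiv ℝ (radialFun F) x‖ ^ 2 =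
      2 * π * ∫ r in (0 : ℝ)..R, r * F' r ^ 2 := by
  rw [setIntegral_ball_norm_fderiv_sq_of_separated hu (radialFun_smul_unitRadial F) hF
    (fun _ => hasDerivAt_const _ _) continuous_const hR]
  simp [two_mul]

theorem setIntegral_ball_cosineMode_sq (hu : Continuous (cosineMode F)) {R : ℝ} (hR : 0 ≤ R) :
    ∫ x in Metric.ball (0 : E2) R, cosineMode F x ^ 2 = π * ∫ r in (0 : ℝ)..R, r * F r ^ 2 := by
  rw [setIntegral_ball_sq_of_separated hu (cosineMode_smul_unitRadial F) hR, integral_cos_sq]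
  simp

theorem setIntegral_ball_norm_fderiv_cosineMode_sq (hu : ContDiff ℝ 1 (cosineMode F))
    (hF : ∀ r, HasDerivAt F (F' r) r) {R : ℝ} (hR : 0 ≤ R) :
    ∫ x in Metric.ball (0 : E2) R, ‖fderiv ℝ (cosineMode F) x‖ ^ 2 =
      π * ∫ r in (0 : ℝ)..R, (r * F' r ^ 2 + F r ^ 2 / r) := by
  rw [setIntegral_ball_norm_fderiv_sq_of_separated hu (cosineMode_smul_unitRadial F) hF
    hasDerivAt_cos continuous_sin.neg hR]
  simp only [neg_sq, integral_cos_sq, integral_sin_sq]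
  simp [← mul_add]

end SeparatedFunctions

/-! ### Flattening a profile near `0` and `1` -/

section Flattening

/-- A smooth cutoff, equal to `1` on `[2δ, 1 - 2δ]` and vanishing outside `(δ, 1 - δ)`. -/
def cutoff (δ r : ℝ) : ℝ := smoothTransition ((r - δ) / δ) * smoothTransition ((1 - δ - r) / δ)

/-- A smooth reparametrisation of `[0, 1]`, close to the identity and locally constant near the
endpoints. Composing a profile with it gives a profile to which `contDiff_radialFun` or
`contDiff_cosineMode` applies. -/
def flattening (δ r : ℝ) : ℝ := ∫ s in (0 : ℝ)..r, cutoff δ s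

theorem contDiff_cutoff (δ : ℝ) : ContDiff ℝ ∞ (cutoff δ) :=
  (smoothTransition.contDiff.comp (by fun_prop)).mul (smoothTransition.contDiff.comp (by fun_prop))

@[fun_prop]
theorem continuous_cutoff (δ : ℝ) : Continuous (cutoff δ) := (contDiff_cutoff δ).continuous

theorem cutoff_nonneg (δ r : ℝ) : 0 ≤ cutoff δ r :=
  mul_nonneg (smoothTransition.nonneg _) (smoothTransition.nonneg _)

theorem cutoff_le_one (δ r : ℝ) : cutoff δ r ≤ 1 :=
  mul_le_one₀ (smoothTransition.le_one _) (smoothTransition.nonneg _) (smoothTransition.le_one _)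

theorem cutoff_eq_zero_of_le {δ r : ℝ} (hδ : 0 < δ) (h : r ≤ δ) : cutoff δ r = 0 := by
  rw [cutoff, smoothTransition.zero_of_nonpos, zero_mul]
  exact div_nonpos_of_nonpos_of_nonneg (by linarith) hδ.le

theorem cutoff_eq_zero_of_ge {δ r : ℝ} (hδ : 0 < δ) (h : 1 - δ ≤ r) : cutoff δ r = 0 := by
  rw [cutoff, smoothTransition.zero_of_nonpos (x := (1 - δ - r) / δ), mul_zero]
  exact div_nonpos_of_nonpos_of_nonneg (by linarith) hδ.le

theorem cutoff_eq_one {δ r : ℝ} (hδ : 0 < δ) (h : 2 * δ ≤ r) (h' : r ≤ 1 - 2 * δ) :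
    cutoff δ r = 1 := by
  rw [cutoff, smoothTransition.one_of_one_le, smoothTransition.one_of_one_le, mul_one] <;>
  · rw [le_div_iff₀ hδ]; linarith

theorem hasDerivAt_flattening (δ r : ℝ) : HasDerivAt (flattening δ) (cutoff δ r) r :=
  (continuous_cutoff δ).integral_hasStrictDerivAt 0 r |>.hasDerivAt

theorem contDiff_flattening (δ : ℝ) : ContDiff ℝ ∞ (flattening δ) := by
  refine contDiff_infty_iff_deriv.2 ⟨fun r => (hasDerivAt_flattening δ r).differentiableAt, ?_⟩
  rw [funext fun r => (hasDerivAt_flattening δ r).deriv]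
  exact contDiff_cutoff δ

theorem flattening_of_le {δ r : ℝ} (hδ : 0 < δ) (h : r ≤ δ) : flattening δ r = 0 :=
  intervalIntegral.integral_zero_ae <| Eventually.of_forall fun _ hx =>
    cutoff_eq_zero_of_le hδ (hx.2.trans (max_le hδ.le h))

theorem flattening_of_ge {δ r : ℝ} (hδ : 0 < δ) (h : 1 - δ ≤ r) :
    flattening δ r = flattening δ 1 := by
  rw [← sub_eq_zero, flattening, flattening, intervalIntegral.integral_interval_sub_left
    ((continuous_cutoff δ).intervalIntegrable _ _) ((continuous_cutoff δ).intervalIntegrable _ _)]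
  exact intervalIntegral.integral_zero_ae <| Eventually.of_forall fun _ hx =>
    cutoff_eq_zero_of_ge hδ ((le_min (by linarith) h).trans hx.1.le)

theorem flattening_nonneg {δ r : ℝ} (hr : 0 ≤ r) : 0 ≤ flattening δ r :=
  intervalIntegral.integral_nonneg hr fun x _ => cutoff_nonneg δ x

theorem flattening_le_self {δ r : ℝ} (hr : 0 ≤ r) : flattening δ r ≤ r := by
  simpa [flattening] using intervalIntegral.integral_mono_on hr
    ((continuous_cutoff δ).intervalIntegrable 0 r)
    (intervalIntegrable_const (c := (1 : ℝ)) (μ := volume)) fun x _ => cutoff_le_one δ x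

theorem tendsto_cutoff {r : ℝ} (h0 : 0 < r) (h1 : r < 1) :
    Tendsto (fun δ => cutoff δ r) (𝓝[>] 0) (𝓝 1) := by
  have hδ : Tendsto (fun δ : ℝ => 2 * δ) (𝓝[>] 0) (𝓝 0) := by
    simpa using (tendsto_id.const_mul (2 : ℝ)).mono_left (nhdsWithin_le_nhds (a := 0))
  refine tendsto_const_nhds.congr' ?_
  filter_upwards [self_mem_nhdsWithin, hδ.eventually_lt_const h0,
    hδ.eventually_lt_const (sub_pos.2 h1)] with δ hpos hleft hright
  exact (cutoff_eq_one hpos hleft.le (by linarith)).symm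

theorem tendsto_flattening {r : ℝ} (h0 : 0 ≤ r) (h1 : r ≤ 1) :
    Tendsto (fun δ => flattening δ r) (𝓝[>] 0) (𝓝 r) := by
  have hne : ∀ᵐ x : ℝ, x ≠ 1 := by simp [ae_iff]
  have hlim := tendsto_intervalIntegral_comp_of_bounded (l := 𝓝[>] (0 : ℝ)) (a := 0) (b := r)
    (C := 1) (v := cutoff) (v₀ := fun _ => 1) continuous_id
    (Eventually.of_forall fun δ => (continuous_cutoff δ).measurable)
    (Eventually.of_forall fun δ x _ => by
      rw [norm_of_nonneg (cutoff_nonneg _ _)]; exact cutoff_le_one _ _)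
    (by
      filter_upwards [hne] with x hx hmem
      rw [uIoc_of_le h0] at hmem
      exact tendsto_cutoff hmem.1 (lt_of_le_of_ne (hmem.2.trans h1) hx))
  simpa [flattening] using hlim

theorem tendsto_integral_comp_flattening {H : ℝ × ℝ × ℝ × ℝ × ℝ → ℝ} (hH : Continuous H) :
    Tendsto (fun δ => ∫ r in (0 : ℝ)..1,
        H (r, flattening δ r, cutoff δ r, flattening δ r / r, flattening δ 1))
      (𝓝[>] 0) (𝓝 (∫ r in (0 : ℝ)..1, H (r, r, 1, 1, 1))) := by
  have hne : ∀ᵐ x : ℝ, x ≠ 1 := by simp [ae_iff]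
  refine tendsto_intervalIntegral_comp_of_bounded (C := 1) hH (Eventually.of_forall fun δ => ?_)
    (Eventually.of_forall fun δ r hr => ?_) ?_
  · have := (contDiff_flattening δ).continuous.measurable
    have := (continuous_cutoff δ).measurable
    fun_prop
  · rw [uIoc_of_le zero_le_one] at hr
    have hnonneg := flattening_nonneg (δ := δ) hr.1.le
    have hle := flattening_le_self (δ := δ) hr.1.le
    have hnonneg1 : 0 ≤ flattening δ 1 := flattening_nonneg zero_le_one
    simp only [Prod.norm_mk, sup_le_iff, norm_of_nonneg hr.1.le, norm_of_nonneg hnonneg,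
      norm_of_nonneg (cutoff_nonneg δ r), norm_of_nonneg (div_nonneg hnonneg hr.1.le),
      norm_of_nonneg hnonneg1]
    exact ⟨hr.2, hle.trans hr.2, cutoff_le_one _ _, (div_le_one hr.1).2 hle,
      flattening_le_self zero_le_one⟩
  · filter_upwards [hne] with r hr1 hr
    rw [uIoc_of_le zero_le_one] at hr
    have hflat := tendsto_flattening hr.1.le hr.2
    have hquot : Tendsto (fun δ => flattening δ r / r) (𝓝[>] 0) (𝓝 1) := by
      simpa [div_self hr.1.ne'] using hflat.div_const r
    exact tendsto_const_nhds.prodMk_nhds <| hflat.prodMk_nhds <|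
      (tendsto_cutoff hr.1 (lt_of_le_of_ne hr.2 hr1)).prodMk_nhds <|
      hquot.prodMk_nhds (tendsto_flattening zero_le_one le_rfl)

end Flattening

/-! ### Variational properties of the two eigenvalues -/

section Eigenvalues

variable {Ω : Set E2} {u : E2 → ℝ}

theorem rayleighQuotient_nonneg (μ : Measure E2) (u : E2 → ℝ) :
    0 ≤ (∫ x, ‖fderiv ℝ u x‖ ^ 2 ∂μ) / ∫ x, u x ^ 2 ∂μ := by positivity

theorem dEig1_nonneg (Ω : Set E2) : 0 ≤ dEig1 Ω := by
  refine Real.sInf_nonneg ?_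
  rintro R ⟨u, -, -, -, -, rfl⟩
  exact rayleighQuotient_nonneg _ u

theorem nEig1_nonneg (Ω : Set E2) : 0 ≤ nEig1 Ω := by
  refine Real.sInf_nonneg ?_
  rintro R ⟨u, -, -, -, rfl⟩
  exact rayleighQuotient_nonneg _ u

theorem integral_sq_pos_of_ne_zero {μ : Measure E2} (h : ∫ x, u x ^ 2 ∂μ ≠ 0) :
    0 < ∫ x, u x ^ 2 ∂μ :=
  lt_of_le_of_ne (by positivity) h.symm

theorem dEig1_mul_integral_sq_le (hu : ContDiff ℝ ∞ u) (hc : HasCompactSupport u)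
    (hsupp : tsupport u ⊆ Ω) : dEig1 Ω * ∫ x, u x ^ 2 ≤ ∫ x, ‖fderiv ℝ u x‖ ^ 2 := by
  rcases eq_or_ne (∫ x, u x ^ 2) 0 with h | h
  · rw [h, mul_zero]; positivity
  · rw [← le_div_iff₀ (integral_sq_pos_of_ne_zero h)]
    refine csInf_le ⟨0, ?_⟩ ⟨u, hu, hc, hsupp, h, rfl⟩
    rintro R ⟨v, -, -, -, -, rfl⟩
    exact rayleighQuotient_nonneg _ v

theorem nEig1_mul_setIntegral_sq_le (hu : ContDiff ℝ ∞ u) (hmean : ∫ x in Ω, u x = 0) :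
    nEig1 Ω * ∫ x in Ω, u x ^ 2 ≤ ∫ x in Ω, ‖fderiv ℝ u x‖ ^ 2 := by
  rcases eq_or_ne (∫ x in Ω, u x ^ 2) 0 with h | h
  · rw [h, mul_zero]; positivity
  · rw [← le_div_iff₀ (integral_sq_pos_of_ne_zero h)]
    refine csInf_le ⟨0, ?_⟩ ⟨u, hu, hmean, h, rfl⟩
    rintro R ⟨v, -, -, -, rfl⟩
    exact rayleighQuotient_nonneg _ v

theorem exists_contDiff_tsupport_subset_integral_sq_ne_zero (ho : IsOpen Ω) (hne : Ω.Nonempty) :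
    ∃ u : E2 → ℝ, ContDiff ℝ ∞ u ∧ HasCompactSupport u ∧ tsupport u ⊆ Ω ∧
      ∫ x, u x ^ 2 ≠ 0 := by
  obtain ⟨x, hx⟩ := hne
  obtain ⟨u, hsupp, hc, hu, -, hux⟩ := exists_contDiff_tsupport_subset (n := ⊤) (ho.mem_nhds hx)
  refine ⟨u, hu, hc, hsupp, ne_of_gt ?_⟩
  exact (hu.continuous.pow 2).integral_pos_of_hasCompactSupport_nonneg_nonzero
    (hc.comp_left (g := fun y : ℝ => y ^ 2) (by simp)) (fun _ => sq_nonneg _) (x := x)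
    (by simp [hux])

theorem le_dEig1 (ho : IsOpen Ω) (hne : Ω.Nonempty) {c : ℝ}
    (h : ∀ u : E2 → ℝ, ContDiff ℝ ∞ u → HasCompactSupport u → tsupport u ⊆ Ω →
      c * ∫ x, u x ^ 2 ≤ ∫ x, ‖fderiv ℝ u x‖ ^ 2) : c ≤ dEig1 Ω := by
  obtain ⟨v, hv, hvc, hvs, hv0⟩ := exists_contDiff_tsupport_subset_integral_sq_ne_zero ho hne
  refine le_csInf ⟨_, v, hv, hvc, hvs, hv0, rfl⟩ ?_
  rintro R ⟨u, hu, hc, hs, h0, rfl⟩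
  rw [le_div_iff₀ (integral_sq_pos_of_ne_zero h0)]
  exact h u hu hc hs

theorem integrableOn_of_isBounded (hb : Bornology.IsBounded Ω) {g : E2 → ℝ} (hg : Continuous g) :
    IntegrableOn g Ω := by
  obtain ⟨R, hR⟩ := hb.subset_closedBall 0
  exact (hg.continuousOn.integrableOn_compact (isCompact_closedBall (0 : E2) R)).mono_set hR

theorem exists_mem_apply_zero_ne (ho : IsOpen Ω) (hne : Ω.Nonempty) (m : ℝ) : ∃ x ∈ Ω, x 0 ≠ m := by
  obtain ⟨x, hx⟩ := hne
  have hline : Continuous fun t : ℝ => x + t • unitRadial 0 := by fun_prop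
  have hmem : ∀ᶠ t in 𝓝[≠] (0 : ℝ), x + t • unitRadial 0 ∈ Ω :=
    nhdsWithin_le_nhds (hline.continuousAt.eventually_mem (ho.mem_nhds (by simpa using hx)))
  have hne' : ∀ᶠ t in 𝓝[≠] (0 : ℝ), t ≠ m - x 0 := by
    rcases eq_or_ne (m - x 0) 0 with h | h
    · rw [h]; exact self_mem_nhdsWithin
    · exact nhdsWithin_le_nhds (isOpen_ne.mem_nhds h.symm)
  obtain ⟨t, ht, htm⟩ := (hmem.and hne').exists
  exact ⟨_, ht, fun h => htm (by simp at h; linarith)⟩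

theorem exists_contDiff_setIntegral_eq_zero_sq_ne_zero (ho : IsOpen Ω)
    (hb : Bornology.IsBounded Ω) (hne : Ω.Nonempty) :
    ∃ u : E2 → ℝ, ContDiff ℝ ∞ u ∧ ∫ x in Ω, u x = 0 ∧ ∫ x in Ω, u x ^ 2 ≠ 0 := by
  have : IsFiniteMeasure (volume.restrict Ω) :=
    isFiniteMeasure_restrict.2 hb.measure_lt_top.ne
  refine ⟨fun x => x 0 - ⨍ y in Ω, y 0, by fun_prop, integral_sub_average _ _, ne_of_gt ?_⟩
  rw [setIntegral_pos_iff_support_of_nonneg_ae (Eventually.of_forall fun x => sq_nonneg _)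
    (integrableOn_of_isBounded hb (by fun_prop))]
  refine ((Continuous.isOpen_support (by fun_prop)).inter ho).measure_pos volume ?_
  obtain ⟨x, hx, hx0⟩ := exists_mem_apply_zero_ne ho hne (⨍ y in Ω, y 0)
  exact ⟨x, pow_ne_zero 2 (sub_ne_zero.2 hx0), hx⟩

theorem le_nEig1 (ho : IsOpen Ω) (hb : Bornology.IsBounded Ω) (hne : Ω.Nonempty) {c : ℝ}
    (h : ∀ u : E2 → ℝ, ContDiff ℝ ∞ u → ∫ x in Ω, u x = 0 →
      c * ∫ x in Ω, u x ^ 2 ≤ ∫ x in Ω, ‖fderiv ℝ u x‖ ^ 2) : c ≤ nEig1 Ω := by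
  obtain ⟨v, hv, hv_mean, hv0⟩ := exists_contDiff_setIntegral_eq_zero_sq_ne_zero ho hb hne
  refine le_csInf ⟨_, v, hv, hv_mean, hv0, rfl⟩ ?_
  rintro R ⟨u, hu, hmean, h0, rfl⟩
  rw [le_div_iff₀ (integral_sq_pos_of_ne_zero h0)]
  exact h u hu hmean

theorem setIntegral_sq_eq_integral_of_tsupport_subset {S : Set E2} (hs : tsupport u ⊆ S) :
    ∫ x in S, u x ^ 2 = ∫ x, u x ^ 2 := by
  refine setIntegral_eq_integral_of_forall_compl_eq_zero fun x hx => ?_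
  rw [image_eq_zero_of_notMem_tsupport (mt (@hs x) hx), zero_pow two_ne_zero]

theorem fderiv_eq_zero_of_notMem_tsupport {x : E2} (hx : x ∉ tsupport u) : fderiv ℝ u x = 0 :=
  image_eq_zero_of_notMem_tsupport fun h => hx (tsupport_fderiv_subset ℝ h)

theorem setIntegral_norm_fderiv_sq_eq_integral_of_tsupport_subset {S : Set E2}
    (hs : tsupport u ⊆ S) : ∫ x in S, ‖fderiv ℝ u x‖ ^ 2 = ∫ x, ‖fderiv ℝ u x‖ ^ 2 := by
  refine setIntegral_eq_integral_of_forall_compl_eq_zero fun x hx => ?_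
  rw [fderiv_eq_zero_of_notMem_tsupport (mt (@hs x) hx), norm_zero, zero_pow two_ne_zero]

end Eigenvalues

/-! ### The Dirichlet inequality along a radius of the disc -/

section RadialDirichlet

variable {f : ℝ → ℝ}

theorem dEig1_unitDisc_mul_le_of_radial {F F' : ℝ → ℝ} (hF : ContDiff ℝ ∞ F)
    (hF' : ∀ r, HasDerivAt F (F' r) r) {δ : ℝ} (hδ : 0 < δ) (hconst : ∀ r ≤ δ, F r = F 0)
    (hzero : ∀ r ≥ 1 - δ, F r = 0) :
    dEig1 unitDisc * ∫ r in (0 : ℝ)..1, r * F r ^ 2 ≤ ∫ r in (0 : ℝ)..1, r * F' r ^ 2 := by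
  have hu : ContDiff ℝ ∞ (radialFun F) := contDiff_radialFun hF hδ hconst
  have hsupp : Function.support (radialFun F) ⊆ Metric.closedBall 0 (1 - δ) := fun x hx => by
    rw [mem_closedBall_zero_iff]
    by_contra! hlt
    exact hx (hzero _ hlt.le)
  have htsupp : tsupport (radialFun F) ⊆ Metric.ball 0 1 :=
    (closure_minimal hsupp Metric.isClosed_closedBall).trans
      (Metric.closedBall_subset_ball (by linarith))
  have hcompact : HasCompactSupport (radialFun F) :=
    HasCompactSupport.of_support_subset_isCompact (isCompact_closedBall 0 (1 - δ)) hsupp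
  have htest := dEig1_mul_integral_sq_le (Ω := unitDisc) hu hcompact htsupp
  rw [← setIntegral_sq_eq_integral_of_tsupport_subset htsupp,
    ← setIntegral_norm_fderiv_sq_eq_integral_of_tsupport_subset htsupp,
    setIntegral_ball_radialFun_sq hu.continuous zero_le_one,
    setIntegral_ball_norm_fderiv_radialFun_sq (hu.of_le (by simp)) hF' zero_le_one,
    mul_left_comm] at htest
  exact le_of_mul_le_mul_left htest (by positivity)

theorem dEig1_unitDisc_mul_integral_sub_sq_le (hf : ContDiff ℝ ∞ f) :
    dEig1 unitDisc * ∫ r in (0 : ℝ)..1, r * (f r - f 1) ^ 2 ≤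
      ∫ r in (0 : ℝ)..1, r * deriv f r ^ 2 := by
  have hf' : Continuous (deriv f) := hf.continuous_deriv (by simp)
  have hmass := tendsto_integral_comp_flattening
    (H := fun p => p.1 * (f p.2.1 - f p.2.2.2.2) ^ 2) (by fun_prop)
  have henergy := tendsto_integral_comp_flattening
    (H := fun p => p.1 * (deriv f p.2.1 * p.2.2.1) ^ 2) (by fun_prop)
  simp only [mul_one] at henergy
  refine le_of_tendsto_of_tendsto (hmass.const_mul (dEig1 unitDisc)) henergy ?_
  filter_upwards [self_mem_nhdsWithin] with δ hδ
  have hderiv : ∀ r, HasDerivAt (fun r => f (flattening δ r) - f (flattening δ 1))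
      (deriv f (flattening δ r) * cutoff δ r) r := fun r =>
    ((hf.differentiable (by simp) (flattening δ r)).hasDerivAt.comp r
      (hasDerivAt_flattening δ r)).sub_const _
  refine dEig1_unitDisc_mul_le_of_radial
    ((hf.comp (contDiff_flattening δ)).sub contDiff_const) hderiv hδ (fun r hr => ?_) fun r hr => ?_
  · simp only [flattening_of_le hδ hr, flattening_of_le hδ (le_of_lt hδ)]
  · rw [flattening_of_ge hδ hr, sub_self]

theorem dEig1_unitDisc_mul_integral_sq_sub_le (hf : ContDiff ℝ ∞ f) {τ : ℝ} (hτ : 0 < τ) :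
    dEig1 unitDisc * ((1 - τ) * (∫ r in (0 : ℝ)..1, r * f r ^ 2) - f 1 ^ 2 / (2 * τ)) ≤
      ∫ r in (0 : ℝ)..1, r * deriv f r ^ 2 := by
  have hfc := hf.continuous
  refine (mul_le_mul_of_nonneg_left ?_ (dEig1_nonneg _)).trans
    (dEig1_unitDisc_mul_integral_sub_sq_le hf)
  calc (1 - τ) * (∫ r in (0 : ℝ)..1, r * f r ^ 2) - f 1 ^ 2 / (2 * τ)
      = ∫ r in (0 : ℝ)..1, ((1 - τ) * (r * f r ^ 2) - f 1 ^ 2 / τ * r) := by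
        rw [intervalIntegral.integral_sub (Continuous.intervalIntegrable (by fun_prop) _ _)
          (Continuous.intervalIntegrable (by fun_prop) _ _), intervalIntegral.integral_const_mul,
          intervalIntegral.integral_const_mul, integral_id]
        field_simp
        ring
    _ ≤ ∫ r in (0 : ℝ)..1, r * (f r - f 1) ^ 2 := by
        refine intervalIntegral.integral_mono_on zero_le_one
          (Continuous.intervalIntegrable (by fun_prop) _ _)
          (Continuous.intervalIntegrable (by fun_prop) _ _) fun r hr => ?_
        have hcross : 0 ≤ τ * f r ^ 2 - 2 * f r * f 1 + f 1 ^ 2 / τ := by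
          rw [show τ * f r ^ 2 - 2 * f r * f 1 + f 1 ^ 2 / τ = (τ * f r - f 1) ^ 2 / τ by
            field_simp; ring]
          positivity
        nlinarith [mul_nonneg hr.1 hcross, mul_nonneg hr.1 (sq_nonneg (f 1))]

end RadialDirichlet

/-! ### Dirichlet energy of functions on the disc with thin tentacles -/

section SineSector

/-- The set of directions `θ` with `|sin θ| < w`, i.e. those in which a ray leaves the unit disc
through a horizontal strip of half-width `w`. -/
def sineSector (w : ℝ) : Set ℝ := {θ | |sin θ| < w}

theorem measurableSet_sineSector (w : ℝ) : MeasurableSet (sineSector w) :=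
  (isOpen_lt (by fun_prop) continuous_const).measurableSet

theorem abs_le_of_abs_sin_lt {w x : ℝ} (hx : |x| ≤ π / 2) (h : |sin x| < w) : |x| ≤ π * w / 2 := by
  have hjordan : 2 / π * |x| ≤ w := (mul_abs_le_abs_sin hx).trans h.le
  rw [div_mul_eq_mul_div, div_le_iff₀ pi_pos] at hjordan
  linarith

theorem sineSector_inter_Ioc_subset (w : ℝ) :
    sineSector w ∩ Ioc (-π) π ⊆ Icc (-π) (-π + π * w / 2) ∪
      (Icc (-(π * w / 2)) (π * w / 2) ∪ Icc (π - π * w / 2) π) := by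
  rintro θ ⟨hθ : |sin θ| < w, hlo, hhi⟩
  rcases le_or_gt (-(π / 2)) θ with h1 | h1
  · rcases le_or_gt θ (π / 2) with h2 | h2
    · exact Or.inr (Or.inl (abs_le.1 (abs_le_of_abs_sin_lt (abs_le.2 ⟨h1, h2⟩) hθ)))
    · have := abs_le.1 (abs_le_of_abs_sin_lt (x := π - θ) (w := w)
        (abs_le.2 ⟨by linarith, by linarith⟩) (by rwa [sin_pi_sub]))
      exact Or.inr (Or.inr ⟨by linarith, hhi⟩)
  · have := abs_le.1 (abs_le_of_abs_sin_lt (x := θ + π) (w := w)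
      (abs_le.2 ⟨by linarith, by linarith⟩) (by rwa [sin_add_pi, abs_neg]))
    exact Or.inl ⟨hlo.le, by linarith⟩

theorem volume_real_sineSector_le {w : ℝ} (hw : 0 ≤ w) :
    volume.real (sineSector w ∩ Ioc (-π) π) ≤ 2 * π * w := by
  have hpos : 0 ≤ π * w / 2 := by positivity
  calc volume.real (sineSector w ∩ Ioc (-π) π)
      ≤ volume.real (Icc (-π) (-π + π * w / 2) ∪
        (Icc (-(π * w / 2)) (π * w / 2) ∪ Icc (π - π * w / 2) π)) :=
        measureReal_mono (sineSector_inter_Ioc_subset w)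
          ((isCompact_Icc.union (isCompact_Icc.union isCompact_Icc)).measure_lt_top.ne)
    _ ≤ volume.real (Icc (-π) (-π + π * w / 2)) +
        (volume.real (Icc (-(π * w / 2)) (π * w / 2)) + volume.real (Icc (π - π * w / 2) π)) :=
        (measureReal_union_le _ _).trans (add_le_add le_rfl (measureReal_union_le _ _))
    _ = 2 * π * w := by
        rw [Real.volume_real_Icc_of_le (by linarith), Real.volume_real_Icc_of_le (by linarith),
          Real.volume_real_Icc_of_le (by linarith)]
        ring

theorem intervalIntegrable_indicator_sineSector (w K : ℝ) :
    IntervalIntegrable ((sineSector w).indicator fun _ => K) volume (-π) π :=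
  ⟨intervalIntegrable_const.1.indicator (measurableSet_sineSector w),
    intervalIntegrable_const.2.indicator (measurableSet_sineSector w)⟩

theorem integral_indicator_sineSector_le {w K : ℝ} (hw : 0 ≤ w) (hK : 0 ≤ K) :
    ∫ θ in (-π)..π, (sineSector w).indicator (fun _ => K) θ ≤ 2 * π * w * K := by
  rw [intervalIntegral.integral_of_le (by linarith [pi_pos]),
    setIntegral_indicator (measurableSet_sineSector w), inter_comm, setIntegral_const, smul_eq_mul]
  exact mul_le_mul_of_nonneg_right (volume_real_sineSector_le hw) hK

end SineSector

section AngularNormSq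

/-- The function `u` in polar coordinates. -/
def inPolar (u : E2 → ℝ) (r θ : ℝ) : ℝ := u (r • unitRadial θ)

/-- The squared `L²` norm of `f(r, ·)` over one period of the angle. -/
def angularNormSq (f : ℝ → ℝ → ℝ) (r : ℝ) : ℝ := ∫ θ in (-π)..π, f r θ ^ 2

/-- The squared `L²` norm over the annulus `a < r < b` of a function `f` of the polar
coordinates. -/
def annulusNormSq (f : ℝ → ℝ → ℝ) (a b : ℝ) : ℝ := ∫ r in a..b, r * angularNormSq f r

/-- The contribution of the annulus `a < r < b` to the Dirichlet energy of `u`. -/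
def annulusEnergy (u : E2 → ℝ) (a b : ℝ) : ℝ :=
  ∫ r in a..b, r * (angularNormSq (radialDeriv u) r + angularNormSq (angularDeriv u) r)

theorem angularNormSq_nonneg (f : ℝ → ℝ → ℝ) (r : ℝ) : 0 ≤ angularNormSq f r :=
  intervalIntegral.integral_nonneg (by linarith [pi_pos]) fun _ _ => sq_nonneg _

theorem continuous_angularNormSq {f : ℝ → ℝ → ℝ} (hf : Continuous fun p : ℝ × ℝ => f p.1 p.2) :
    Continuous (angularNormSq f) := by
  unfold angularNormSq; fun_prop

theorem annulusNormSq_nonneg (f : ℝ → ℝ → ℝ) {a b : ℝ} (ha : 0 ≤ a) (hab : a ≤ b) :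
    0 ≤ annulusNormSq f a b :=
  intervalIntegral.integral_nonneg hab fun r hr =>
    mul_nonneg (ha.trans hr.1) (angularNormSq_nonneg f r)

theorem annulusNormSq_add {f : ℝ → ℝ → ℝ} (hf : Continuous fun p : ℝ × ℝ => f p.1 p.2)
    (a b c : ℝ) : annulusNormSq f a b + annulusNormSq f b c = annulusNormSq f a c :=
  have hcont : Continuous fun r => r * angularNormSq f r :=
    continuous_id.mul (continuous_angularNormSq hf)
  intervalIntegral.integral_add_adjacent_intervals (hcont.intervalIntegrable _ _)
    (hcont.intervalIntegrable _ _)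

theorem integral_integral_mul_sq_eq_annulusNormSq {f : ℝ → ℝ → ℝ}
    (hf : Continuous fun p : ℝ × ℝ => f p.1 p.2) {a b : ℝ} (hab : a ≤ b) :
    ∫ θ in (-π)..π, ∫ r in a..b, r * f r θ ^ 2 = annulusNormSq f a b := by
  rw [intervalIntegral_swap_of_continuous (by fun_prop) (by linarith [pi_pos]) hab]
  simp only [intervalIntegral.integral_const_mul, angularNormSq, annulusNormSq]

variable {u : E2 → ℝ}

@[fun_prop]
theorem continuous_inPolar (hu : Continuous u) {X : Type*} [TopologicalSpace X] {ρ φ : X → ℝ}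
    (hρ : Continuous ρ) (hφ : Continuous φ) : Continuous fun x => inPolar u (ρ x) (φ x) := by
  unfold inPolar; fun_prop

@[fun_prop]
theorem continuous_angularNormSq_inPolar (hu : Continuous u) :
    Continuous (angularNormSq (inPolar u)) := continuous_angularNormSq (by fun_prop)

@[fun_prop]
theorem continuous_angularNormSq_radialDeriv (hu : ContDiff ℝ 1 u) :
    Continuous (angularNormSq (radialDeriv u)) := continuous_angularNormSq (by fun_prop)

@[fun_prop]
theorem continuous_angularNormSq_angularDeriv (hu : ContDiff ℝ 1 u) :
    Continuous (angularNormSq (angularDeriv u)) := continuous_angularNormSq (by fun_prop)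

theorem annulusEnergy_eq_add (hu : ContDiff ℝ 1 u) (a b : ℝ) :
    annulusEnergy u a b =
      annulusNormSq (radialDeriv u) a b + annulusNormSq (angularDeriv u) a b := by
  simp only [annulusEnergy, annulusNormSq, mul_add]
  exact intervalIntegral.integral_add (Continuous.intervalIntegrable (by fun_prop) _ _)
    (Continuous.intervalIntegrable (by fun_prop) _ _)

theorem annulusEnergy_nonneg (hu : ContDiff ℝ 1 u) {a b : ℝ} (ha : 0 ≤ a) (hab : a ≤ b) :
    0 ≤ annulusEnergy u a b := by
  rw [annulusEnergy_eq_add hu]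
  exact add_nonneg (annulusNormSq_nonneg _ ha hab) (annulusNormSq_nonneg _ ha hab)

theorem annulusEnergy_add (hu : ContDiff ℝ 1 u) (a b c : ℝ) :
    annulusEnergy u a b + annulusEnergy u b c = annulusEnergy u a c :=
  intervalIntegral.integral_add_adjacent_intervals (Continuous.intervalIntegrable (by fun_prop) _ _)
    (Continuous.intervalIntegrable (by fun_prop) _ _)

theorem integral_angular_deriv_sq (r : ℝ) :
    ∫ θ in (-π)..π, (r * angularDeriv u r θ) ^ 2 = r ^ 2 * angularNormSq (angularDeriv u) r := by
  simp only [mul_pow, intervalIntegral.integral_const_mul, angularNormSq]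

theorem setIntegral_ball_sq_eq_annulusNormSq (hu : Continuous u) {R : ℝ} (hR : 0 ≤ R) :
    ∫ x in Metric.ball (0 : E2) R, u x ^ 2 =
      annulusNormSq (inPolar u) 0 R := by
  rw [setIntegral_ball_eq_polar (by fun_prop) hR]
  simp only [intervalIntegral.integral_const_mul, annulusNormSq, angularNormSq, inPolar]

theorem setIntegral_ball_norm_fderiv_sq_eq_annulusEnergy (hu : ContDiff ℝ 1 u) {R : ℝ}
    (hR : 0 ≤ R) :
    ∫ x in Metric.ball (0 : E2) R, ‖fderiv ℝ u x‖ ^ 2 = annulusEnergy u 0 R := by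
  rw [setIntegral_ball_norm_fderiv_sq_eq_polar hu hR, annulusEnergy]
  congr 1
  ext r
  rw [intervalIntegral.integral_const_mul, intervalIntegral.integral_add
    (Continuous.intervalIntegrable (by fun_prop) _ _)
    (Continuous.intervalIntegrable (by fun_prop) _ _), angularNormSq, angularNormSq]

/-- An upper bound for the radial mass of `u` along any ray of the unit disc, obtained from the
one-dimensional Sobolev inequality in the angle. -/
def rayMassBound (u : E2 → ℝ) : ℝ :=
  1 / π * annulusNormSq (inPolar u) 0 1 + 4 * π * annulusNormSq (angularDeriv u) 0 1

theorem rayMassBound_nonneg (u : E2 → ℝ) : 0 ≤ rayMassBound u := by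
  have hU := annulusNormSq_nonneg (inPolar u) le_rfl zero_le_one
  have hB := annulusNormSq_nonneg (angularDeriv u) le_rfl zero_le_one
  unfold rayMassBound
  positivity

theorem integral_ray_sq_le (hu : ContDiff ℝ 1 u) {θ : ℝ} (hθ : θ ∈ Icc (-π) π) :
    ∫ r in (0 : ℝ)..1, r * inPolar u r θ ^ 2 ≤ rayMassBound u := by
  have hpi := pi_pos
  rw [rayMassBound, annulusNormSq, annulusNormSq, ← intervalIntegral.integral_const_mul,
    ← intervalIntegral.integral_const_mul,
    ← intervalIntegral.integral_add (Continuous.intervalIntegrable (by fun_prop) _ _)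
      (Continuous.intervalIntegrable (by fun_prop) _ _)]
  refine intervalIntegral.integral_mono_on zero_le_one
    (Continuous.intervalIntegrable (by fun_prop) _ _)
    (Continuous.intervalIntegrable (by fun_prop) _ _) fun r hr => ?_
  have hsup := sq_le_mean_sq_add_integral_deriv_sq (hasDerivAt_angular hu r) (by fun_prop)
    (by linarith) hθ
  rw [integral_angular_deriv_sq, sub_neg_eq_add, ← two_mul, div_mul_cancel_left₀ two_ne_zero,
    ← one_div] at hsup
  have hr2 : r ^ 2 * angularNormSq (angularDeriv u) r ≤ angularNormSq (angularDeriv u) r :=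
    mul_le_of_le_one_left (angularNormSq_nonneg _ _) (pow_le_one₀ hr.1 hr.2)
  calc r * inPolar u r θ ^ 2
      ≤ r * (1 / π * angularNormSq (inPolar u) r +
          2 * (2 * π) * angularNormSq (angularDeriv u) r) := by
        refine mul_le_mul_of_nonneg_left (hsup.trans ?_) hr.1
        exact add_le_add le_rfl (mul_le_mul_of_nonneg_left hr2 (by positivity))
    _ = _ := by ring

end AngularNormSq

section ThinTentacles

/-- Outside the unit disc, the support of `u` lies over the directions in `sineSector w`, and `u`
is supported in the disc of radius `ρ`. -/
structure HasThinTentacles (u : E2 → ℝ) (ρ w : ℝ) : Prop where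
  tsupport_subset : tsupport u ⊆ Metric.ball 0 ρ
  notMem_tsupport : ∀ r θ : ℝ, 1 ≤ r → θ ∉ sineSector w → r • unitRadial θ ∉ tsupport u

variable {u : E2 → ℝ} {ρ w r : ℝ}

namespace HasThinTentacles

theorem inPolar_eq_zero (h : HasThinTentacles u ρ w) (hr : 1 ≤ r) {θ : ℝ}
    (hθ : θ ∉ sineSector w) : inPolar u r θ = 0 :=
  image_eq_zero_of_notMem_tsupport (f := u) (h.notMem_tsupport r θ hr hθ)

theorem angularDeriv_eq_zero (h : HasThinTentacles u ρ w) (hr : 1 ≤ r) {θ : ℝ}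
    (hθ : θ ∉ sineSector w) : angularDeriv u r θ = 0 := by
  rw [angularDeriv, fderiv_eq_zero_of_notMem_tsupport (h.notMem_tsupport r θ hr hθ),
    zero_apply]

theorem inPolar_radius_eq_zero (h : HasThinTentacles u ρ w) (hρ : 0 ≤ ρ) (θ : ℝ) :
    inPolar u ρ θ = 0 := by
  refine image_eq_zero_of_notMem_tsupport (f := u) fun hmem => ?_
  have := h.tsupport_subset hmem
  rw [mem_ball_zero_iff, norm_smul_unitRadial hρ] at this
  exact this.false

theorem angularNormSq_le (h : HasThinTentacles u ρ w) (hu : ContDiff ℝ 1 u) (hw : 0 ≤ w)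
    (hw1 : w ≤ 1) (hr : 1 ≤ r) :
    angularNormSq (inPolar u) r ≤
      (2 * π * w) ^ 2 * (r ^ 2 * angularNormSq (angularDeriv u) r) := by
  have hpi := pi_pos
  have hpoincare := integral_sq_le_sq_length_mul_integral_deriv_sq (hasDerivAt_angular hu r)
    (by fun_prop) (measurableSet_sineSector w) (a := -π) (b := π) (c := π / 2)
    ⟨by linarith, by linarith⟩ (by simp [sineSector, hw1]) (fun θ => h.inPolar_eq_zero hr)
    (fun θ hθ => by rw [h.angularDeriv_eq_zero hr hθ, mul_zero])
  rw [integral_angular_deriv_sq] at hpoincare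
  refine hpoincare.trans ?_
  have := angularNormSq_nonneg (angularDeriv u) r
  gcongr
  exact volume_real_sineSector_le hw

theorem angularNormSq_le_of_le (h : HasThinTentacles u ρ w) (hu : ContDiff ℝ 1 u) (hw : 0 ≤ w)
    (hw1 : w ≤ 1) (hr : 1 ≤ r) (hrρ : r ≤ ρ) :
    angularNormSq (inPolar u) r ≤ (2 * π * w * ρ) ^ 2 * angularNormSq (angularDeriv u) r := by
  have hB := angularNormSq_nonneg (angularDeriv u) r
  calc angularNormSq (inPolar u) r
      ≤ (2 * π * w) ^ 2 * (r ^ 2 * angularNormSq (angularDeriv u) r) :=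
        h.angularNormSq_le hu hw hw1 hr
    _ ≤ (2 * π * w) ^ 2 * (ρ ^ 2 * angularNormSq (angularDeriv u) r) := by gcongr
    _ = (2 * π * w * ρ) ^ 2 * angularNormSq (angularDeriv u) r := by ring

theorem integral_exterior_sq_le (h : HasThinTentacles u ρ w) (hu : ContDiff ℝ 1 u) (hw : 0 ≤ w)
    (hw1 : w ≤ 1) (hρ : 1 ≤ ρ) :
    annulusNormSq (inPolar u) 1 ρ ≤ (2 * π * w * ρ) ^ 2 * annulusEnergy u 1 ρ := by
  rw [annulusNormSq, annulusEnergy, ← intervalIntegral.integral_const_mul]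
  refine intervalIntegral.integral_mono_on hρ (Continuous.intervalIntegrable (by fun_prop) _ _)
    (Continuous.intervalIntegrable (by fun_prop) _ _) fun r hr => ?_
  have hr0 : 0 ≤ r := zero_le_one.trans hr.1
  rw [mul_left_comm]
  refine mul_le_mul_of_nonneg_left ((h.angularNormSq_le_of_le hu hw hw1 hr.1 hr.2).trans ?_) hr0
  gcongr
  exact le_add_of_nonneg_left (angularNormSq_nonneg _ _)

theorem angularNormSq_one_le (h : HasThinTentacles u ρ w) (hu : ContDiff ℝ 1 u) (hw : 0 < w)
    (hw1 : w ≤ 1) (hρ : 1 ≤ ρ) :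
    angularNormSq (inPolar u) 1 ≤ 2 * π * w * ρ * annulusEnergy u 1 ρ := by
  have hpi : -π ≤ π := by linarith [pi_pos]
  set q := 2 * π * w * ρ
  have hq0 : 0 < q := by positivity
  calc angularNormSq (inPolar u) 1
      ≤ ∫ θ in (-π)..π, ∫ r in (1 : ℝ)..ρ,
          (q⁻¹ * inPolar u r θ ^ 2 + q * radialDeriv u r θ ^ 2) := by
        refine intervalIntegral.integral_mono_on hpi
          (Continuous.intervalIntegrable (by fun_prop) _ _)
          (Continuous.intervalIntegrable (by fun_prop) _ _) fun θ _ => ?_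
        exact sq_le_integral_inv_mul_sq_add_mul_deriv_sq (fun r => hasDerivAt_radial hu r θ)
          (by fun_prop) hρ hq0 (h.inPolar_radius_eq_zero (by linarith) θ)
    _ = ∫ r in (1 : ℝ)..ρ,
          (q⁻¹ * angularNormSq (inPolar u) r + q * angularNormSq (radialDeriv u) r) := by
        rw [intervalIntegral_swap_of_continuous (by fun_prop) hpi hρ]
        congr 1
        ext r
        rw [intervalIntegral.integral_add (Continuous.intervalIntegrable (by fun_prop) _ _)
          (Continuous.intervalIntegrable (by fun_prop) _ _), intervalIntegral.integral_const_mul,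
          intervalIntegral.integral_const_mul, angularNormSq, angularNormSq]
    _ ≤ q * annulusEnergy u 1 ρ := by
        rw [annulusEnergy, ← intervalIntegral.integral_const_mul]
        refine intervalIntegral.integral_mono_on hρ
          (Continuous.intervalIntegrable (by fun_prop) _ _)
          (Continuous.intervalIntegrable (by fun_prop) _ _) fun r hr => ?_
        have hmass : q⁻¹ * angularNormSq (inPolar u) r ≤ q * angularNormSq (angularDeriv u) r := by
          rw [inv_mul_le_iff₀ hq0, ← mul_assoc, ← sq]
          exact h.angularNormSq_le_of_le hu hw.le hw1 hr.1 hr.2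
        have hA := angularNormSq_nonneg (radialDeriv u) r
        have hB := angularNormSq_nonneg (angularDeriv u) r
        nlinarith [mul_nonneg hq0.le (mul_nonneg (sub_nonneg.2 hr.1) (add_nonneg hA hB))]

theorem dEig1_unitDisc_mul_ray_le (h : HasThinTentacles u ρ w) (hu : ContDiff ℝ ∞ u) {τ θ : ℝ}
    (hτ : 0 < τ) (hθ : θ ∈ Icc (-π) π) :
    dEig1 unitDisc * ((∫ r in (0 : ℝ)..1, r * inPolar u r θ ^ 2) - inPolar u 1 θ ^ 2 / (2 * τ) -
      (sineSector w).indicator (fun _ => τ * rayMassBound u) θ) ≤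
      ∫ r in (0 : ℝ)..1, r * radialDeriv u r θ ^ 2 := by
  have hu1 : ContDiff ℝ 1 u := hu.of_le (by simp)
  have hray : ContDiff ℝ ∞ fun r => inPolar u r θ := hu.comp (by fun_prop)
  have hderiv : deriv (fun r => inPolar u r θ) = fun r => radialDeriv u r θ :=
    funext fun r => (hasDerivAt_radial hu1 r θ).deriv
  by_cases hmem : θ ∈ sineSector w
  · have hineq := dEig1_unitDisc_mul_integral_sq_sub_le hray hτ
    rw [hderiv] at hineq
    refine (mul_le_mul_of_nonneg_left ?_ (dEig1_nonneg _)).trans hineq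
    rw [indicator_of_mem hmem]
    have := mul_le_mul_of_nonneg_left (integral_ray_sq_le hu1 hθ) hτ.le
    linarith
  · have hineq := dEig1_unitDisc_mul_integral_sub_sq_le hray
    rw [hderiv, h.inPolar_eq_zero le_rfl hmem] at hineq
    simpa [indicator_of_notMem hmem, h.inPolar_eq_zero le_rfl hmem] using hineq

theorem dEig1_unitDisc_mul_interior_le (h : HasThinTentacles u ρ w) (hu : ContDiff ℝ ∞ u)
    (hw : 0 ≤ w) {τ : ℝ} (hτ : 0 < τ) :
    dEig1 unitDisc * (annulusNormSq (inPolar u) 0 1 - angularNormSq (inPolar u) 1 / (2 * τ) -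
      2 * π * w * (τ * rayMassBound u)) ≤ annulusNormSq (radialDeriv u) 0 1 := by
  have hu1 : ContDiff ℝ 1 u := hu.of_le (by simp)
  have hK : 0 ≤ τ * rayMassBound u := mul_nonneg hτ.le (rayMassBound_nonneg u)
  have hintegrated := intervalIntegral.integral_mono_on (by linarith [pi_pos])
    (((Continuous.intervalIntegrable (by fun_prop) _ _).sub
      (intervalIntegrable_indicator_sineSector w _)).const_mul _)
    (Continuous.intervalIntegrable (by fun_prop) _ _)
    fun θ hθ => h.dEig1_unitDisc_mul_ray_le hu hτ hθ
  rw [intervalIntegral.integral_const_mul, intervalIntegral.integral_sub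
    (Continuous.intervalIntegrable (by fun_prop) _ _) (intervalIntegrable_indicator_sineSector w _),
    intervalIntegral.integral_sub (Continuous.intervalIntegrable (by fun_prop) _ _)
    (Continuous.intervalIntegrable (by fun_prop) _ _), intervalIntegral.integral_div,
    integral_integral_mul_sq_eq_annulusNormSq (by fun_prop) zero_le_one,
    integral_integral_mul_sq_eq_annulusNormSq (by fun_prop) zero_le_one] at hintegrated
  exact (mul_le_mul_of_nonneg_left (sub_le_sub_left (integral_indicator_sineSector_le hw hK) _)
    (dEig1_nonneg _)).trans hintegrated

theorem dEig1_unitDisc_mul_annulusNormSq_le (h : HasThinTentacles u ρ w) (hu : ContDiff ℝ ∞ u)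
    (hρ : 1 ≤ ρ) (hw : 0 < w) (hw1 : w ≤ 1) (hΛ : 0 < dEig1 unitDisc)
    (hsmall : 16 * π ^ 3 * dEig1 unitDisc ^ 2 * w ^ 2 * ρ ≤ 1)
    (hsmall' : dEig1 unitDisc * (2 * π * w * ρ) ^ 2 ≤ 1 / 2) :
    dEig1 unitDisc * (1 - 4 * π * dEig1 unitDisc * w ^ 2 * ρ) * annulusNormSq (inPolar u) 0 ρ ≤
      annulusEnergy u 0 ρ := by
  have hu1 : ContDiff ℝ 1 u := hu.of_le (by simp)
  have hinterior := h.dEig1_unitDisc_mul_interior_le hu hw.le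
    (τ := dEig1 unitDisc * (2 * π * w * ρ)) (by positivity)
  have hcircle := h.angularNormSq_one_le hu1 hw hw1 hρ
  have hexterior := h.integral_exterior_sq_le hu1 hw.le hw1 hρ
  have hET := annulusEnergy_nonneg hu1 zero_le_one hρ
  have hVT := annulusNormSq_nonneg (inPolar u) zero_le_one hρ
  have hEB := annulusNormSq_nonneg (angularDeriv u) le_rfl zero_le_one
  rw [← annulusNormSq_add (b := 1) (by fun_prop), ← annulusEnergy_add hu1 0 1 ρ,
    annulusEnergy_eq_add hu1 0 1]
  rw [rayMassBound] at hinterior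
  set Λ := dEig1 unitDisc
  set VD := annulusNormSq (inPolar u) 0 1
  set VT := annulusNormSq (inPolar u) 1 ρ
  set EB := annulusNormSq (angularDeriv u) 0 1
  set ET := annulusEnergy u 1 ρ
  have hcircle' : Λ * (angularNormSq (inPolar u) 1 / (2 * (Λ * (2 * π * w * ρ)))) ≤ ET / 2 := by
    rw [mul_div_assoc', div_le_div_iff₀ (by positivity) two_pos]
    nlinarith
  have hexterior' : Λ * VT ≤ ET / 2 := by
    nlinarith [mul_le_mul_of_nonneg_left hexterior hΛ.le, mul_le_mul_of_nonneg_right hsmall' hET]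
  have hangular := mul_le_mul_of_nonneg_right hsmall hEB
  have hsector : Λ * (2 * π * w * (Λ * (2 * π * w * ρ) * (1 / π * VD + 4 * π * EB))) =
      Λ * (4 * π * Λ * w ^ 2 * ρ) * VD + 16 * π ^ 3 * Λ ^ 2 * w ^ 2 * ρ * EB := by
    field_simp; ring
  have hloss : 0 ≤ Λ * (4 * π * Λ * w ^ 2 * ρ) * VT := by positivity
  linarith

theorem dEig1_unitDisc_mul_integral_sq_le (h : HasThinTentacles u ρ w) (hu : ContDiff ℝ ∞ u)
    (hρ : 1 ≤ ρ) (hw : 0 < w) (hw1 : w ≤ 1) (hΛ : 0 < dEig1 unitDisc)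
    (hsmall : 16 * π ^ 3 * dEig1 unitDisc ^ 2 * w ^ 2 * ρ ≤ 1)
    (hsmall' : dEig1 unitDisc * (2 * π * w * ρ) ^ 2 ≤ 1 / 2) :
    dEig1 unitDisc * (1 - 4 * π * dEig1 unitDisc * w ^ 2 * ρ) * ∫ x, u x ^ 2 ≤
      ∫ x, ‖fderiv ℝ u x‖ ^ 2 := by
  have hρ0 : 0 ≤ ρ := by linarith
  rw [← setIntegral_sq_eq_integral_of_tsupport_subset h.tsupport_subset,
    ← setIntegral_norm_fderiv_sq_eq_integral_of_tsupport_subset h.tsupport_subset,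
    setIntegral_ball_sq_eq_annulusNormSq hu.continuous hρ0,
    setIntegral_ball_norm_fderiv_sq_eq_annulusEnergy (hu.of_le (by simp)) hρ0]
  exact h.dEig1_unitDisc_mul_annulusNormSq_le hu hρ hw hw1 hΛ hsmall hsmall'

end HasThinTentacles

end ThinTentacles

/-! ### Fourier coefficients and a Wirtinger inequality -/

section Fourier

/-- The classical real Fourier coefficient `π⁻¹ ∫ h(x) cos (n x) dx` over one period. -/
def cosCoeff (n : ℤ) (h : ℝ → ℝ) : ℝ := π⁻¹ * ∫ x in (-π)..π, h x * cos (n * x)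

/-- The classical real Fourier coefficient `π⁻¹ ∫ h(x) sin (n x) dx` over one period. -/
def sinCoeff (n : ℤ) (h : ℝ → ℝ) : ℝ := π⁻¹ * ∫ x in (-π)..π, h x * sin (n * x)

theorem neg_pi_lt_pi : -π < π := by linarith [pi_pos]

variable {h h' : ℝ → ℝ}

theorem fourierCoeffOn_ofReal_eq (hc : Continuous h) (n : ℤ) :
    fourierCoeffOn neg_pi_lt_pi (fun x => (h x : ℂ)) n =
      ((cosCoeff n h / 2 : ℝ) : ℂ) - ((sinCoeff n h / 2 : ℝ) : ℂ) * Complex.I := by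
  have hpi : (π : ℂ) ≠ 0 := by exact_mod_cast pi_ne_zero
  have hexp (x : ℝ) : fourier (-n) (x : AddCircle (π - -π)) • (h x : ℂ) =
      ((h x * cos (n * x) : ℝ) : ℂ) - ((h x * sin (n * x) : ℝ) : ℂ) * Complex.I := by
    rw [fourier_coe_apply, smul_eq_mul,
      show (2 * π * Complex.I * (-n : ℤ) * x / (π - -π : ℝ) : ℂ) = -(n * x) * Complex.I by
        push_cast; field_simp; ring, Complex.exp_mul_I, Complex.cos_neg, Complex.sin_neg]
    push_cast
    ring
  simp only [fourierCoeffOn_eq_integral, hexp]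
  rw [intervalIntegral.integral_sub (Continuous.intervalIntegrable (by fun_prop) _ _)
    (Continuous.intervalIntegrable (by fun_prop) _ _), intervalIntegral.integral_mul_const,
    intervalIntegral.integral_ofReal, intervalIntegral.integral_ofReal, Complex.real_smul]
  simp only [cosCoeff, sinCoeff]
  push_cast
  field_simp
  ring

theorem norm_fourierCoeffOn_ofReal_sq (hc : Continuous h) (n : ℤ) :
    ‖fourierCoeffOn neg_pi_lt_pi (fun x => (h x : ℂ)) n‖ ^ 2 =
      (cosCoeff n h ^ 2 + sinCoeff n h ^ 2) / 4 := by
  rw [fourierCoeffOn_ofReal_eq hc, Complex.sq_norm, Complex.normSq_apply]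
  simp
  ring

theorem hasSum_cosCoeff_sq_add_sinCoeff_sq (hc : Continuous h) :
    HasSum (fun n : ℤ => cosCoeff n h ^ 2 + sinCoeff n h ^ 2)
      (2 / π * ∫ x in (-π)..π, h x ^ 2) := by
  have hmem : MemLp (fun x => (h x : ℂ)) 2 (volume.restrict (Ioc (-π) π)) :=
    (memLp_two_iff_integrable_sq_norm (by fun_prop)).2 (Continuous.integrableOn_Ioc (by fun_prop))
  have hparseval := (hasSum_sq_fourierCoeffOn neg_pi_lt_pi hmem).mul_left 4
  have hvalue : 4 * ((π - -π)⁻¹ * ∫ x in (-π)..π, h x ^ 2) = 2 / π * ∫ x in (-π)..π, h x ^ 2 := by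
    rw [sub_neg_eq_add]
    field_simp
    ring
  simpa only [norm_fourierCoeffOn_ofReal_sq hc, Complex.norm_real, norm_eq_abs, sq_abs,
    smul_eq_mul, mul_div_cancel₀ _ (four_ne_zero (α := ℝ)), hvalue] using hparseval

/-- The part of `∫ h ^ 2` carried by the modes `1`, `cos` and `sin`. -/
def lowModeMass (h : ℝ → ℝ) : ℝ :=
  π * (cosCoeff 0 h ^ 2 / 2 + cosCoeff 1 h ^ 2 + sinCoeff 1 h ^ 2)

theorem cosCoeff_neg (n : ℤ) (h : ℝ → ℝ) : cosCoeff (-n) h = cosCoeff n h := by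
  simp [cosCoeff]

theorem sinCoeff_neg (n : ℤ) (h : ℝ → ℝ) : sinCoeff (-n) h = -sinCoeff n h := by
  simp [sinCoeff]

theorem sinCoeff_zero (h : ℝ → ℝ) : sinCoeff 0 h = 0 := by
  simp [sinCoeff]

theorem lowModeMass_le_integral_sq (hc : Continuous h) :
    lowModeMass h ≤ ∫ x in (-π)..π, h x ^ 2 := by
  have hpi := pi_pos
  have hbessel := sum_le_hasSum {0, 1, -1} (fun n _ => by positivity)
    (hasSum_cosCoeff_sq_add_sinCoeff_sq hc)
  rw [Finset.sum_insert (by decide), Finset.sum_pair (by decide), sinCoeff_zero, cosCoeff_neg,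
    sinCoeff_neg] at hbessel
  rw [div_mul_eq_mul_div, le_div_iff₀ hpi] at hbessel
  unfold lowModeMass
  linarith

theorem cosCoeff_deriv (hd : ∀ x, HasDerivAt h (h' x) x) (hc : Continuous h')
    (hper : h π = h (-π)) (n : ℤ) : cosCoeff n h' = n * sinCoeff n h := by
  have hparts := intervalIntegral.integral_mul_deriv_eq_deriv_mul
    (u := fun x => cos (n * x)) (u' := fun x => -(n * sin (n * x))) (a := -π) (b := π)
    (fun x _ => by simpa [mul_comm] using ((hasDerivAt_id x).const_mul (n : ℝ)).cos)
    (fun x _ => hd x) (Continuous.intervalIntegrable (by fun_prop) _ _)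
    (hc.intervalIntegrable _ _)
  simp only [mul_neg, cos_neg, hper, sub_self, zero_sub, neg_mul, intervalIntegral.integral_neg,
    neg_neg, mul_assoc, intervalIntegral.integral_const_mul] at hparts
  simp only [cosCoeff, sinCoeff, mul_comm (h' _), mul_comm (h _), hparts]
  ring

theorem sinCoeff_deriv (hd : ∀ x, HasDerivAt h (h' x) x) (hc : Continuous h')
    (n : ℤ) : sinCoeff n h' = -(n * cosCoeff n h) := by
  have hparts := intervalIntegral.integral_mul_deriv_eq_deriv_mul
    (u := fun x => sin (n * x)) (u' := fun x => n * cos (n * x)) (a := -π) (b := π)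
    (fun x _ => by simpa [mul_comm] using ((hasDerivAt_id x).const_mul (n : ℝ)).sin)
    (fun x _ => hd x) (Continuous.intervalIntegrable (by fun_prop) _ _)
    (hc.intervalIntegrable _ _)
  simp only [mul_neg, sin_neg, sin_int_mul_pi, neg_zero, zero_mul, sub_self, zero_sub,
    mul_assoc, intervalIntegral.integral_const_mul] at hparts
  simp only [cosCoeff, sinCoeff, mul_comm (h' _), mul_comm (h _), hparts]
  ring

theorem wirtinger_low_modes_removed (hd : ∀ x, HasDerivAt h (h' x) x) (hc : Continuous h')
    (hper : h π = h (-π)) :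
    4 * ((∫ x in (-π)..π, h x ^ 2) - lowModeMass h) +
      π * (cosCoeff 1 h ^ 2 + sinCoeff 1 h ^ 2) ≤ ∫ x in (-π)..π, h' x ^ 2 := by
  have hcont : Continuous h := continuous_iff_continuousAt.2 fun x => (hd x).continuousAt
  have hpi := pi_pos
  have hdiff := (hasSum_cosCoeff_sq_add_sinCoeff_sq hc).sub
    ((hasSum_cosCoeff_sq_add_sinCoeff_sq hcont).mul_left 4)
  simp only [cosCoeff_deriv hd hc hper, sinCoeff_deriv hd hc] at hdiff
  have hhigh : ∀ n ∉ ({0, 1, -1} : Finset ℤ),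
      0 ≤ (n * sinCoeff n h) ^ 2 + (-(n * cosCoeff n h)) ^ 2 -
        4 * (cosCoeff n h ^ 2 + sinCoeff n h ^ 2) := by
    intro n hn
    have habs : 2 ≤ |n| := by
      simp only [Finset.mem_insert, Finset.mem_singleton, not_or] at hn
      rw [le_abs]
      lia
    have hsq : (4 : ℝ) ≤ n ^ 2 := by
      rw [← sq_abs]
      exact_mod_cast (by nlinarith : (4 : ℤ) ≤ |n| ^ 2)
    nlinarith [sq_nonneg (cosCoeff n h), sq_nonneg (sinCoeff n h)]
  have hbound := sum_le_hasSum _ hhigh hdiff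
  rw [Finset.sum_insert (by decide), Finset.sum_pair (by decide), sinCoeff_zero, cosCoeff_neg,
    sinCoeff_neg, mul_left_comm, ← mul_sub, div_mul_eq_mul_div, le_div_iff₀ hpi] at hbound
  push_cast at hbound
  unfold lowModeMass
  linarith

end Fourier

/-! ### Radial mean-zero functions and the mode decomposition on the disc -/

section RadialPoincare

/-- Picone's identity bounds the radial energy from below by any positive supersolution. -/
theorem mul_integral_mul_sq_le_of_supersolution {φ φ' κ g g' : ℝ → ℝ} {c : ℝ}
    (hφ : ∀ r ∈ Icc (0 : ℝ) 1, 0 < φ r) (hφd : ∀ r, HasDerivAt φ (φ' r) r) (hφc : Continuous φ')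
    (hflux : ∀ r, HasDerivAt (fun r => r * φ' r) (-κ r) r) (hκ : Continuous κ)
    (hsuper : ∀ r ∈ Icc (0 : ℝ) 1, c * (r * φ r) ≤ κ r)
    (hgd : ∀ r, HasDerivAt g (g' r) r) (hgc : Continuous g') (hg1 : g 1 = 0) :
    c * ∫ r in (0 : ℝ)..1, r * g r ^ 2 ≤ ∫ r in (0 : ℝ)..1, r * g' r ^ 2 := by
  have hφcont : Continuous φ := continuous_iff_continuousAt.2 fun x => (hφd x).continuousAt
  have hgcont : Continuous g := continuous_iff_continuousAt.2 fun x => (hgd x).continuousAt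
  let Φ' : ℝ → ℝ := fun r => (-κ r * φ r - r * φ' r * φ' r) / φ r ^ 2 * g r ^ 2 +
    r * φ' r / φ r * (2 * g r * g' r)
  have hΦ (r : ℝ) (hr : r ∈ Icc (0 : ℝ) 1) :
      HasDerivAt (fun r => r * φ' r / φ r * g r ^ 2) (Φ' r) r := by
    simpa [Φ'] using ((hflux r).fun_div (hφd r) (hφ r hr).ne').fun_mul ((hgd r).fun_pow 2)
  have h_int : IntervalIntegrable Φ' volume 0 1 := by
    refine ContinuousOn.intervalIntegrable ?_
    rw [uIcc_of_le zero_le_one]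
    refine ((ContinuousOn.div (by fun_prop) (by fun_prop) fun r hr => ?_).mul (by fun_prop)).add
      ((ContinuousOn.div (by fun_prop) (by fun_prop) fun r hr => (hφ r hr).ne').mul (by fun_prop))
    exact pow_ne_zero 2 (hφ r hr).ne'
  have hΦ0 : ∫ r in (0 : ℝ)..1, Φ' r = 0 := by
    rw [intervalIntegral.integral_eq_sub_of_hasDerivAt
      (by rwa [uIcc_of_le zero_le_one]) h_int]
    simp [hg1]
  have hpicone (r : ℝ) (hr : r ∈ Icc (0 : ℝ) 1) :
      Φ' r + c * (r * g r ^ 2) ≤ r * g' r ^ 2 := by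
    have hpos := hφ r hr
    have hidentity : r * g' r ^ 2 - Φ' r =
        r * (g' r - φ' r / φ r * g r) ^ 2 + κ r / φ r * g r ^ 2 := by
      simp only [Φ']; field_simp; ring
    have hκφ : c * r ≤ κ r / φ r := by
      rw [le_div_iff₀ hpos, mul_assoc]; exact hsuper r hr
    nlinarith [mul_nonneg hr.1 (sq_nonneg (g' r - φ' r / φ r * g r)),
      mul_le_mul_of_nonneg_right hκφ (sq_nonneg (g r))]
  have hmono := intervalIntegral.integral_mono_on zero_le_one
    (h_int.add (Continuous.intervalIntegrable (by fun_prop) _ _))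
    (Continuous.intervalIntegrable (by fun_prop) _ _) hpicone
  rwa [intervalIntegral.integral_add h_int (Continuous.intervalIntegrable (by fun_prop) _ _), hΦ0,
    intervalIntegral.integral_const_mul, zero_add] at hmono

theorem four_mul_integral_mul_sq_le_of_eq_zero {g g' : ℝ → ℝ} (hgd : ∀ r, HasDerivAt g (g' r) r)
    (hgc : Continuous g') (hg1 : g 1 = 0) :
    4 * ∫ r in (0 : ℝ)..1, r * g r ^ 2 ≤ ∫ r in (0 : ℝ)..1, r * g' r ^ 2 := by
  have hlim : Tendsto (fun c : ℝ => 4 * c * ∫ r in (0 : ℝ)..1, r * g r ^ 2) (𝓝[<] 1)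
      (𝓝 (4 * 1 * ∫ r in (0 : ℝ)..1, r * g r ^ 2)) :=
    (Continuous.tendsto (by fun_prop) 1).mono_left nhdsWithin_le_nhds
  rw [mul_one] at hlim
  refine le_of_tendsto hlim ?_
  filter_upwards [Ioo_mem_nhdsLT zero_lt_one] with c ⟨hc0, hc1⟩
  refine mul_integral_mul_sq_le_of_supersolution (φ := fun r => 1 - c * r ^ 2)
    (φ' := fun r => -(2 * c * r)) (κ := fun r => 4 * c * r) (fun r hr => ?_) (fun r => ?_)
    (by fun_prop) (fun r => ?_) (by fun_prop) (fun r hr => ?_) hgd hgc hg1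
  · nlinarith [pow_le_one₀ hr.1 hr.2 (n := 2)]
  · exact (((hasDerivAt_pow 2 r).const_mul c).const_sub 1).congr_deriv (by ring)
  · exact ((hasDerivAt_id' r).fun_mul ((hasDerivAt_id' r).const_mul (2 * c)).fun_neg).congr_deriv
      (by ring)
  · have := mul_nonneg hc0.le hr.1
    nlinarith [mul_nonneg this (mul_nonneg hc0.le (sq_nonneg r))]

theorem four_mul_integral_mul_sq_le_of_mean_zero {f f' : ℝ → ℝ} (hd : ∀ r, HasDerivAt f (f' r) r)
    (hc : Continuous f') (hmean : ∫ r in (0 : ℝ)..1, r * f r = 0) :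
    4 * ∫ r in (0 : ℝ)..1, r * f r ^ 2 ≤ ∫ r in (0 : ℝ)..1, r * f' r ^ 2 := by
  have hfc : Continuous f := continuous_iff_continuousAt.2 fun x => (hd x).continuousAt
  have hexpand : ∫ r in (0 : ℝ)..1, r * (f r - f 1) ^ 2 =
      (∫ r in (0 : ℝ)..1, r * f r ^ 2) + f 1 ^ 2 / 2 := by
    calc ∫ r in (0 : ℝ)..1, r * (f r - f 1) ^ 2
        = ∫ r in (0 : ℝ)..1, (r * f r ^ 2 - 2 * f 1 * (r * f r) + f 1 ^ 2 * r) := by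
          congr 1; ext r; ring
      _ = (∫ r in (0 : ℝ)..1, r * f r ^ 2) + f 1 ^ 2 / 2 := by
          rw [intervalIntegral.integral_add (Continuous.intervalIntegrable (by fun_prop) _ _)
            (Continuous.intervalIntegrable (by fun_prop) _ _), intervalIntegral.integral_sub
            (Continuous.intervalIntegrable (by fun_prop) _ _)
            (Continuous.intervalIntegrable (by fun_prop) _ _), intervalIntegral.integral_const_mul,
            intervalIntegral.integral_const_mul, hmean, integral_id]
          ring
  have hdirichlet := four_mul_integral_mul_sq_le_of_eq_zero (fun r => (hd r).sub_const (f 1)) hc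
    (sub_self _)
  rw [hexpand] at hdirichlet
  linarith [sq_nonneg (f 1)]

end RadialPoincare

section ModeDecomposition

/-- The energy `∫ (r a'² + a²/r) dr` over the unit interval, which is up to the factor `π` the
Dirichlet energy on the unit disc of the first angular modes `a(r) cos θ` and `a(r) sin θ`. -/
def firstModeEnergy (a : ℝ → ℝ) : ℝ := ∫ r in (0 : ℝ)..1, (r * deriv a r ^ 2 + a r ^ 2 / r)

variable {u : E2 → ℝ}

theorem contDiff_inPolar (hu : ContDiff ℝ ∞ u) :
    ContDiff ℝ ∞ fun p : ℝ × ℝ => inPolar u p.1 p.2 := by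
  unfold inPolar; fun_prop

theorem contDiff_cosCoeff_inPolar (hu : ContDiff ℝ ∞ u) (n : ℤ) :
    ContDiff ℝ ∞ fun r => cosCoeff n (inPolar u r) :=
  contDiff_const.mul (contDiff_infty_intervalIntegral
    (G := fun r θ => inPolar u r θ * cos (n * θ)) ((contDiff_inPolar hu).mul (by fun_prop)) _ _)

theorem contDiff_sinCoeff_inPolar (hu : ContDiff ℝ ∞ u) (n : ℤ) :
    ContDiff ℝ ∞ fun r => sinCoeff n (inPolar u r) :=
  contDiff_const.mul (contDiff_infty_intervalIntegral
    (G := fun r θ => inPolar u r θ * sin (n * θ)) ((contDiff_inPolar hu).mul (by fun_prop)) _ _)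

theorem hasDerivAt_cosCoeff_inPolar (hu : ContDiff ℝ 1 u) (n : ℤ) (r : ℝ) :
    HasDerivAt (fun r => cosCoeff n (inPolar u r)) (cosCoeff n (radialDeriv u r)) r :=
  (hasDerivAt_intervalIntegral_of_continuous
    (G := fun r θ => inPolar u r θ * cos (n * θ)) (G' := fun r θ => radialDeriv u r θ * cos (n * θ))
    (by fun_prop) (by fun_prop) (fun r θ => (hasDerivAt_radial hu r θ).mul_const _) _ _ r).const_mul
    _

theorem hasDerivAt_sinCoeff_inPolar (hu : ContDiff ℝ 1 u) (n : ℤ) (r : ℝ) :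
    HasDerivAt (fun r => sinCoeff n (inPolar u r)) (sinCoeff n (radialDeriv u r)) r :=
  (hasDerivAt_intervalIntegral_of_continuous
    (G := fun r θ => inPolar u r θ * sin (n * θ)) (G' := fun r θ => radialDeriv u r θ * sin (n * θ))
    (by fun_prop) (by fun_prop) (fun r θ => (hasDerivAt_radial hu r θ).mul_const _) _ _ r).const_mul
    _

theorem cosCoeff_one_inPolar_zero (u : E2 → ℝ) : cosCoeff 1 (inPolar u 0) = 0 := by
  simp [cosCoeff, inPolar]

theorem sinCoeff_one_inPolar_zero (u : E2 → ℝ) : sinCoeff 1 (inPolar u 0) = 0 := by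
  simp [sinCoeff, inPolar]

theorem integral_mul_cosCoeff_zero_eq_zero (hu : Continuous u) (hmean : ∫ x in unitDisc, u x = 0) :
    ∫ r in (0 : ℝ)..1, r * cosCoeff 0 (inPolar u r) = 0 := by
  rw [unitDisc, setIntegral_ball_eq_polar hu zero_le_one] at hmean
  simp only [intervalIntegral.integral_const_mul] at hmean
  simp [cosCoeff, inPolar, mul_left_comm _ π⁻¹, hmean]

/-- The part of `∫ u(r, θ)² dθ` that is not carried by the angular modes `1`, `cos` and `sin`. -/
def highModeMass (u : E2 → ℝ) (r : ℝ) : ℝ :=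
  angularNormSq (inPolar u) r - lowModeMass (inPolar u r)

theorem highModeMass_nonneg (hu : Continuous u) (r : ℝ) : 0 ≤ highModeMass u r :=
  sub_nonneg.2 (lowModeMass_le_integral_sq (by fun_prop))

theorem continuous_highModeMass (hu : Continuous u) : Continuous (highModeMass u) := by
  unfold highModeMass lowModeMass cosCoeff sinCoeff
  fun_prop

theorem highModeMass_add_firstModes_le (hu : ContDiff ℝ 1 u) (r : ℝ) :
    4 * highModeMass u r +
      π * (cosCoeff 1 (inPolar u r) ^ 2 + sinCoeff 1 (inPolar u r) ^ 2) ≤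
      r ^ 2 * angularNormSq (angularDeriv u) r := by
  rw [← integral_angular_deriv_sq]
  refine wirtinger_low_modes_removed (hasDerivAt_angular hu r) (by fun_prop) ?_
  simp [inPolar, unitRadial]

theorem mode_energies_le (hu : ContDiff ℝ 1 u) {r : ℝ} (hr : r ∈ Icc (0 : ℝ) 1) :
    π / 2 * (r * cosCoeff 0 (radialDeriv u r) ^ 2) +
      π * (r * cosCoeff 1 (radialDeriv u r) ^ 2 + cosCoeff 1 (inPolar u r) ^ 2 / r) +
      π * (r * sinCoeff 1 (radialDeriv u r) ^ 2 + sinCoeff 1 (inPolar u r) ^ 2 / r) +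
      4 * (r * highModeMass u r) ≤
      r * (angularNormSq (radialDeriv u) r + angularNormSq (angularDeriv u) r) := by
  have hradial : lowModeMass (radialDeriv u r) ≤ angularNormSq (radialDeriv u) r :=
    lowModeMass_le_integral_sq (by fun_prop)
  rcases hr.1.eq_or_lt with rfl | hpos
  · simp
  have hangular : (4 * highModeMass u r + π * (cosCoeff 1 (inPolar u r) ^ 2 +
      sinCoeff 1 (inPolar u r) ^ 2)) / r ≤ r * angularNormSq (angularDeriv u) r := by
    rw [div_le_iff₀ hpos]
    linarith [highModeMass_add_firstModes_le hu r]
  have hhigh : 4 * (r * highModeMass u r) ≤ 4 * highModeMass u r / r := by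
    rw [le_div_iff₀ hpos]
    nlinarith [mul_le_mul_of_nonneg_right (pow_le_one₀ hr.1 hr.2 (n := 2))
      (highModeMass_nonneg hu.continuous r)]
  have := mul_le_mul_of_nonneg_left hradial hr.1
  rw [lowModeMass] at this
  rw [add_div, mul_div_assoc π, add_div] at hangular
  linarith

theorem integral_mode_energies_le (hu : ContDiff ℝ ∞ u) :
    π / 2 * (∫ r in (0 : ℝ)..1, r * cosCoeff 0 (radialDeriv u r) ^ 2) +
      π * firstModeEnergy (fun r => cosCoeff 1 (inPolar u r)) +
      π * firstModeEnergy (fun r => sinCoeff 1 (inPolar u r)) +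
      4 * (∫ r in (0 : ℝ)..1, r * highModeMass u r) ≤ annulusEnergy u 0 1 := by
  have hu1 : ContDiff ℝ 1 u := hu.of_le (by simp)
  have hcos := continuous_sq_div_self ((contDiff_cosCoeff_inPolar hu 1).of_le (by simp))
    (cosCoeff_one_inPolar_zero u)
  have hsin := continuous_sq_div_self ((contDiff_sinCoeff_inPolar hu 1).of_le (by simp))
    (sinCoeff_one_inPolar_zero u)
  have hhigh := continuous_highModeMass hu.continuous
  have hcoeff (n : ℤ) : Continuous (fun r => cosCoeff n (radialDeriv u r)) ∧
      Continuous fun r => sinCoeff n (radialDeriv u r) := by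
    unfold cosCoeff sinCoeff; constructor <;> fun_prop
  have hcos0 := (hcoeff 0).1
  obtain ⟨hcos1, hsin1⟩ := hcoeff 1
  simp only [firstModeEnergy, (hasDerivAt_cosCoeff_inPolar hu1 1 _).deriv,
    (hasDerivAt_sinCoeff_inPolar hu1 1 _).deriv]
  simp only [← intervalIntegral.integral_const_mul]
  rw [← intervalIntegral.integral_add, ← intervalIntegral.integral_add,
    ← intervalIntegral.integral_add]
  · exact intervalIntegral.integral_mono_on zero_le_one
      (Continuous.intervalIntegrable (by fun_prop) _ _)
      (Continuous.intervalIntegrable (by fun_prop) _ _) fun r hr => mode_energies_le hu1 hr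
  all_goals exact Continuous.intervalIntegrable (by fun_prop) _ _

theorem annulusNormSq_inPolar_eq_sum_modes (hu : Continuous u) :
    annulusNormSq (inPolar u) 0 1 =
      π / 2 * (∫ r in (0 : ℝ)..1, r * cosCoeff 0 (inPolar u r) ^ 2) +
      π * (∫ r in (0 : ℝ)..1, r * cosCoeff 1 (inPolar u r) ^ 2) +
      π * (∫ r in (0 : ℝ)..1, r * sinCoeff 1 (inPolar u r) ^ 2) +
      ∫ r in (0 : ℝ)..1, r * highModeMass u r := by
  have hhigh := continuous_highModeMass hu
  have hcoeff (n : ℤ) : Continuous (fun r => cosCoeff n (inPolar u r)) ∧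
      Continuous fun r => sinCoeff n (inPolar u r) := by
    unfold cosCoeff sinCoeff; constructor <;> fun_prop
  have hcos0 := (hcoeff 0).1
  obtain ⟨hcos1, hsin1⟩ := hcoeff 1
  simp only [← intervalIntegral.integral_const_mul]
  rw [← intervalIntegral.integral_add, ← intervalIntegral.integral_add,
    ← intervalIntegral.integral_add]
  · refine intervalIntegral.integral_congr fun r _ => ?_
    simp only [highModeMass, lowModeMass]
    ring
  all_goals exact Continuous.intervalIntegrable (by fun_prop) _ _

theorem mul_setIntegral_unitDisc_sq_le_of_firstModeEnergy {ν : ℝ} (hν : ν ≤ 4)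
    (hmode : ∀ a : ℝ → ℝ, ContDiff ℝ ∞ a → a 0 = 0 →
      ν * (∫ r in (0 : ℝ)..1, r * a r ^ 2) ≤ firstModeEnergy a)
    (hu : ContDiff ℝ ∞ u) (hmean : ∫ x in unitDisc, u x = 0) :
    ν * (∫ x in unitDisc, u x ^ 2) ≤ ∫ x in unitDisc, ‖fderiv ℝ u x‖ ^ 2 := by
  have hu1 : ContDiff ℝ 1 u := hu.of_le (by simp)
  have hpi := pi_pos
  have hradial := four_mul_integral_mul_sq_le_of_mean_zero (hasDerivAt_cosCoeff_inPolar hu1 0)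
    (by unfold cosCoeff; fun_prop) (integral_mul_cosCoeff_zero_eq_zero hu.continuous hmean)
  have hcos := hmode _ (contDiff_cosCoeff_inPolar hu 1) (cosCoeff_one_inPolar_zero u)
  have hsin := hmode _ (contDiff_sinCoeff_inPolar hu 1) (sinCoeff_one_inPolar_zero u)
  have hmean_mass : 0 ≤ ∫ r in (0 : ℝ)..1, r * cosCoeff 0 (inPolar u r) ^ 2 :=
    intervalIntegral.integral_nonneg zero_le_one fun r hr => mul_nonneg hr.1 (sq_nonneg _)
  have hhigh_mass : 0 ≤ ∫ r in (0 : ℝ)..1, r * highModeMass u r :=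
    intervalIntegral.integral_nonneg zero_le_one fun r hr =>
      mul_nonneg hr.1 (highModeMass_nonneg hu.continuous r)
  rw [unitDisc, setIntegral_ball_sq_eq_annulusNormSq hu.continuous zero_le_one,
    setIntegral_ball_norm_fderiv_sq_eq_annulusEnergy hu1 zero_le_one,
    annulusNormSq_inPolar_eq_sum_modes hu.continuous]
  refine le_trans ?_ (integral_mode_energies_le hu)
  have hmean_mode := (mul_le_mul_of_nonneg_right hν hmean_mass).trans hradial
  nlinarith [mul_le_mul_of_nonneg_left hmean_mode hpi.le, mul_le_mul_of_nonneg_left hcos hpi.le,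
    mul_le_mul_of_nonneg_left hsin hpi.le, mul_le_mul_of_nonneg_right hν hhigh_mass]

end ModeDecomposition

/-! ### Near-optimal Neumann profiles on the disc -/

section DiscProfiles

/-- Smooth radial profiles that vanish on `r ≤ δ` and are constant on `r ≥ 1 - δ`, so that
`cosineMode f` is smooth and its energy outside the unit disc is purely angular. -/
structure IsFlatProfile (f : ℝ → ℝ) (δ : ℝ) : Prop where
  pos : 0 < δ
  contDiff : ContDiff ℝ ∞ f
  eq_zero : ∀ r ≤ δ, f r = 0
  eq_apply_one : ∀ r, 1 - δ ≤ r → f r = f 1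

variable {a f : ℝ → ℝ} {δ ν : ℝ}

theorem IsFlatProfile.contDiff_cosineMode (hf : IsFlatProfile f δ) :
    ContDiff ℝ ∞ (cosineMode f) :=
  _root_.contDiff_cosineMode hf.contDiff hf.pos hf.eq_zero

theorem isFlatProfile_comp_flattening (ha : ContDiff ℝ ∞ a) (h0 : a 0 = 0) (hδ : 0 < δ) :
    IsFlatProfile (fun r => a (flattening δ r)) δ where
  pos := hδ
  contDiff := ha.comp (contDiff_flattening δ)
  eq_zero r hr := by rw [flattening_of_le hδ hr, h0]
  eq_apply_one r hr := by rw [flattening_of_ge hδ hr]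

theorem firstModeEnergy_comp_flattening (ha : ContDiff ℝ ∞ a) (h0 : a 0 = 0) (δ : ℝ) :
    firstModeEnergy (fun r => a (flattening δ r)) =
      ∫ r in (0 : ℝ)..1, (r * (deriv a (flattening δ r) * cutoff δ r) ^ 2 +
        r * (dslope a 0 (flattening δ r) * (flattening δ r / r)) ^ 2) := by
  refine intervalIntegral.integral_congr fun r _ => ?_
  have hderiv : deriv (fun r => a (flattening δ r)) r = deriv a (flattening δ r) * cutoff δ r :=
    ((ha.differentiable (by simp) _).hasDerivAt.comp r (hasDerivAt_flattening δ r)).deriv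
  simp only [hderiv, eq_mul_dslope_zero h0 (flattening δ r)]
  rcases eq_or_ne r 0 with rfl | hr
  · simp
  · field_simp

theorem mul_integral_mul_sq_le_firstModeEnergy_of_flat
    (hflat : ∀ f δ, IsFlatProfile f δ →
      ν * (∫ r in (0 : ℝ)..1, r * f r ^ 2) ≤ firstModeEnergy f)
    (ha : ContDiff ℝ ∞ a) (h0 : a 0 = 0) :
    ν * (∫ r in (0 : ℝ)..1, r * a r ^ 2) ≤ firstModeEnergy a := by
  have hc := ha.continuous
  have hc' : Continuous (deriv a) := ha.continuous_deriv (by simp)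
  have hd : Continuous (dslope a 0) := continuous_dslope_zero (ha.of_le (by simp))
  have hmass := tendsto_integral_comp_flattening (H := fun p => p.1 * a p.2.1 ^ 2) (by fun_prop)
  have henergy := tendsto_integral_comp_flattening (H := fun p =>
    p.1 * (deriv a p.2.1 * p.2.2.1) ^ 2 + p.1 * (dslope a 0 p.2.1 * p.2.2.2.1) ^ 2) (by fun_prop)
  simp only [mul_one, ← sq_div_eq_mul_dslope_zero_sq h0] at hmass henergy
  refine le_of_tendsto_of_tendsto (hmass.const_mul ν) henergy ?_
  filter_upwards [self_mem_nhdsWithin] with δ hδ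
  rw [← firstModeEnergy_comp_flattening ha h0]
  exact hflat _ δ (isFlatProfile_comp_flattening ha h0 hδ)

theorem integral_mul_id_sq : ∫ r in (0 : ℝ)..1, r * r ^ 2 = 1 / 4 := by
  simp only [← pow_succ', integral_pow]; norm_num

theorem firstModeEnergy_id : firstModeEnergy (fun r => r) = 1 := by
  have hintegrand (r : ℝ) : r * deriv (fun r : ℝ => r) r ^ 2 + r ^ 2 / r = 2 * r := by
    rw [deriv_id'', sq r, mul_self_div_self]; ring
  simp only [firstModeEnergy, hintegrand]
  rw [intervalIntegral.integral_const_mul, integral_id]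
  norm_num

theorem le_four_of_flat (hflat : ∀ f δ, IsFlatProfile f δ →
    ν * (∫ r in (0 : ℝ)..1, r * f r ^ 2) ≤ firstModeEnergy f) : ν ≤ 4 := by
  have := mul_integral_mul_sq_le_firstModeEnergy_of_flat hflat contDiff_fun_id rfl
  rw [integral_mul_id_sq, firstModeEnergy_id] at this
  linarith

theorem le_nEig1_unitDisc (hν : ν ≤ 4) (hmode : ∀ a : ℝ → ℝ, ContDiff ℝ ∞ a → a 0 = 0 →
    ν * (∫ r in (0 : ℝ)..1, r * a r ^ 2) ≤ firstModeEnergy a) : ν ≤ nEig1 unitDisc :=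
  le_nEig1 Metric.isOpen_ball Metric.isBounded_ball (Metric.nonempty_ball.2 zero_lt_one)
    fun _ hu hmean => mul_setIntegral_unitDisc_sq_le_of_firstModeEnergy hν hmode hu hmean

theorem mul_sq_le_sq_div {r : ℝ} (h0 : 0 ≤ r) (h1 : r ≤ 1) (y : ℝ) : r * y ^ 2 ≤ y ^ 2 / r := by
  rcases h0.eq_or_lt with rfl | hpos
  · simp
  rw [le_div_iff₀ hpos]
  nlinarith [mul_le_mul_of_nonneg_right (mul_le_one₀ h1 h0 h1) (sq_nonneg y)]

theorem one_le_nEig1_unitDisc : 1 ≤ nEig1 unitDisc := by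
  refine le_nEig1_unitDisc (by norm_num) fun a ha h0 => ?_
  have hc := ha.continuous
  have hc' : Continuous (deriv a) := ha.continuous_deriv (by simp)
  have hd := continuous_sq_div_self (ha.of_le (by simp)) h0
  rw [one_mul]
  refine intervalIntegral.integral_mono_on zero_le_one
    (Continuous.intervalIntegrable (by fun_prop) _ _)
    (Continuous.intervalIntegrable (by fun_prop) _ _) fun r hr => ?_
  linarith [mul_sq_le_sq_div hr.1 hr.2 (a r), mul_nonneg hr.1 (sq_nonneg (deriv a r))]

theorem neg_mem_unitDisc_iff (x : E2) : x ∈ unitDisc ↔ -x ∈ unitDisc := by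
  simp [unitDisc]

theorem nEig1_unitDisc_mul_le_of_eq_zero (hf : ContDiff ℝ ∞ f) (hδ : 0 < δ)
    (hzero : ∀ r ≤ δ, f r = 0) :
    nEig1 unitDisc * (∫ r in (0 : ℝ)..1, r * f r ^ 2) ≤ firstModeEnergy f := by
  have hu := contDiff_cosineMode hf hδ hzero
  have h := nEig1_mul_setIntegral_sq_le (Ω := unitDisc) hu
    (setIntegral_eq_zero_of_odd Metric.isOpen_ball.measurableSet neg_mem_unitDisc_iff
      (cosineMode_neg f))
  rw [unitDisc, setIntegral_ball_cosineMode_sq hu.continuous zero_le_one,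
    setIntegral_ball_norm_fderiv_cosineMode_sq (hu.of_le (by simp))
      (fun r => (hf.differentiable (by simp) r).hasDerivAt) zero_le_one, mul_left_comm] at h
  exact le_of_mul_le_mul_left h pi_pos

theorem IsFlatProfile.nEig1_unitDisc_mul_le (hf : IsFlatProfile f δ) :
    nEig1 unitDisc * (∫ r in (0 : ℝ)..1, r * f r ^ 2) ≤ firstModeEnergy f :=
  nEig1_unitDisc_mul_le_of_eq_zero hf.contDiff hf.pos hf.eq_zero

theorem nEig1_unitDisc_le_four : nEig1 unitDisc ≤ 4 :=
  le_four_of_flat fun _ _ hf => hf.nEig1_unitDisc_mul_le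

theorem firstModeEnergy_nonneg (a : ℝ → ℝ) : 0 ≤ firstModeEnergy a :=
  intervalIntegral.integral_nonneg zero_le_one fun _ hr =>
    add_nonneg (mul_nonneg hr.1 (sq_nonneg _)) (div_nonneg (sq_nonneg _) hr.1)

theorem exists_isFlatProfile_firstModeEnergy_le {ε : ℝ} (hε : 0 < ε) :
    ∃ f δ, IsFlatProfile f δ ∧ 0 < (∫ r in (0 : ℝ)..1, r * f r ^ 2) ∧
      firstModeEnergy f ≤ (nEig1 unitDisc + ε) * ∫ r in (0 : ℝ)..1, r * f r ^ 2 := by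
  by_contra! hcon
  have hflat (f : ℝ → ℝ) (δ : ℝ) (hf : IsFlatProfile f δ) :
      (nEig1 unitDisc + ε) * (∫ r in (0 : ℝ)..1, r * f r ^ 2) ≤ firstModeEnergy f := by
    have hmass : 0 ≤ ∫ r in (0 : ℝ)..1, r * f r ^ 2 :=
      intervalIntegral.integral_nonneg zero_le_one fun r hr => mul_nonneg hr.1 (sq_nonneg _)
    rcases hmass.eq_or_lt with h | h
    · rw [← h, mul_zero]; exact firstModeEnergy_nonneg f
    · exact (hcon f δ hf h).le
  have := le_nEig1_unitDisc (le_four_of_flat hflat) fun a ha h0 =>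
    mul_integral_mul_sq_le_firstModeEnergy_of_flat hflat ha h0
  linarith

end DiscProfiles

section BoundaryValue

variable {f : ℝ → ℝ} {δ s : ℝ}

theorem integral_mul_sq_comp_mul (f : ℝ → ℝ) (hs : s ≠ 0) :
    ∫ r in (0 : ℝ)..1, r * f (s * r) ^ 2 = (s ^ 2)⁻¹ * ∫ r in (0 : ℝ)..s, r * f r ^ 2 := by
  have hintegrand (r : ℝ) : r * f (s * r) ^ 2 = s⁻¹ * (s * r * f (s * r) ^ 2) := by
    field_simp
  simp only [hintegrand, intervalIntegral.integral_const_mul]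
  rw [intervalIntegral.integral_comp_mul_left (fun r => r * f r ^ 2) hs, smul_eq_mul, mul_zero,
    mul_one]
  ring

theorem firstModeEnergy_comp_mul (f : ℝ → ℝ) (hs : s ≠ 0) :
    firstModeEnergy (fun r => f (s * r)) =
      ∫ r in (0 : ℝ)..s, (r * deriv f r ^ 2 + f r ^ 2 / r) := by
  have hintegrand (r : ℝ) : r * deriv (fun r => f (s * r)) r ^ 2 + f (s * r) ^ 2 / r =
      s * (s * r * deriv f (s * r) ^ 2 + f (s * r) ^ 2 / (s * r)) := by
    rw [deriv_comp_mul_left, smul_eq_mul]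
    rcases eq_or_ne r 0 with rfl | hr
    · simp
    · field_simp
  simp only [firstModeEnergy, hintegrand, intervalIntegral.integral_const_mul]
  rw [intervalIntegral.integral_comp_mul_left (fun r => r * deriv f r ^ 2 + f r ^ 2 / r) hs,
    smul_eq_mul, mul_inv_cancel_left₀ hs, mul_zero, mul_one]

theorem IsFlatProfile.nEig1_unitDisc_mul_le_of_dilation (hf : IsFlatProfile f δ) (hs : 0 < s) :
    nEig1 unitDisc * ((s ^ 2)⁻¹ * ∫ r in (0 : ℝ)..s, r * f r ^ 2) ≤
      ∫ r in (0 : ℝ)..s, (r * deriv f r ^ 2 + f r ^ 2 / r) := by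
  rw [← integral_mul_sq_comp_mul f hs.ne', ← firstModeEnergy_comp_mul f hs.ne']
  refine nEig1_unitDisc_mul_le_of_eq_zero (hf.contDiff.comp (by fun_prop)) (div_pos hf.pos hs)
    fun r hr => hf.eq_zero _ ?_
  rwa [le_div_iff₀' hs] at hr

theorem integral_mul_sq_le_boundary_sq_add {f' : ℝ → ℝ} (hd : ∀ r, HasDerivAt f (f' r) r)
    (hc : Continuous f') (hs : 0 < s) (hs1 : s ≤ 1) :
    ∫ r in s..1, r * f r ^ 2 ≤
      (1 - s) * (4 / 3 * f 1 ^ 2 + 4 * ((1 - s) / s * ∫ r in s..1, r * f' r ^ 2)) := by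
  have hfc : Continuous f := continuous_iff_continuousAt.2 fun x => (hd x).continuousAt
  have hweight : ∫ r in s..1, f' r ^ 2 ≤ s⁻¹ * ∫ r in s..1, r * f' r ^ 2 := by
    rw [le_inv_mul_iff₀ hs, ← intervalIntegral.integral_const_mul]
    exact intervalIntegral.integral_mono_on hs1 (Continuous.intervalIntegrable (by fun_prop) _ _)
      (Continuous.intervalIntegrable (by fun_prop) _ _) fun r hr =>
        mul_le_mul_of_nonneg_right hr.1 (sq_nonneg _)
  have hpointwise : ∀ r ∈ Icc s 1, r * f r ^ 2 ≤
      4 / 3 * f 1 ^ 2 + 4 * ((1 - s) / s * ∫ r in s..1, r * f' r ^ 2) := fun r hr => by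
    have hosc : (f r - f 1) ^ 2 ≤ (1 - s) / s * ∫ r in s..1, r * f' r ^ 2 := by
      rw [div_eq_mul_inv, mul_assoc]
      exact (sq_sub_le_mul_integral_deriv_sq hd hc hr (right_mem_Icc.2 hs1)).trans
        (mul_le_mul_of_nonneg_left hweight (by linarith))
    have hyoung : f r ^ 2 ≤ 4 / 3 * f 1 ^ 2 + 4 * (f r - f 1) ^ 2 := by
      nlinarith [sq_nonneg (f 1 - 3 * (f r - f 1))]
    have := mul_le_of_le_one_left (sq_nonneg (f r)) hr.2
    linarith
  refine (intervalIntegral.integral_mono_on hs1 (Continuous.intervalIntegrable (by fun_prop) _ _)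
    intervalIntegrable_const hpointwise).trans_eq ?_
  rw [intervalIntegral.integral_const, smul_eq_mul]

theorem IsFlatProfile.integral_add_integral_add_le_firstModeEnergy (hf : IsFlatProfile f δ)
    (hs : 0 ≤ s) (hs1 : s ≤ 1) :
    (∫ r in (0 : ℝ)..s, (r * deriv f r ^ 2 + f r ^ 2 / r)) + (∫ r in s..1, r * deriv f r ^ 2) +
      (∫ r in s..1, r * f r ^ 2) ≤ firstModeEnergy f := by
  have hc := hf.contDiff.continuous
  have hc' : Continuous (deriv f) := hf.contDiff.continuous_deriv (by simp)
  have hd := continuous_sq_div_self (hf.contDiff.of_le (by simp)) (hf.eq_zero 0 hf.pos.le)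
  have h_int (g : ℝ → ℝ) (a b : ℝ) (hg : Continuous g) : IntervalIntegrable g volume a b :=
    hg.intervalIntegrable _ _
  rw [firstModeEnergy, ← intervalIntegral.integral_add_adjacent_intervals
    (h_int _ 0 s (by fun_prop)) (h_int _ s 1 (by fun_prop)), add_assoc,
    ← intervalIntegral.integral_add (h_int _ _ _ (by fun_prop)) (h_int _ _ _ (by fun_prop))]
  gcongr
  refine intervalIntegral.integral_mono_on hs1 (h_int _ _ _ (by fun_prop))
    (h_int _ _ _ (by fun_prop)) fun r hr => ?_
  linarith [mul_sq_le_sq_div (hs.trans hr.1) hr.2 (f r)]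

-- Testing with the dilation `f (9 r / 10)` shows that a near-optimal `f` cannot be small at `1`.
theorem IsFlatProfile.three_halves_mul_integral_le_sq (hf : IsFlatProfile f δ) {ε : ℝ}
    (hε : ε ≤ 1 / 100) (hpos : 0 < ∫ r in (0 : ℝ)..1, r * f r ^ 2)
    (hopt : firstModeEnergy f ≤ (nEig1 unitDisc + ε) * ∫ r in (0 : ℝ)..1, r * f r ^ 2) :
    3 / 2 * (∫ r in (0 : ℝ)..1, r * f r ^ 2) ≤ f 1 ^ 2 := by
  have hc := hf.contDiff.continuous
  have hc' : Continuous (deriv f) := hf.contDiff.continuous_deriv (by simp)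
  have hinner := hf.nEig1_unitDisc_mul_le_of_dilation (s := 9 / 10) (by norm_num)
  have hsplit := hf.integral_add_integral_add_le_firstModeEnergy (s := 9 / 10) (by norm_num)
    (by norm_num)
  have houter := integral_mul_sq_le_boundary_sq_add (s := 9 / 10)
    (fun r => (hf.contDiff.differentiable (by simp) r).hasDerivAt) hc' (by norm_num) (by norm_num)
  have hmass : (∫ r in (0 : ℝ)..(9 / 10), r * f r ^ 2) + (∫ r in (9 / 10 : ℝ)..1, r * f r ^ 2) =
      ∫ r in (0 : ℝ)..1, r * f r ^ 2 :=
    intervalIntegral.integral_add_adjacent_intervals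
      (Continuous.intervalIntegrable (by fun_prop) _ _)
      (Continuous.intervalIntegrable (by fun_prop) _ _)
  have hP : 0 ≤ ∫ r in (9 / 10 : ℝ)..1, r * deriv f r ^ 2 :=
    intervalIntegral.integral_nonneg (by norm_num) fun r hr =>
      mul_nonneg (by linarith [hr.1]) (sq_nonneg _)
  have h1 := one_le_nEig1_unitDisc
  have h4 := nEig1_unitDisc_le_four
  set μ := nEig1 unitDisc
  set V := ∫ r in (0 : ℝ)..1, r * f r ^ 2
  set V₁ := ∫ r in (9 / 10 : ℝ)..1, r * f r ^ 2
  set P := ∫ r in (9 / 10 : ℝ)..1, r * deriv f r ^ 2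
  rw [eq_sub_of_add_eq hmass] at hinner
  have hV₁ := mul_le_mul_of_nonneg_left houter (show 0 ≤ 100 / 81 * μ - 1 by linarith)
  have hμP := mul_le_mul_of_nonneg_right (show 100 / 81 * μ - 1 ≤ 4 by linarith) hP
  have hbound : (19 / 81 * μ - ε) * V ≤ (100 / 81 * μ - 1) * (2 / 15) * f 1 ^ 2 := by
    linarith
  have hgap : 0 < (19 / 81 * μ - ε - (100 / 81 * μ - 1) * (1 / 5)) * V :=
    mul_pos (by linarith) hpos
  by_contra! hcon
  have := mul_le_mul_of_nonneg_left hcon.le (show 0 ≤ (100 / 81 * μ - 1) * (2 / 15) by linarith)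
  linarith [hbound]

end BoundaryValue

/-! ### The Neumann eigenvalue decreases when thin sets are attached -/

section NeumannUpperBound

variable {Ω : Set E2} {f : ℝ → ℝ} {δ : ℝ}

theorem volume_real_unitDisc : volume.real unitDisc = π := by
  simp [unitDisc, measureReal_def, pi_pos.le]

theorem IsFlatProfile.cosineMode_sq_ge_and_norm_fderiv_sq_le (hf : IsFlatProfile f δ) {x : E2}
    {w : ℝ} (hx : 1 ≤ ‖x‖) (hw : |x 1| ≤ w) :
    f 1 ^ 2 * (1 - w ^ 2) ≤ cosineMode f x ^ 2 ∧
      ‖fderiv ℝ (cosineMode f) x‖ ^ 2 ≤ f 1 ^ 2 * w ^ 2 := by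
  have hu : ContDiff ℝ 1 (cosineMode f) := hf.contDiff_cosineMode.of_le (by simp)
  obtain ⟨θ, hθ⟩ := exists_eq_norm_smul_unitRadial x
  set r := ‖x‖
  rw [hθ] at hw ⊢
  have hr : 0 < r := by linarith
  have hfr : f r = f 1 := hf.eq_apply_one r (by linarith [hf.pos])
  have hderiv : HasDerivAt f 0 r := by
    refine (hasDerivAt_const r (f 1)).congr_of_eventuallyEq ?_
    filter_upwards [lt_mem_nhds (show 1 - δ < r by linarith [hf.pos])] with y hy
    exact hf.eq_apply_one y hy.le
  have hsin : sin θ ^ 2 ≤ w ^ 2 := by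
    refine sq_le_sq' ?_ ?_ <;> simp [abs_mul, abs_of_pos hr] at hw <;>
      nlinarith [abs_nonneg (sin θ), neg_abs_le (sin θ), le_abs_self (sin θ)]
  constructor
  · rw [cosineMode_smul_unitRadial f r hr, hfr, mul_pow, cos_sq']
    gcongr
  · have hradial := radialDeriv_of_separated hu (cosineMode_smul_unitRadial f) hderiv hr θ
    have hangular := angularDeriv_of_separated hu (cosineMode_smul_unitRadial f) hr
      (hasDerivAt_cos θ)
    rw [radialDeriv] at hradial
    rw [angularDeriv] at hangular
    rw [norm_sq_eq_sq_radial_add_sq_angular _ θ, hradial, hangular, hfr]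
    calc (0 * cos θ) ^ 2 + (f 1 / r * -sin θ) ^ 2 = f 1 ^ 2 / r ^ 2 * sin θ ^ 2 := by ring
      _ ≤ f 1 ^ 2 * w ^ 2 := by gcongr; exact div_le_self (sq_nonneg _) (one_le_pow₀ hx)

theorem add_mul_le_of_rayleigh_bound {A ε V F N μ : ℝ} (hA0 : 0 ≤ A) (hA1 : A ≤ 1) (hε : 0 < ε)
    (hV : 0 < V) (hF : 3 / 2 * V ≤ F) (hμ : 1 ≤ μ)
    (h : N * (π * V + A * (F * (99 / 100))) ≤ π * ((μ + ε) * V) + A * (F * (1 / 100))) :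
    (π + A) * N ≤ π * μ + (π + A) * ε := by
  have hpi := pi_pos
  have hF0 : 0 < F := by linarith
  refine le_of_mul_le_mul_right ?_ (show 0 < π * V + A * (F * (99 / 100)) by positivity)
  have hgain : (π + A) * F * (1 / 100) ≤ π * μ * (F * (99 / 100) - V) := by
    calc (π + A) * F * (1 / 100) ≤ 5 * F * (1 / 100) := by gcongr; linarith [pi_lt_four]
      _ ≤ 3 * (F * (32 / 100)) := by linarith
      _ ≤ π * μ * (F * (99 / 100) - V) := by
        gcongr
        · nlinarith [pi_gt_three]
        · linarith
  have hrest : 0 ≤ (π + A) * ε * (A * (F * (99 / 100))) := by positivity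
  calc (π + A) * N * (π * V + A * (F * (99 / 100)))
      ≤ (π + A) * (π * ((μ + ε) * V) + A * (F * (1 / 100))) := by
        rw [mul_assoc]; gcongr
    _ ≤ (π * μ + (π + A) * ε) * (π * V + A * (F * (99 / 100))) := by
        linarith [mul_le_mul_of_nonneg_left hgain hA0]

theorem IsFlatProfile.nEig1_mul_le (hf : IsFlatProfile f δ) (ho : IsOpen Ω)
    (hb : Bornology.IsBounded Ω) (hD : unitDisc ⊆ Ω) (hneg : ∀ x, x ∈ Ω ↔ -x ∈ Ω)
    {w : ℝ} (hw : ∀ x ∈ Ω, 1 ≤ ‖x‖ → |x 1| ≤ w) :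
    nEig1 Ω * (π * (∫ r in (0 : ℝ)..1, r * f r ^ 2) +
        volume.real (Ω \ unitDisc) * (f 1 ^ 2 * (1 - w ^ 2))) ≤
      π * firstModeEnergy f + volume.real (Ω \ unitDisc) * (f 1 ^ 2 * w ^ 2) := by
  have hu := hf.contDiff_cosineMode
  have hDm : MeasurableSet unitDisc := Metric.isOpen_ball.measurableSet
  have hm := ho.measurableSet.diff hDm
  have hfin : volume (Ω \ unitDisc) ≠ ⊤ := (hb.subset sdiff_subset).measure_lt_top.ne
  have hc1 : Continuous fun x => cosineMode f x ^ 2 := hu.continuous.pow 2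
  have hc2 : Continuous fun x => ‖fderiv ℝ (cosineMode f) x‖ ^ 2 :=
    (hu.continuous_fderiv (by simp)).norm.pow 2
  have h_int {g : E2 → ℝ} (hg : Continuous g) : IntegrableOn g (Ω \ unitDisc) :=
    integrableOn_of_isBounded (hb.subset sdiff_subset) hg
  have hout (x : E2) (hx : x ∈ Ω \ unitDisc) :=
    have hnorm : 1 ≤ ‖x‖ := by simpa [unitDisc] using hx.2
    hf.cosineMode_sq_ge_and_norm_fderiv_sq_le hnorm (hw x hx.1 hnorm)
  have hmass := setIntegral_ge_of_const_le_real hm hfin (fun x hx => (hout x hx).1) (h_int hc1)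
  have henergy := setIntegral_mono_on (h_int hc2) (h_int continuous_const) hm
    fun x hx => (hout x hx).2
  have hvar := nEig1_mul_setIntegral_sq_le (Ω := Ω) hu
    (setIntegral_eq_zero_of_odd ho.measurableSet hneg (cosineMode_neg f))
  rw [setIntegral_sdiff hDm (integrableOn_of_isBounded hb hc1) hD, unitDisc,
    setIntegral_ball_cosineMode_sq hu.continuous zero_le_one, ← unitDisc] at hmass
  rw [setIntegral_sdiff hDm (integrableOn_of_isBounded hb hc2) hD, unitDisc,
    setIntegral_ball_norm_fderiv_cosineMode_sq (hu.of_le (by simp))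
      (fun r => (hf.contDiff.differentiable (by simp) r).hasDerivAt) zero_le_one, ← unitDisc,
    ← firstModeEnergy, setIntegral_const, smul_eq_mul] at henergy
  refine (mul_le_mul_of_nonneg_left ?_ (nEig1_nonneg Ω)).trans (hvar.trans ?_) <;> linarith

theorem volume_mul_nEig1_le_of_thin (ho : IsOpen Ω) (hb : Bornology.IsBounded Ω)
    (hD : unitDisc ⊆ Ω) (hneg : ∀ x, x ∈ Ω ↔ -x ∈ Ω)
    (hthin : ∀ x ∈ Ω, 1 ≤ ‖x‖ → |x 1| ≤ 1 / 10) (hvol : volume.real Ω ≤ π + 1) :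
    volume.real Ω * nEig1 Ω ≤ π * nEig1 unitDisc := by
  have harea := measureReal_sdiff hD Metric.isOpen_ball.measurableSet
    (h₁ := hb.measure_lt_top.ne) (μ := volume)
  rw [volume_real_unitDisc, eq_sub_iff_add_eq'] at harea
  set A := volume.real (Ω \ unitDisc) with hA
  rw [← harea] at hvol ⊢
  have hA0 : 0 ≤ A := measureReal_nonneg
  have hbound : ∀ᶠ ε in 𝓝[>] (0 : ℝ), (π + A) * nEig1 Ω ≤ π * nEig1 unitDisc + (π + A) * ε := by
    filter_upwards [Ioc_mem_nhdsGT (show (0 : ℝ) < 1 / 100 by norm_num)] with ε ⟨hε, hε1⟩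
    obtain ⟨f, δ, hf, hpos, hopt⟩ := exists_isFlatProfile_firstModeEnergy_le hε
    have hrayleigh := hf.nEig1_mul_le ho hb hD hneg hthin
    refine add_mul_le_of_rayleigh_bound hA0 (by linarith) hε hpos
      (hf.three_halves_mul_integral_le_sq hε1 hpos hopt) one_le_nEig1_unitDisc ?_
    norm_num at hrayleigh ⊢
    linarith [mul_le_mul_of_nonneg_left hopt pi_pos.le]
  have hlim : Tendsto (fun ε : ℝ => π * nEig1 unitDisc + (π + A) * ε) (𝓝[>] 0)
      (𝓝 (π * nEig1 unitDisc + (π + A) * 0)) :=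
    (Continuous.tendsto (by fun_prop) 0).mono_left nhdsWithin_le_nhds
  simpa using ge_of_tendsto hlim hbound

end NeumannUpperBound

/-! ### Continuity of volume and eigenvalues under dilations -/

section Dilation

open scoped Pointwise

theorem sq_mul_setIntegral_comp_smul (Ω : Set E2) (g : E2 → ℝ) {s : ℝ} (hs : 0 < s) :
    s ^ 2 * ∫ x in Ω, g (s • x) = ∫ x in s • Ω, g x := by
  rw [Measure.setIntegral_comp_smul_of_pos volume g Ω hs]
  simp only [finrank_euclideanSpace, Fintype.card_fin, smul_eq_mul]
  field_simp

theorem volume_real_smul (s : ℝ) (Ω : Set E2) :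
    volume.real (s • Ω) = s ^ 2 * volume.real Ω := by
  simp [Measure.real, Measure.addHaar_smul, ENNReal.toReal_mul, sq_nonneg]

variable {Ω Ω' : Set E2} {u : E2 → ℝ} {κ : ℝ}

theorem sq_mul_volume_real_le_of_smul_subset (hb : Bornology.IsBounded Ω) (hs : κ • Ω' ⊆ Ω) :
    κ ^ 2 * volume.real Ω' ≤ volume.real Ω := by
  rw [← volume_real_smul]
  exact measureReal_mono hs hb.measure_lt_top.ne

theorem sq_mul_dEig1_le_of_smul_subset (ho : IsOpen Ω') (hne : Ω'.Nonempty) (hκ : 0 < κ)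
    (hs : κ • Ω' ⊆ Ω) : κ ^ 2 * dEig1 Ω ≤ dEig1 Ω' := by
  refine le_dEig1 ho hne fun u hu hc hsupp => ?_
  have htsupp : tsupport (fun x => u (κ⁻¹ • x)) ⊆ Ω := by
    rw [show tsupport (fun x => u (κ⁻¹ • x)) = (fun x => κ⁻¹ • x) ⁻¹' tsupport u from
      tsupport_comp_eq_preimage u (Homeomorph.smulOfNeZero κ⁻¹ (inv_ne_zero hκ.ne'))]
    exact fun x hx => hs ⟨κ⁻¹ • x, hsupp hx, smul_inv_smul₀ hκ.ne' x⟩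
  have h := dEig1_mul_integral_sq_le (Ω := Ω) (u := fun x => u (κ⁻¹ • x)) (by fun_prop)
    (hc.comp_homeomorph (Homeomorph.smulOfNeZero κ⁻¹ (inv_ne_zero hκ.ne'))) htsupp
  simp only [fderiv_comp_smul, norm_smul, mul_pow, integral_const_mul] at h
  rw [Measure.integral_comp_inv_smul_of_nonneg volume (fun x => u x ^ 2) hκ.le,
    Measure.integral_comp_inv_smul_of_nonneg volume (fun x => ‖fderiv ℝ u x‖ ^ 2) hκ.le] at h
  simp only [finrank_euclideanSpace, Fintype.card_fin, smul_eq_mul, norm_inv, Real.norm_eq_abs,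
    sq_abs, inv_pow] at h
  rw [inv_mul_cancel_left₀ (by positivity)] at h
  linarith

theorem dEig1_anti (ho : IsOpen Ω') (hne : Ω'.Nonempty) (h : Ω' ⊆ Ω) : dEig1 Ω ≤ dEig1 Ω' := by
  simpa using sq_mul_dEig1_le_of_smul_subset ho hne one_pos (by simpa using h)

theorem setIntegral_norm_fderiv_comp_smul_sq (Ω : Set E2) (u : E2 → ℝ) (hκ : 0 < κ) :
    ∫ x in Ω, ‖fderiv ℝ (fun x => u (κ • x)) x‖ ^ 2 = ∫ x in κ • Ω, ‖fderiv ℝ u x‖ ^ 2 := by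
  simp only [fderiv_comp_smul, norm_smul, mul_pow, Real.norm_eq_abs, sq_abs, integral_const_mul]
  exact sq_mul_setIntegral_comp_smul Ω (fun x => ‖fderiv ℝ u x‖ ^ 2) hκ

theorem nEig1_le_sq_mul_nEig1_smul (ho : IsOpen Ω) (hb : Bornology.IsBounded Ω)
    (hne : Ω.Nonempty) (hκ : 0 < κ) : nEig1 Ω ≤ κ ^ 2 * nEig1 (κ • Ω) := by
  rw [← div_le_iff₀' (by positivity)]
  refine le_nEig1 (ho.smul₀ hκ.ne') (hb.smul₀ κ) hne.smul_set fun u hu hmean => ?_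
  rw [← sq_mul_setIntegral_comp_smul Ω u hκ, mul_eq_zero_iff_left (by positivity)] at hmean
  have h := nEig1_mul_setIntegral_sq_le (u := fun x => u (κ • x)) (by fun_prop) hmean
  rw [setIntegral_norm_fderiv_comp_smul_sq Ω u hκ] at h
  rw [← sq_mul_setIntegral_comp_smul Ω (fun x => u x ^ 2) hκ]
  convert h using 1
  field_simp

theorem nEig1_le_nEig1_smul (ho : IsOpen Ω) (hb : Bornology.IsBounded Ω) (hne : Ω.Nonempty)
    (hκ : 0 < κ) (hκ1 : κ ≤ 1) : nEig1 Ω ≤ nEig1 (κ • Ω) :=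
  (nEig1_le_sq_mul_nEig1_smul ho hb hne hκ).trans
    (mul_le_of_le_one_left (nEig1_nonneg _) (pow_le_one₀ hκ.le hκ1))

theorem nEig1_mul_variance_le (hb : Bornology.IsBounded Ω) (hu : ContDiff ℝ ∞ u) :
    nEig1 Ω * ((∫ x in Ω, u x ^ 2) - (∫ x in Ω, u x) ^ 2 / volume.real Ω) ≤
      ∫ x in Ω, ‖fderiv ℝ u x‖ ^ 2 := by
  have : IsFiniteMeasure (volume.restrict Ω) := isFiniteMeasure_restrict.2 hb.measure_lt_top.ne
  have h_int : ∀ {g : E2 → ℝ}, Continuous g → IntegrableOn g Ω := integrableOn_of_isBounded hb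
  have hcont := hu.continuous
  set m := ⨍ x in Ω, u x with hm
  have hvariance : ∫ x in Ω, (u x - m) ^ 2 =
      (∫ x in Ω, u x ^ 2) - (∫ x in Ω, u x) ^ 2 / volume.real Ω := by
    simp only [sub_sq]
    rw [integral_add (h_int (by fun_prop)) (h_int (by fun_prop)),
      integral_sub (h_int (by fun_prop)) (h_int (by fun_prop)), integral_mul_const,
      integral_const_mul, setIntegral_const, hm, setAverage_eq, smul_eq_mul, smul_eq_mul]
    rcases eq_or_ne (volume.real Ω) 0 with h0 | h0
    · simp [h0]
    · field_simp; ring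
  have h := nEig1_mul_setIntegral_sq_le (u := fun x => u x - m) (by fun_prop)
    (integral_sub_average (volume.restrict Ω) u)
  simpa only [hvariance, fderiv_sub_const] using h

theorem sq_setIntegral_le (hb : Bornology.IsBounded Ω) (hu : Continuous u) :
    (∫ x in Ω, u x) ^ 2 ≤ volume.real Ω * ∫ x in Ω, u x ^ 2 := by
  have hmem : MemLp u 2 (volume.restrict Ω) :=
    (memLp_two_iff_integrable_sq hu.aestronglyMeasurable).2
      (integrableOn_of_isBounded hb (by fun_prop))
  calc (∫ x in Ω, u x) ^ 2 ≤ (∫ x in Ω, |u x|) ^ 2 :=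
        sq_le_sq' (neg_le_of_abs_le abs_integral_le_integral_abs)
          (le_of_abs_le abs_integral_le_integral_abs)
    _ ≤ volume.real Ω * ∫ x in Ω, u x ^ 2 := sq_setIntegral_abs_le hb.measure_lt_top.ne hmem

theorem hasDerivAt_setIntegral_of_continuous (hb : Bornology.IsBounded Ω) (hm : MeasurableSet Ω)
    {F F' : ℝ → E2 → ℝ} (hF : ∀ s, Continuous (F s))
    (hF' : Continuous fun p : ℝ × E2 => F' p.1 p.2)
    (hd : ∀ s x, HasDerivAt (fun t => F t x) (F' s x) s) (s : ℝ) :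
    HasDerivAt (fun t => ∫ x in Ω, F t x) (∫ x in Ω, F' s x) s := by
  obtain ⟨R, hR⟩ := hb.subset_closedBall 0
  obtain ⟨C, hC⟩ := ((isCompact_Icc (a := s - 1) (b := s + 1)).prod
    (isCompact_closedBall (0 : E2) R)).exists_bound_of_continuousOn hF'.continuousOn
  refine (hasDerivAt_integral_of_dominated_loc_of_deriv_le (F := F) (F' := F')
    (s := Icc (s - 1) (s + 1)) (bound := fun _ => C) (Icc_mem_nhds (by linarith) (by linarith))
    (Eventually.of_forall fun t => (hF t).aestronglyMeasurable)
    (integrableOn_of_isBounded hb (hF s))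
    (Continuous.aestronglyMeasurable (by fun_prop)) ?_
    (integrableOn_of_isBounded hb continuous_const)
    (Eventually.of_forall fun x t _ => hd t x)).2
  filter_upwards [ae_restrict_mem hm] with x hx t ht using hC (t, x) ⟨ht, hR hx⟩

theorem hasDerivAt_sq_mul_comp_smul_sq (hu : ContDiff ℝ 1 u) (s : ℝ) (x : E2) :
    HasDerivAt (fun t : ℝ => t ^ 2 * u (t • x) ^ 2)
      (2 * s * u (s • x) ^ 2 + s ^ 2 * (2 * u (s • x) * fderiv ℝ u (s • x) x)) s := by
  have hline : HasDerivAt (fun t : ℝ => t • x) x s := by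
    simpa using (hasDerivAt_id s).smul_const x
  have hcomp := (hu.differentiable one_ne_zero (s • x)).hasFDerivAt.comp_hasDerivAt s hline
  refine ((hasDerivAt_pow 2 s).fun_mul (hcomp.fun_pow 2)).congr_deriv ?_
  simp

theorem two_mul_mul_apply_le {E : Type*} [SeminormedAddCommGroup E] [NormedSpace ℝ E]
    (L : E →L[ℝ] ℝ) {x : E} {R : ℝ} (hx : ‖x‖ ≤ R) (v : ℝ) :
    2 * v * L x ≤ R * (v ^ 2 + ‖L‖ ^ 2) :=
  calc 2 * v * L x ≤ |2 * v * L x| := le_abs_self _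
    _ = 2 * |v| * ‖L x‖ := by rw [abs_mul, abs_mul, abs_two, Real.norm_eq_abs]
    _ ≤ 2 * |v| * (‖L‖ * R) := by gcongr; exact L.le_opNorm_of_le hx
    _ = R * (2 * |v| * ‖L‖) := by ring
    _ ≤ R * (|v| ^ 2 + ‖L‖ ^ 2) :=
      mul_le_mul_of_nonneg_left (two_mul_le_add_sq _ _) ((norm_nonneg x).trans hx)
    _ = R * (v ^ 2 + ‖L‖ ^ 2) := by rw [sq_abs]

theorem nEig1_mul_le_of_smul_subset_of_subset (hb : Bornology.IsBounded Ω) (hu : ContDiff ℝ ∞ u)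
    (hmean : ∫ x in Ω, u x = 0) {A : Set E2} (hA : MeasurableSet A) (hAΩ : A ⊆ Ω)
    {σ : ℝ} (hσ2 : 1 / 2 ≤ σ ^ 2) (hσA : σ • Ω ⊆ A) :
    nEig1 A * ((∫ x in Ω, u x ^ 2) -
        3 * ((∫ x in Ω, u x ^ 2) - ∫ x in σ • Ω, u x ^ 2)) ≤
      ∫ x in Ω, ‖fderiv ℝ u x‖ ^ 2 := by
  have hcont := hu.continuous
  have h_int : ∀ {g : E2 → ℝ}, Continuous g → IntegrableOn g Ω :=
    integrableOn_of_isBounded hb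
  set D := (∫ x in Ω, u x ^ 2) - ∫ x in A, u x ^ 2
  have hvolA : σ ^ 2 * volume.real Ω ≤ volume.real A :=
    sq_mul_volume_real_le_of_smul_subset (hb.subset hAΩ) hσA
  have hmassA : ∫ x in σ • Ω, u x ^ 2 ≤ ∫ x in A, u x ^ 2 :=
    setIntegral_mono_set ((h_int (by fun_prop)).mono_set hAΩ)
      (Eventually.of_forall fun x => sq_nonneg _) hσA.eventuallyLE
  have hD_nonneg : 0 ≤ D := sub_nonneg.2 (setIntegral_mono_set (h_int (by fun_prop))
    (Eventually.of_forall fun x => sq_nonneg _) hAΩ.eventuallyLE)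
  have hmeanA : (∫ x in A, u x) ^ 2 ≤ volume.real Ω * D := by
    have hcs := sq_setIntegral_le (hb.subset (sdiff_subset (t := A))) hcont
    rw [setIntegral_sdiff hA (h_int hcont) hAΩ, hmean, zero_sub, neg_sq,
      setIntegral_sdiff hA (h_int (by fun_prop)) hAΩ] at hcs
    exact hcs.trans (mul_le_mul_of_nonneg_right
      (measureReal_mono sdiff_subset hb.measure_lt_top.ne) hD_nonneg)
  have hmeanA' : (∫ x in A, u x) ^ 2 / volume.real A ≤ 2 * D := by
    refine div_le_of_le_mul₀ measureReal_nonneg (by positivity) ?_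
    nlinarith [mul_le_mul_of_nonneg_right hvolA hD_nonneg,
      mul_le_mul_of_nonneg_right hσ2
        (mul_nonneg (measureReal_nonneg (s := Ω) (μ := volume)) hD_nonneg)]
  calc _ ≤ nEig1 A * ((∫ x in A, u x ^ 2) - (∫ x in A, u x) ^ 2 / volume.real A) :=
        mul_le_mul_of_nonneg_left (by linarith) (nEig1_nonneg A)
    _ ≤ ∫ x in A, ‖fderiv ℝ u x‖ ^ 2 := nEig1_mul_variance_le (hb.subset hAΩ) hu
    _ ≤ ∫ x in Ω, ‖fderiv ℝ u x‖ ^ 2 := setIntegral_mono_set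
      (h_int ((hu.continuous_fderiv (by simp)).norm.pow 2))
      (Eventually.of_forall fun x => sq_nonneg _) hAΩ.eventuallyLE

end Dilation

section StarDomain

open scoped Pointwise

/-- A nonempty open set which is star-shaped about the origin and contained in the closed ball of
radius `R`. Within this class the Neumann eigenvalue depends continuously on the domain. -/
structure IsStarDomain (Ω : Set E2) (R : ℝ) : Prop where
  isOpen : IsOpen Ω
  nonempty : Ω.Nonempty
  starConvex : StarConvex ℝ 0 Ω
  subset_closedBall : Ω ⊆ Metric.closedBall 0 R

/-- Closeness of two sets in the multiplicative sense: each contains the other one shrunk by the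
factor `κ ∈ (0, 1]`. -/
structure AreDilationClose (κ : ℝ) (Ω Ω' : Set E2) : Prop where
  pos : 0 < κ
  le_one : κ ≤ 1
  smul_subset_right : κ • Ω ⊆ Ω'
  smul_subset_left : κ • Ω' ⊆ Ω

theorem AreDilationClose.symm {κ : ℝ} {Ω Ω' : Set E2} (h : AreDilationClose κ Ω Ω') :
    AreDilationClose κ Ω' Ω :=
  ⟨h.pos, h.le_one, h.smul_subset_left, h.smul_subset_right⟩

variable {Ω Ω' : Set E2} {R σ κ : ℝ} {u : E2 → ℝ}

namespace IsStarDomain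

theorem isBounded (h : IsStarDomain Ω R) : Bornology.IsBounded Ω :=
  Metric.isBounded_closedBall.subset h.subset_closedBall

theorem radius_nonneg (h : IsStarDomain Ω R) : 0 ≤ R := by
  obtain ⟨x, hx⟩ := h.nonempty
  exact (norm_nonneg x).trans (mem_closedBall_zero_iff.1 (h.subset_closedBall hx))

theorem smul_subset (h : IsStarDomain Ω R) (hσ : 0 ≤ σ) (hσ1 : σ ≤ 1) : σ • Ω ⊆ Ω := by
  rintro _ ⟨x, hx, rfl⟩
  exact starConvex_zero_iff.1 h.starConvex hx hσ hσ1

theorem sq_mul_setIntegral_comp_smul_le (h : IsStarDomain Ω R) (hσ : 0 < σ) (hσ1 : σ ≤ 1)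
    {g : E2 → ℝ} (hg : Continuous g) (hpos : ∀ x, 0 ≤ g x) :
    σ ^ 2 * ∫ x in Ω, g (σ • x) ≤ ∫ x in Ω, g x := by
  rw [sq_mul_setIntegral_comp_smul Ω g hσ]
  exact setIntegral_mono_set (integrableOn_of_isBounded h.isBounded hg)
    (Eventually.of_forall hpos) (h.smul_subset hσ.le hσ1).eventuallyLE

theorem setIntegral_deriv_dilation_le (h : IsStarDomain Ω R) (hu : ContDiff ℝ 1 u)
    (hσ : 1 / 2 ≤ σ) (hσ1 : σ ≤ 1) :
    ∫ x in Ω, (2 * σ * u (σ • x) ^ 2 + σ ^ 2 * (2 * u (σ • x) * fderiv ℝ u (σ • x) x)) ≤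
      (4 + R) * ((∫ x in Ω, u x ^ 2) + ∫ x in Ω, ‖fderiv ℝ u x‖ ^ 2) := by
  have hcont := hu.continuous
  have : Continuous (fderiv ℝ u) := hu.continuous_fderiv one_ne_zero
  have h_int : ∀ {g : E2 → ℝ}, Continuous g → IntegrableOn g Ω :=
    integrableOn_of_isBounded h.isBounded
  have hR := h.radius_nonneg
  have hpointwise : ∀ x ∈ Ω,
      2 * σ * u (σ • x) ^ 2 + σ ^ 2 * (2 * u (σ • x) * fderiv ℝ u (σ • x) x) ≤
        (4 + R) * (σ ^ 2 * (u (σ • x) ^ 2 + ‖fderiv ℝ u (σ • x)‖ ^ 2)) := fun x hx => by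
    have hradial := mul_le_mul_of_nonneg_left (two_mul_mul_apply_le (fderiv ℝ u (σ • x))
      (mem_closedBall_zero_iff.1 (h.subset_closedBall hx)) (u (σ • x))) (sq_nonneg σ)
    have hσσ : 2 * σ ≤ 4 * σ ^ 2 := by nlinarith
    nlinarith [mul_le_mul_of_nonneg_right hσσ (sq_nonneg (u (σ • x))),
      mul_nonneg (sq_nonneg σ) (sq_nonneg ‖fderiv ℝ u (σ • x)‖)]
  refine (setIntegral_mono_on (h_int (by fun_prop)) (h_int (by fun_prop)) h.isOpen.measurableSet
    hpointwise).trans ?_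
  rw [integral_const_mul, integral_const_mul, integral_add (h_int (by fun_prop))
    (h_int (by fun_prop)), mul_add (σ ^ 2)]
  gcongr
  · exact h.sq_mul_setIntegral_comp_smul_le (g := fun x => u x ^ 2) (by linarith) hσ1
      (by fun_prop) fun x => sq_nonneg _
  · exact h.sq_mul_setIntegral_comp_smul_le (g := fun x => ‖fderiv ℝ u x‖ ^ 2) (by linarith) hσ1
      (by fun_prop) fun x => sq_nonneg _

theorem setIntegral_sq_sub_setIntegral_smul_le (h : IsStarDomain Ω R) (hu : ContDiff ℝ 1 u)
    (hσ : 1 / 2 ≤ σ) (hσ1 : σ ≤ 1) :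
    (∫ x in Ω, u x ^ 2) - (∫ x in σ • Ω, u x ^ 2) ≤
      (4 + R) * (1 - σ) * ((∫ x in Ω, u x ^ 2) + ∫ x in Ω, ‖fderiv ℝ u x‖ ^ 2) := by
  have hcont := hu.continuous
  set massOfDilate : ℝ → ℝ := fun s => ∫ x in Ω, s ^ 2 * u (s • x) ^ 2
  have hmass : ∀ s, 0 < s → massOfDilate s = ∫ x in s • Ω, u x ^ 2 := fun s hs => by
    rw [← sq_mul_setIntegral_comp_smul Ω (fun x => u x ^ 2) hs, ← integral_const_mul]
  have hderiv := hasDerivAt_setIntegral_of_continuous h.isBounded h.isOpen.measurableSet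
    (F := fun s x => s ^ 2 * u (s • x) ^ 2) (fun s => by fun_prop) (by fun_prop)
    (hasDerivAt_sq_mul_comp_smul_sq hu)
  have hmeanValue := (convex_Icc (1 / 2 : ℝ) 1).image_sub_le_mul_sub_of_deriv_le
    (f := massOfDilate) (fun s _ => (hderiv s).continuousAt.continuousWithinAt)
    (fun s _ => (hderiv s).differentiableAt.differentiableWithinAt)
    (fun s hs => (hderiv s).deriv.trans_le
      (h.setIntegral_deriv_dilation_le hu (interior_subset hs).1 (interior_subset hs).2))
    σ ⟨hσ, hσ1⟩ 1 ⟨by norm_num, le_rfl⟩ hσ1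
  rw [hmass σ (by linarith), hmass 1 one_pos, one_smul] at hmeanValue
  linarith

theorem nEig1_mul_one_sub_le (hΩ : IsStarDomain Ω R) (hΩ' : IsStarDomain Ω' R)
    (hclose : AreDilationClose κ Ω Ω') (hκ4 : 1 / 2 ≤ κ ^ 4) :
    nEig1 Ω * (1 - 3 * (4 + R) * (1 - κ ^ 2)) ≤
      nEig1 Ω' * (1 + 3 * (4 + R) * (1 - κ ^ 2) * nEig1 Ω) := by
  obtain ⟨hκ, hκ1, hκΩ, hκΩ'⟩ := hclose
  have hκ2 : κ ^ 2 ≤ 1 := pow_le_one₀ hκ.le hκ1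
  have hκ2' : 1 / 2 ≤ κ ^ 2 := hκ4.trans (pow_le_pow_of_le_one hκ.le hκ1 (by norm_num))
  have hμ := nEig1_nonneg Ω
  have hR := hΩ.radius_nonneg
  have hpos : 0 < 1 + 3 * (4 + R) * (1 - κ ^ 2) * nEig1 Ω := by
    have : 0 ≤ 1 - κ ^ 2 := by linarith
    positivity
  have hκκ : κ ^ 2 • Ω' ⊆ κ • Ω := by
    rw [sq, ← smul_smul]; exact smul_set_mono hκΩ'
  rw [← div_le_iff₀ hpos]
  refine le_nEig1 hΩ'.isOpen hΩ'.isBounded hΩ'.nonempty fun u hu hmean => ?_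
  rw [div_mul_eq_mul_div, div_le_iff₀ hpos]
  have hshell := hΩ'.setIntegral_sq_sub_setIntegral_smul_le (hu.of_le (by simp)) hκ2' hκ2
  have hκΩ_eig := nEig1_mul_le_of_smul_subset_of_subset hΩ'.isBounded hu hmean
    (hΩ.isOpen.smul₀ hκ.ne').measurableSet hκΩ (by rwa [← pow_mul]) hκκ
  have hmono := nEig1_le_nEig1_smul hΩ.isOpen hΩ.isBounded hΩ.nonempty hκ hκ1
  have henergy : 0 ≤ ∫ x in Ω', ‖fderiv ℝ u x‖ ^ 2 := by positivity
  set V := ∫ x in Ω', u x ^ 2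
  set N := ∫ x in Ω', ‖fderiv ℝ u x‖ ^ 2
  set D := V - ∫ x in κ ^ 2 • Ω', u x ^ 2
  have hrayleigh : nEig1 Ω * (V - 3 * D) ≤ N := by
    rcases le_total 0 (V - 3 * D) with hsign | hsign
    · exact (mul_le_mul_of_nonneg_right hmono hsign).trans hκΩ_eig
    · exact (mul_nonpos_of_nonneg_of_nonpos hμ hsign).trans henergy
  linarith [mul_le_mul_of_nonneg_left hshell hμ]

end IsStarDomain

end StarDomain

section Continuity

theorem tendsto_of_sq_mul_le_of_sq_mul_le {ι : Type*} {l : Filter ι} {κ f : ι → ℝ} {a : ℝ}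
    (hκ : Tendsto κ l (𝓝 1)) (hlower : ∀ᶠ t in l, κ t ^ 2 * a ≤ f t)
    (hupper : ∀ᶠ t in l, κ t ^ 2 * f t ≤ a) : Tendsto f l (𝓝 a) := by
  have hκ2 : Tendsto (fun t => κ t ^ 2) l (𝓝 1) := by simpa using hκ.pow 2
  refine tendsto_of_tendsto_of_tendsto_of_le_of_le' (by simpa using hκ2.mul_const a)
    (by simpa using (tendsto_const_nhds (x := a)).div hκ2 one_ne_zero) hlower ?_
  filter_upwards [hupper, hκ2.eventually_const_lt one_pos] with t ht hpos
  rwa [Pi.div_apply, le_div_iff₀' hpos]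

theorem tendsto_of_mul_one_sub_le {ι : Type*} {l : Filter ι} {ε μ : ι → ℝ} {μ₀ : ℝ}
    (hε : Tendsto ε l (𝓝 0)) (hlower : ∀ᶠ t in l, μ₀ * (1 - ε t) ≤ μ t * (1 + ε t * μ₀))
    (hupper : ∀ᶠ t in l, μ t * (1 - ε t) ≤ μ₀ * (1 + ε t * μ t)) : Tendsto μ l (𝓝 μ₀) := by
  have hlow_den : Tendsto (fun t => 1 + ε t * μ₀) l (𝓝 1) := by
    simpa using (hε.mul_const μ₀).const_add 1
  have hup_den : Tendsto (fun t => 1 - ε t - ε t * μ₀) l (𝓝 1) := by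
    simpa using (hε.const_sub 1).sub (hε.mul_const μ₀)
  have hlow_num : Tendsto (fun t => μ₀ * (1 - ε t)) l (𝓝 μ₀) := by
    simpa using (hε.const_sub 1).const_mul μ₀
  refine tendsto_of_tendsto_of_tendsto_of_le_of_le'
    (by simpa using hlow_num.div hlow_den one_ne_zero)
    (by simpa using (tendsto_const_nhds (x := μ₀)).div hup_den one_ne_zero) ?_ ?_
  · filter_upwards [hlower, hlow_den.eventually_const_lt one_pos] with t ht hpos
    rwa [Pi.div_apply, div_le_iff₀ hpos]
  · filter_upwards [hupper, hup_den.eventually_const_lt one_pos] with t ht hpos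
    rw [Pi.div_apply, le_div_iff₀ hpos]
    linarith

variable {ι : Type*} {l : Filter ι} {R : ℝ} {Ω₀ : Set E2} {Ω : ι → Set E2} {κ : ι → ℝ}

theorem tendsto_volume_real_of_areDilationClose (hΩ₀ : Bornology.IsBounded Ω₀)
    (hΩ : ∀ᶠ t in l, Bornology.IsBounded (Ω t)) (hκ : Tendsto κ l (𝓝 1))
    (hclose : ∀ᶠ t in l, AreDilationClose (κ t) (Ω t) Ω₀) :
    Tendsto (fun t => volume.real (Ω t)) l (𝓝 (volume.real Ω₀)) := by
  refine tendsto_of_sq_mul_le_of_sq_mul_le hκ ?_ ?_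
  · filter_upwards [hΩ, hclose] with t ht hc
    exact sq_mul_volume_real_le_of_smul_subset ht hc.smul_subset_left
  · filter_upwards [hclose] with t hc
    exact sq_mul_volume_real_le_of_smul_subset hΩ₀ hc.smul_subset_right

theorem tendsto_dEig1_of_areDilationClose (ho₀ : IsOpen Ω₀) (hne₀ : Ω₀.Nonempty)
    (ho : ∀ᶠ t in l, IsOpen (Ω t)) (hne : ∀ᶠ t in l, (Ω t).Nonempty) (hκ : Tendsto κ l (𝓝 1))
    (hclose : ∀ᶠ t in l, AreDilationClose (κ t) (Ω t) Ω₀) :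
    Tendsto (fun t => dEig1 (Ω t)) l (𝓝 (dEig1 Ω₀)) := by
  refine tendsto_of_sq_mul_le_of_sq_mul_le hκ ?_ ?_
  · filter_upwards [ho, hne, hclose] with t ht hnt hc
    exact sq_mul_dEig1_le_of_smul_subset ht hnt hc.pos hc.smul_subset_right
  · filter_upwards [hclose] with t hc
    exact sq_mul_dEig1_le_of_smul_subset ho₀ hne₀ hc.pos hc.smul_subset_left

theorem tendsto_nEig1_of_areDilationClose (hΩ₀ : IsStarDomain Ω₀ R)
    (hΩ : ∀ᶠ t in l, IsStarDomain (Ω t) R) (hκ : Tendsto κ l (𝓝 1))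
    (hclose : ∀ᶠ t in l, AreDilationClose (κ t) (Ω t) Ω₀) :
    Tendsto (fun t => nEig1 (Ω t)) l (𝓝 (nEig1 Ω₀)) := by
  have hκ4 : ∀ᶠ t in l, 1 / 2 ≤ κ t ^ 4 := by
    have : Tendsto (fun t => κ t ^ 4) l (𝓝 1) := by simpa using hκ.pow 4
    exact this.eventually_const_le (by norm_num)
  have hε : Tendsto (fun t => 3 * (4 + R) * (1 - κ t ^ 2)) l (𝓝 0) := by
    simpa using ((hκ.pow 2).const_sub 1).const_mul (3 * (4 + R))
  refine tendsto_of_mul_one_sub_le hε ?_ ?_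
  · filter_upwards [hΩ, hclose, hκ4] with t ht hc h4
    exact hΩ₀.nEig1_mul_one_sub_le ht hc.symm h4
  · filter_upwards [hΩ, hclose, hκ4] with t ht hc h4
    exact ht.nEig1_mul_one_sub_le hΩ₀ hc h4

end Continuity

/-! ### The cone property of unions of convex sets -/

section ConeProperty

theorem norm_sub_le_of_cos_le_inner {F : Type*} [NormedAddCommGroup F] [InnerProductSpace ℝ F]
    {e ξ : F} {ε : ℝ} (he : ‖e‖ = 1) (hξ : ‖ξ‖ = 1) (hε : 0 ≤ ε) (h : cos ε ≤ ⟪e, ξ⟫) :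
    ‖e - ξ‖ ≤ ε := by
  refine (pow_le_pow_iff_left₀ (norm_nonneg _) hε two_ne_zero).1 ?_
  rw [norm_sub_sq_real, he, hξ]
  linarith [one_sub_sq_div_two_le_cos (x := ε)]

theorem norm_add_norm_smul_le {F : Type*} [NormedAddCommGroup F] [NormedSpace ℝ F] {x : F}
    (hx : x ≠ 0) (y e : F) :
    ‖y + ‖y‖ • e‖ ≤ 2 * ‖y - x‖ + ‖y‖ * ‖e - -(‖x‖⁻¹ • x)‖ := by
  set ξ := -(‖x‖⁻¹ • x) with hξ
  have hξ_norm : ‖ξ‖ = 1 := (norm_neg _).trans (NormedSpace.norm_normalize hx)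
  have hxξ : y - x = y + ‖x‖ • ξ := by
    rw [hξ, smul_neg, smul_inv_smul₀ (norm_ne_zero_iff.2 hx), sub_eq_add_neg]
  calc ‖y + ‖y‖ • e‖ = ‖(y - x) + (‖y‖ - ‖x‖) • ξ + ‖y‖ • (e - ξ)‖ := by
        rw [hxξ]; congr 1; module
    _ ≤ ‖y - x‖ + ‖(‖y‖ - ‖x‖) • ξ‖ + ‖‖y‖ • (e - ξ)‖ := norm_add₃_le
    _ = ‖y - x‖ + |‖y‖ - ‖x‖| + ‖y‖ * ‖e - ξ‖ := by
        rw [norm_smul, norm_smul, hξ_norm, mul_one, norm_norm, Real.norm_eq_abs]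
    _ ≤ 2 * ‖y - x‖ + ‖y‖ * ‖e - ξ‖ := by linarith [abs_norm_sub_norm_le y x]

variable {K K₁ K₂ : Set E2} {r R : ℝ}

theorem mem_of_mem_coneSet_of_ball_subset (hK : Convex ℝ K) (ho : IsOpen K) (hr : 0 < r)
    (hball : Metric.ball 0 r ⊆ K) {x y z : E2} (hx : r ≤ ‖x‖) (hyK : y ∈ closure K)
    (hyR : ‖y‖ ≤ R) (hyx : ‖y - x‖ < r / (R + 3))
    (hz : z ∈ coneSet y (-(‖x‖⁻¹ • x)) (r / (R + 3))) : z ∈ K := by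
  have hR : 0 ≤ R := (norm_nonneg y).trans hyR
  obtain ⟨hcos, hz_pos, hz_lt⟩ := hz
  set ε := r / (R + 3)
  have hε_pos : 0 < ε := by positivity
  have hεr : ε * (R + 3) = r := div_mul_cancel₀ r (by positivity)
  have hx0 : x ≠ 0 := norm_pos_iff.1 (hr.trans_le hx)
  have hv0 : z - y ≠ 0 := norm_pos_iff.1 hz_pos
  have hε_lt : ε < ‖y‖ := by nlinarith [norm_sub_norm_le x y, norm_sub_rev x y]
  have hy_pos : 0 < ‖y‖ := hε_pos.trans hε_lt
  set e := ‖z - y‖⁻¹ • (z - y) with he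
  have hdirection : ‖e - -(‖x‖⁻¹ • x)‖ ≤ ε := by
    refine norm_sub_le_of_cos_le_inner (NormedSpace.norm_normalize hv0)
      ((norm_neg _).trans (NormedSpace.norm_normalize hx0)) hε_pos.le ?_
    rw [he, real_inner_smul_left, inv_mul_eq_div, le_div_iff₀ hz_pos]
    exact hcos
  have hfar : y + ‖y‖ • e ∈ interior K := by
    rw [ho.interior_eq]
    refine hball (mem_ball_zero_iff.2 ((norm_add_norm_smul_le hx0 y e).trans_lt ?_))
    nlinarith [mul_le_mul hyR hdirection (norm_nonneg _) hR]
  have hmem := hK.add_smul_mem_interior' hyK hfar (t := ‖z - y‖ / ‖y‖)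
    ⟨by positivity, (div_le_one hy_pos).2 (hz_lt.trans hε_lt).le⟩
  rwa [smul_smul, div_mul_cancel₀ _ hy_pos.ne', he, smul_inv_smul₀ hz_pos.ne',
    add_sub_cancel, ho.interior_eq] at hmem

theorem coneProperty_union (hK₁ : Convex ℝ K₁) (hK₂ : Convex ℝ K₂) (ho₁ : IsOpen K₁)
    (ho₂ : IsOpen K₂) (hr : 0 < r) (hball₁ : Metric.ball 0 r ⊆ K₁)
    (hball₂ : Metric.ball 0 r ⊆ K₂) (hR : K₁ ∪ K₂ ⊆ Metric.closedBall 0 R) :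
    ConeProperty (K₁ ∪ K₂) (r / (R + 3)) := by
  intro x hx
  have hrx : r ≤ ‖x‖ := by
    by_contra hlt
    rw [(ho₁.union ho₂).frontier_eq] at hx
    exact hx.2 (Or.inl (hball₁ (by simpa using hlt)))
  refine ⟨-(‖x‖⁻¹ • x), ?_, ?_⟩
  · exact (norm_neg _).trans (NormedSpace.norm_normalize (norm_pos_iff.1 (hr.trans_le hrx)))
  · rintro y ⟨hy, hyx⟩ z hz
    have hyR : ‖y‖ ≤ R :=
      mem_closedBall_zero_iff.1 (closure_minimal hR Metric.isClosed_closedBall hy)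
    rw [Metric.mem_ball, dist_eq_norm] at hyx
    rw [closure_union] at hy
    exact hy.imp (mem_of_mem_coneSet_of_ball_subset hK₁ ho₁ hr hball₁ hrx · hyR hyx hz)
      (mem_of_mem_coneSet_of_ball_subset hK₂ ho₂ hr hball₂ hrx · hyR hyx hz)

end ConeProperty

/-! ### The disc with a horizontal strip -/

/-- The open coordinate rectangle `(a, b) × (c, d)`. -/
def openBox (a b c d : ℝ) : Set E2 := {x | x 0 ∈ Ioo a b ∧ x 1 ∈ Ioo c d}

theorem isOpen_openBox (a b c d : ℝ) : IsOpen (openBox a b c d) :=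
  (isOpen_Ioo.preimage (by fun_prop : Continuous fun x : E2 => x 0)).inter
    (isOpen_Ioo.preimage (by fun_prop : Continuous fun x : E2 => x 1))

theorem convex_openBox (a b c d : ℝ) : Convex ℝ (openBox a b c d) :=
  ((convex_Ioo a b).linear_preimage (EuclideanSpace.projₗ (𝕜 := ℝ) (0 : Fin 2))).inter
    ((convex_Ioo c d).linear_preimage (EuclideanSpace.projₗ (𝕜 := ℝ) (1 : Fin 2)))

theorem volume_real_openBox {a b c d : ℝ} (hab : a ≤ b) (hcd : c ≤ d) :
    volume.real (openBox a b c d) = (b - a) * (d - c) := by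
  have hpreimage : (WithLp.toLp 2 : (Fin 2 → ℝ) → E2) ⁻¹' openBox a b c d =
      Set.pi univ fun i => Ioo (![a, c] i) (![b, d] i) := by
    ext y
    simp [openBox, Set.mem_pi, Fin.forall_fin_two]
  rw [← (PiLp.volume_preserving_toLp (Fin 2)).measureReal_preimage
    (isOpen_openBox a b c d).nullMeasurableSet, hpreimage, Measure.real, Real.volume_pi_Ioo]
  simp [Fin.prod_univ_two, ENNReal.toReal_mul, hab, hcd]

theorem mem_openBox_neg_iff {M w : ℝ} {x : E2} :
    x ∈ openBox (-M) M (-w) w ↔ |x 0| < M ∧ |x 1| < w := by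
  simp [openBox, abs_lt]

theorem abs_apply_le_norm (x : E2) (i : Fin 2) : |x i| ≤ ‖x‖ := by
  simpa using PiLp.norm_apply_le x i

theorem norm_le_abs_add_abs (x : E2) : ‖x‖ ≤ |x 0| + |x 1| := by
  rw [EuclideanSpace.norm_eq, Fin.sum_univ_two, Real.norm_eq_abs, Real.norm_eq_abs,
    Real.sqrt_le_iff]
  exact ⟨by positivity, by nlinarith [mul_nonneg (abs_nonneg (x 0)) (abs_nonneg (x 1))]⟩

/-- The unit disc together with the strip `(-M, M) × (-w, w)`: for `M` large and `w` small this is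
the disc with two long thin horizontal tentacles. -/
def discWithStrip (M w : ℝ) : Set E2 := unitDisc ∪ openBox (-M) M (-w) w

theorem nonempty_unitDisc : unitDisc.Nonempty := ⟨0, by simp [unitDisc]⟩

theorem mem_unitDisc_iff {x : E2} : x ∈ unitDisc ↔ ‖x‖ < 1 := mem_ball_zero_iff

@[simp] theorem discWithStrip_zero (M : ℝ) : discWithStrip M 0 = unitDisc := by
  simp [discWithStrip, openBox]

section DiscWithStrip

open scoped Pointwise

variable {M w M' w' κ R : ℝ}

theorem unitDisc_subset_discWithStrip (M w : ℝ) : unitDisc ⊆ discWithStrip M w :=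
  subset_union_left

theorem openBox_subset_discWithStrip {a : ℝ} (ha : -M ≤ a) :
    openBox a M (-w) w ⊆ discWithStrip M w :=
  fun _ ⟨h0, h1⟩ => Or.inr ⟨⟨ha.trans_lt h0.1, h0.2⟩, h1⟩

theorem isOpen_discWithStrip (M w : ℝ) : IsOpen (discWithStrip M w) :=
  Metric.isOpen_ball.union (isOpen_openBox _ _ _ _)

theorem neg_mem_discWithStrip_iff (x : E2) : x ∈ discWithStrip M w ↔ -x ∈ discWithStrip M w := by
  simp only [discWithStrip, mem_union, mem_unitDisc_iff, mem_openBox_neg_iff, norm_neg,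
    PiLp.neg_apply, abs_neg]

theorem norm_lt_of_mem_discWithStrip (hM : 1 ≤ M) (hw : 0 ≤ w) {x : E2}
    (hx : x ∈ discWithStrip M w) : ‖x‖ < M + w := by
  rcases hx with hx | hx
  · linarith [mem_unitDisc_iff.1 hx]
  · linarith [norm_le_abs_add_abs x, (mem_openBox_neg_iff.1 hx).1, (mem_openBox_neg_iff.1 hx).2]

theorem smul_discWithStrip_subset (hκ : 0 < κ) (hκ1 : κ ≤ 1) (hM : κ * M ≤ M')
    (hw : κ * w ≤ w') : κ • discWithStrip M w ⊆ discWithStrip M' w' := by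
  rintro _ ⟨x, hx | hx, rfl⟩
  · left
    rw [mem_unitDisc_iff] at hx
    rw [mem_unitDisc_iff, norm_smul, Real.norm_of_nonneg hκ.le]
    exact mul_lt_one_of_nonneg_of_lt_one_right hκ1 (norm_nonneg x) hx
  · right
    rw [mem_openBox_neg_iff] at hx ⊢
    simp only [PiLp.smul_apply, smul_eq_mul, abs_mul, abs_of_pos hκ]
    exact ⟨(mul_lt_mul_of_pos_left hx.1 hκ).trans_le hM,
      (mul_lt_mul_of_pos_left hx.2 hκ).trans_le hw⟩

theorem starConvex_discWithStrip (hM : 1 ≤ M) : StarConvex ℝ 0 (discWithStrip M w) := by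
  rcases le_or_gt w 0 with hw | hw
  · have hempty : openBox (-M) M (-w) w = ∅ := by
      ext x
      simp [mem_openBox_neg_iff, (hw.trans (abs_nonneg (x 1))).not_gt]
    rw [discWithStrip, hempty, union_empty]
    exact (convex_ball 0 1).starConvex (by simp)
  · exact ((convex_ball 0 1).starConvex (by simp)).union ((convex_openBox _ _ _ _).starConvex
      (by simp only [mem_openBox_neg_iff, PiLp.zero_apply, abs_zero]; exact ⟨by linarith, hw⟩))

theorem isStarDomain_discWithStrip (hM : 1 ≤ M) (hw : 0 ≤ w) (hR : M + w ≤ R) :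
    IsStarDomain (discWithStrip M w) R where
  isOpen := isOpen_discWithStrip M w
  nonempty := nonempty_unitDisc.mono (unitDisc_subset_discWithStrip M w)
  starConvex := starConvex_discWithStrip hM
  subset_closedBall _ hx :=
    mem_closedBall_zero_iff.2 ((norm_lt_of_mem_discWithStrip hM hw hx).le.trans hR)

theorem isBounded_discWithStrip (hM : 1 ≤ M) (hw : 0 ≤ w) :
    Bornology.IsBounded (discWithStrip M w) :=
  (isStarDomain_discWithStrip hM hw le_rfl).isBounded

theorem exists_coneProperty_discWithStrip (hM : 1 ≤ M) (hw : 0 ≤ w) (hw1 : w ≤ 1) :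
    ∃ ε > 0, ConeProperty (discWithStrip M w) ε := by
  rcases hw.eq_or_lt with rfl | hw0
  · refine ⟨1 / (1 + 3), by norm_num, ?_⟩
    rw [discWithStrip_zero, ← union_self unitDisc]
    exact coneProperty_union (convex_ball 0 1) (convex_ball 0 1) Metric.isOpen_ball
      Metric.isOpen_ball one_pos subset_rfl subset_rfl
      (by rw [union_self]; exact Metric.ball_subset_closedBall)
  · refine ⟨w / (M + w + 3), by positivity, ?_⟩
    refine coneProperty_union (convex_ball 0 1) (convex_openBox _ _ _ _) Metric.isOpen_ball
      (isOpen_openBox _ _ _ _) hw0 (Metric.ball_subset_ball hw1) (fun x hx => ?_)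
      (isStarDomain_discWithStrip hM hw le_rfl).subset_closedBall
    rw [mem_ball_zero_iff] at hx
    exact mem_openBox_neg_iff.2 ⟨by linarith [abs_apply_le_norm x 0],
      (abs_apply_le_norm x 1).trans_lt hx⟩

theorem volume_real_discWithStrip_le (hM : 0 ≤ M) (hw : 0 ≤ w) :
    volume.real (discWithStrip M w) ≤ π + 4 * (w * M) := by
  refine (measureReal_union_le _ _).trans ?_
  rw [volume_real_unitDisc, volume_real_openBox (by linarith) (by linarith)]
  linarith

theorem le_volume_real_discWithStrip (hM : 1 ≤ M) (hw : 0 ≤ w) :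
    π + 2 * (w * (M - 1)) ≤ volume.real (discWithStrip M w) := by
  have hb := isBounded_discWithStrip hM hw
  have hsub : unitDisc ∪ openBox 1 M (-w) w ⊆ discWithStrip M w :=
    union_subset (unitDisc_subset_discWithStrip M w)
      (openBox_subset_discWithStrip (by linarith))
  have hdisj : Disjoint unitDisc (openBox 1 M (-w) w) := disjoint_left.2 fun x hx h => by
    linarith [mem_unitDisc_iff.1 hx, h.1.1, le_abs_self (x 0), abs_apply_le_norm x 0]
  calc π + 2 * (w * (M - 1)) = volume.real (unitDisc ∪ openBox 1 M (-w) w) := by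
        rw [measureReal_union hdisj (isOpen_openBox _ _ _ _).measurableSet
          (hb.subset (subset_union_left.trans hsub)).measure_lt_top.ne
          (hb.subset (subset_union_right.trans hsub)).measure_lt_top.ne,
          volume_real_unitDisc, volume_real_openBox hM (by linarith)]
        ring
    _ ≤ _ := measureReal_mono hsub hb.measure_lt_top.ne

theorem le_setIntegral_discWithStrip_apply_zero_sq (hM : 1 ≤ M) (hw : 0 ≤ w) :
    w * M ^ 3 / 4 ≤ ∫ x in discWithStrip M w, x 0 ^ 2 := by
  have hb := isBounded_discWithStrip hM hw
  have hsub : openBox (M / 2) M (-w) w ⊆ discWithStrip M w :=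
    openBox_subset_discWithStrip (by linarith)
  calc w * M ^ 3 / 4 = ∫ _ in openBox (M / 2) M (-w) w, (M / 2) ^ 2 := by
        rw [setIntegral_const, volume_real_openBox (by linarith) (by linarith), smul_eq_mul]
        ring
    _ ≤ ∫ x in openBox (M / 2) M (-w) w, x 0 ^ 2 :=
        setIntegral_mono_on (integrableOn_of_isBounded (hb.subset hsub) (by fun_prop))
          (integrableOn_of_isBounded (hb.subset hsub) (by fun_prop))
          (isOpen_openBox _ _ _ _).measurableSet
          fun x hx => pow_le_pow_left₀ (by linarith) hx.1.1.le 2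
    _ ≤ _ := setIntegral_mono_set (integrableOn_of_isBounded hb (by fun_prop))
        (Eventually.of_forall fun x => sq_nonneg _) hsub.eventuallyLE

theorem norm_fderiv_apply_le_one (i : Fin 2) (x : E2) : ‖fderiv ℝ (fun x : E2 => x i) x‖ ≤ 1 := by
  rw [show fderiv ℝ (fun x : E2 => x i) x = EuclideanSpace.proj (𝕜 := ℝ) i from
    (EuclideanSpace.proj (𝕜 := ℝ) i).fderiv]
  exact ContinuousLinearMap.opNorm_le_bound _ zero_le_one fun y => by
    simpa using abs_apply_le_norm y i

theorem nEig1_discWithStrip_mul_le (hM : 1 ≤ M) (hw : 0 ≤ w) :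
    nEig1 (discWithStrip M w) * (w * M ^ 3 / 4) ≤ volume.real (discWithStrip M w) := by
  have hb := isBounded_discWithStrip hM hw
  have hm := (isOpen_discWithStrip M w).measurableSet
  have hcoord : ContDiff ℝ ∞ fun x : E2 => x 0 := by fun_prop
  calc nEig1 (discWithStrip M w) * (w * M ^ 3 / 4)
      ≤ nEig1 (discWithStrip M w) * ∫ x in discWithStrip M w, x 0 ^ 2 :=
        mul_le_mul_of_nonneg_left (le_setIntegral_discWithStrip_apply_zero_sq hM hw)
          (nEig1_nonneg _)
    _ ≤ ∫ x in discWithStrip M w, ‖fderiv ℝ (fun x : E2 => x 0) x‖ ^ 2 :=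
        nEig1_mul_setIntegral_sq_le hcoord
          (setIntegral_eq_zero_of_odd hm neg_mem_discWithStrip_iff fun x => by simp)
    _ ≤ ∫ _ in discWithStrip M w, 1 :=
        setIntegral_mono_on
          (integrableOn_of_isBounded hb ((hcoord.continuous_fderiv (by simp)).norm.pow 2))
          (integrableOn_of_isBounded hb continuous_const) hm
          fun x _ => pow_le_one₀ (norm_nonneg _) (norm_fderiv_apply_le_one 0 x)
    _ = volume.real (discWithStrip M w) := by simp

theorem volume_mul_nEig1_discWithStrip_le (hM : 1 ≤ M) (hw : 0 ≤ w) (hw' : w ≤ 1 / 10)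
    (hwM : 4 * (w * M) ≤ 1) :
    volume.real (discWithStrip M w) * nEig1 (discWithStrip M w) ≤ π * nEig1 unitDisc := by
  refine volume_mul_nEig1_le_of_thin (isOpen_discWithStrip M w) (isBounded_discWithStrip hM hw)
    (unitDisc_subset_discWithStrip M w) neg_mem_discWithStrip_iff ?_
    (by linarith [volume_real_discWithStrip_le (zero_le_one.trans hM) hw])
  rintro x (hx | hx) hx1
  · exact absurd (mem_unitDisc_iff.1 hx) hx1.not_gt
  · exact (mem_openBox_neg_iff.1 hx).2.le.trans hw'

theorem volume_mul_dEig1_discWithStrip_le (hM : 0 ≤ M) (hw : 0 ≤ w) :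
    volume.real (discWithStrip M w) * dEig1 (discWithStrip M w) ≤
      (π + 4 * (w * M)) * dEig1 unitDisc :=
  mul_le_mul (volume_real_discWithStrip_le hM hw)
    (dEig1_anti Metric.isOpen_ball nonempty_unitDisc (unitDisc_subset_discWithStrip M w))
    (dEig1_nonneg _) (by positivity)

theorem hasThinTentacles_of_tsupport_subset {u : E2 → ℝ} (hM : 1 ≤ M) (hw : 0 ≤ w) (hw1 : w ≤ 1)
    (hu : tsupport u ⊆ discWithStrip M w) : HasThinTentacles u (M + 1) w where
  tsupport_subset x hx := mem_ball_zero_iff.2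
    ((norm_lt_of_mem_discWithStrip hM hw (hu hx)).trans_le (by linarith))
  notMem_tsupport r θ hr hθ hmem := by
    have hr0 : 0 ≤ r := zero_le_one.trans hr
    rcases hu hmem with hx | hx
    · rw [mem_unitDisc_iff, norm_smul_unitRadial hr0] at hx
      exact hx.not_ge hr
    · have hsin := (mem_openBox_neg_iff.1 hx).2
      simp only [PiLp.smul_apply, unitRadial_one, smul_eq_mul, abs_mul, abs_of_nonneg hr0] at hsin
      exact hθ ((le_mul_of_one_le_left (abs_nonneg _) hr).trans_lt hsin)

theorem le_dEig1_discWithStrip (hM : 1 ≤ M) (hw : 0 < w) (hw1 : w ≤ 1) (hΛ : 0 < dEig1 unitDisc)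
    (hsmall : 16 * π ^ 3 * dEig1 unitDisc ^ 2 * w ^ 2 * (M + 1) ≤ 1)
    (hsmall' : dEig1 unitDisc * (2 * π * w * (M + 1)) ^ 2 ≤ 1 / 2) :
    dEig1 unitDisc * (1 - 4 * π * dEig1 unitDisc * w ^ 2 * (M + 1)) ≤
      dEig1 (discWithStrip M w) :=
  le_dEig1 (isOpen_discWithStrip M w)
    (nonempty_unitDisc.mono (unitDisc_subset_discWithStrip M w)) fun _ hu _ hsupp =>
      (hasThinTentacles_of_tsupport_subset hM hw.le hw1 hsupp).dEig1_unitDisc_mul_integral_sq_le hu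
        (by linarith) hw hw1 hΛ hsmall hsmall'

end DiscWithStrip

section DiscWithStrip

variable {M w M' w' : ℝ}

theorem areDilationClose_discWithStrip (hM : 0 < M) (hM' : 0 < M') (hw : 0 < w) (hw' : 0 < w') :
    AreDilationClose (min (min (M / M') (M' / M)) (min (w / w') (w' / w)))
      (discWithStrip M w) (discWithStrip M' w') := by
  set κ := min (min (M / M') (M' / M)) (min (w / w') (w' / w))
  have hκ : 0 < κ := by positivity
  have hκM : κ ≤ M / M' := (min_le_left _ _).trans (min_le_left _ _)
  have hκM' : κ ≤ M' / M := (min_le_left _ _).trans (min_le_right _ _)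
  have hκw : κ ≤ w / w' := (min_le_right _ _).trans (min_le_left _ _)
  have hκw' : κ ≤ w' / w := (min_le_right _ _).trans (min_le_right _ _)
  have hκ1 : κ ≤ 1 := (le_total M M').elim (fun h => hκM.trans ((div_le_one hM').2 h))
    fun h => hκM'.trans ((div_le_one hM).2 h)
  exact ⟨hκ, hκ1,
    smul_discWithStrip_subset hκ hκ1 ((le_div_iff₀ hM).1 hκM') ((le_div_iff₀ hw).1 hκw'),
    smul_discWithStrip_subset hκ hκ1 ((le_div_iff₀ hM').1 hκM) ((le_div_iff₀ hw').1 hκw)⟩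

theorem areDilationClose_discWithStrip_unitDisc (hM : 1 ≤ M) (hw : 0 ≤ w) :
    AreDilationClose (M + w)⁻¹ (discWithStrip M w) unitDisc := by
  have hpos : 0 < M + w := by linarith
  have hinv : (M + w)⁻¹ ≤ 1 := inv_le_one_of_one_le₀ (by linarith)
  refine ⟨inv_pos.2 hpos, hinv, ?_, ?_⟩
  · rintro _ ⟨x, hx, rfl⟩
    rw [mem_unitDisc_iff, norm_smul, Real.norm_of_nonneg (inv_pos.2 hpos).le,
      inv_mul_lt_one₀ hpos]
    exact norm_lt_of_mem_discWithStrip hM hw hx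
  · rintro _ ⟨x, hx, rfl⟩
    refine unitDisc_subset_discWithStrip M w ?_
    rw [mem_unitDisc_iff] at hx
    rw [mem_unitDisc_iff, norm_smul, Real.norm_of_nonneg (inv_pos.2 hpos).le]
    exact mul_lt_one_of_nonneg_of_lt_one_right hinv (norm_nonneg x) hx

theorem pi_le_add_mul_one_sub {a X : ℝ} (ha : 0 ≤ a) (hX : X ≤ 1 / 2) (hXa : π * X ≤ a) :
    π ≤ (π + 2 * a) * (1 - X) := by
  nlinarith [mul_le_mul_of_nonneg_left hX ha]

theorem le_dEig1_discWithStrip_of_small (hM : 1 ≤ M) (hw : 0 ≤ w) (hq : w * (M + 1) ≤ 1 / 500)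
    (hqΛ : w * (M + 1) * dEig1 unitDisc ≤ 1 / 500) :
    dEig1 unitDisc * (1 - 4 * π * dEig1 unitDisc * w ^ 2 * (M + 1)) ≤
      dEig1 (discWithStrip M w) := by
  rcases (dEig1_nonneg unitDisc).eq_or_lt with hΛ0 | hΛ
  · rw [← hΛ0, zero_mul]
    exact dEig1_nonneg _
  rcases hw.eq_or_lt with rfl | hw0
  · simp
  have hwq : w ≤ w * (M + 1) := le_mul_of_one_le_right hw (by linarith)
  refine le_dEig1_discWithStrip hM hw0 (by linarith) hΛ ?_ ?_
  · calc 16 * π ^ 3 * dEig1 unitDisc ^ 2 * w ^ 2 * (M + 1)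
        = 16 * π ^ 3 * ((w * (M + 1) * dEig1 unitDisc) * (w * dEig1 unitDisc)) := by ring
      _ ≤ 16 * 4 ^ 3 * (1 / 500 * (1 / 500)) := by
        gcongr
        exacts [pi_lt_four.le, (mul_le_mul_of_nonneg_right hwq hΛ.le).trans hqΛ]
      _ ≤ 1 := by norm_num
  · calc dEig1 unitDisc * (2 * π * w * (M + 1)) ^ 2
        = 4 * π ^ 2 * ((w * (M + 1) * dEig1 unitDisc) * (w * (M + 1))) := by ring
      _ ≤ 4 * 4 ^ 2 * (1 / 500 * (1 / 500)) := by gcongr; exact pi_lt_four.le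
      _ ≤ 1 / 2 := by norm_num

-- Attaching the strip adds area of order `w (M - 1)` but lowers `λ₁` only by order `w² (M + 1)`.
theorem pi_mul_dEig1_unitDisc_le_volume_mul_dEig1_discWithStrip (hM : 1 ≤ M) (hw : 0 ≤ w)
    (hq : w * (M + 1) ≤ 1 / 500) (hqΛ : w * (M + 1) * dEig1 unitDisc ≤ 1 / 500)
    (hqM : 64 * (w * (M + 1) * dEig1 unitDisc) ≤ M - 1) :
    π * dEig1 unitDisc ≤ volume.real (discWithStrip M w) * dEig1 (discWithStrip M w) := by
  have hlower := le_dEig1_discWithStrip_of_small hM hw hq hqΛ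
  have hΛ : 0 ≤ dEig1 unitDisc := dEig1_nonneg unitDisc
  set Λ := dEig1 unitDisc
  have hwq : w ≤ w * (M + 1) := le_mul_of_one_le_right hw (by linarith)
  have hdefect : 4 * π * Λ * w ^ 2 * (M + 1) ≤ 1 / 2 :=
    calc 4 * π * Λ * w ^ 2 * (M + 1) = 4 * π * ((w * (M + 1) * Λ) * w) := by ring
      _ ≤ 4 * 4 * (1 / 500 * (1 / 500)) := by gcongr; exacts [pi_lt_four.le, hwq.trans hq]
      _ ≤ 1 / 2 := by norm_num
  have hdefect_le_area : π * (4 * π * Λ * w ^ 2 * (M + 1)) ≤ w * (M - 1) :=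
    calc π * (4 * π * Λ * w ^ 2 * (M + 1)) = w * (4 * π ^ 2 * (w * (M + 1) * Λ)) := by ring
      _ ≤ w * (4 * 4 ^ 2 * (w * (M + 1) * Λ)) := by gcongr; exact pi_lt_four.le
      _ ≤ w * (M - 1) := by gcongr; linarith
  have hcompensation :=
    pi_le_add_mul_one_sub (mul_nonneg hw (by linarith)) hdefect hdefect_le_area
  calc π * Λ ≤ (π + 2 * (w * (M - 1))) * (1 - 4 * π * Λ * w ^ 2 * (M + 1)) * Λ :=
        mul_le_mul_of_nonneg_right hcompensation hΛ
    _ = (π + 2 * (w * (M - 1))) * (Λ * (1 - 4 * π * Λ * w ^ 2 * (M + 1))) := by ring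
    _ ≤ _ := mul_le_mul (le_volume_real_discWithStrip hM hw) hlower
        (mul_nonneg hΛ (by linarith)) measureReal_nonneg

end DiscWithStrip

/-! ### The path -/

/-- The point of the Blaschke–Santaló diagram corresponding to `Ω`. -/
def diagPoint (Ω : Set E2) : ℝ × ℝ := (volume.real Ω * dEig1 Ω, volume.real Ω * nEig1 Ω)

theorem tendsto_diagPoint_of_areDilationClose {ι : Type*} {l : Filter ι} {Ω : ι → Set E2}
    {Ω₀ : Set E2} {κ : ι → ℝ} {R : ℝ} (hΩ₀ : IsStarDomain Ω₀ R)
    (hΩ : ∀ᶠ i in l, IsStarDomain (Ω i) R) (hκ : Tendsto κ l (𝓝 1))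
    (hclose : ∀ᶠ i in l, AreDilationClose (κ i) (Ω i) Ω₀) :
    Tendsto (fun i => diagPoint (Ω i)) l (𝓝 (diagPoint Ω₀)) := by
  have hvolume := tendsto_volume_real_of_areDilationClose hΩ₀.isBounded
    (hΩ.mono fun _ h => h.isBounded) hκ hclose
  exact (hvolume.mul (tendsto_dEig1_of_areDilationClose hΩ₀.isOpen hΩ₀.nonempty
    (hΩ.mono fun _ h => h.isOpen) (hΩ.mono fun _ h => h.nonempty) hκ hclose)).prodMk_nhds
      (hvolume.mul (tendsto_nEig1_of_areDilationClose hΩ₀ hΩ hκ hclose))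

/-- Half the length of the strip at time `t` of the path. -/
def stripLength (t : ℝ) : ℝ := 1 / (1 - t)

/-- Half the width of the strip at time `t`. The power of `1 - t` makes the area of the strip
vanish as `t → 1` while its second moment, of order `w M ^ 3`, blows up; the latter forces
`μ₁ → 0`. -/
def stripWidth (c t : ℝ) : ℝ := c * t * (1 - t) ^ 2

/-- The domain at time `t` of the path; the parameter `c` bounds the area of the strip. -/
def tentacledDisc (c t : ℝ) : Set E2 := discWithStrip (stripLength t) (stripWidth c t)

section Path

variable {c t : ℝ}

theorem one_le_stripLength (ht : t ∈ Ico (0 : ℝ) 1) : 1 ≤ stripLength t :=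
  one_le_one_div (sub_pos.2 ht.2) (by linarith [ht.1])

theorem stripWidth_nonneg (hc : 0 ≤ c) (ht : 0 ≤ t) : 0 ≤ stripWidth c t := by
  unfold stripWidth; positivity

theorem stripWidth_pos (hc : 0 < c) (ht : t ∈ Ioo (0 : ℝ) 1) : 0 < stripWidth c t := by
  have := ht.1
  have := sub_pos.2 ht.2
  unfold stripWidth
  positivity

theorem stripWidth_le (hc : 0 ≤ c) (ht : t ∈ Ico (0 : ℝ) 1) : stripWidth c t ≤ c :=
  calc c * t * (1 - t) ^ 2 ≤ c * 1 * 1 ^ 2 := by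
        have := sub_pos.2 ht.2
        have := ht.1
        gcongr <;> linarith [ht.2]
    _ = c := by ring

theorem stripWidth_mul_stripLength (c : ℝ) (ht : t < 1) :
    stripWidth c t * stripLength t = c * t * (1 - t) := by
  have : 1 - t ≠ 0 := (sub_pos.2 ht).ne'
  unfold stripWidth stripLength
  field_simp

theorem continuousAt_stripLength (ht : t < 1) : ContinuousAt stripLength t :=
  continuousAt_const.div (by fun_prop) (sub_pos.2 ht).ne'

theorem continuous_stripWidth (c : ℝ) : Continuous (stripWidth c) := by
  unfold stripWidth; fun_prop

theorem mul_mul_one_sub_le (hc : 0 ≤ c) (ht : t ∈ Ico (0 : ℝ) 1) : c * t * (1 - t) ≤ c := by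
  have := mul_le_mul_of_nonneg_left (by nlinarith [ht.1, ht.2] : t * (1 - t) ≤ 1) hc
  linarith

theorem tentacledDisc_zero (c : ℝ) : tentacledDisc c 0 = unitDisc := by
  simp [tentacledDisc, stripWidth]

theorem isStarDomain_tentacledDisc {R : ℝ} (hc : 0 ≤ c) (ht : t ∈ Ico (0 : ℝ) 1)
    (hR : stripLength t + c ≤ R) : IsStarDomain (tentacledDisc c t) R :=
  isStarDomain_discWithStrip (one_le_stripLength ht) (stripWidth_nonneg hc ht.1)
    (by linarith [stripWidth_le hc ht])

theorem diagPoint_tentacledDisc_mem_diagE (hc : 0 ≤ c) (hc1 : c ≤ 1) (ht : t ∈ Ico (0 : ℝ) 1) :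
    diagPoint (tentacledDisc c t) ∈ diagE :=
  have hstar := isStarDomain_tentacledDisc hc ht le_rfl
  ⟨_, hstar.nonempty, hstar.isOpen, hstar.isBounded,
    exists_coneProperty_discWithStrip (one_le_stripLength ht) (stripWidth_nonneg hc ht.1)
      ((stripWidth_le hc ht).trans hc1), rfl⟩

theorem exists_tendsto_areDilationClose_tentacledDisc (hc : 0 < c) {t₀ : ℝ}
    (ht₀ : t₀ ∈ Ico (0 : ℝ) 1) :
    ∃ κ : ℝ → ℝ, Tendsto κ (𝓝[Ico 0 1] t₀) (𝓝 1) ∧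
      ∀ᶠ t in 𝓝[Ico 0 1] t₀, AreDilationClose (κ t) (tentacledDisc c t) (tentacledDisc c t₀) := by
  have hlength : Tendsto stripLength (𝓝[Ico 0 1] t₀) (𝓝 (stripLength t₀)) :=
    (continuousAt_stripLength ht₀.2).continuousWithinAt
  have hwidth : Tendsto (stripWidth c) (𝓝[Ico 0 1] t₀) (𝓝 (stripWidth c t₀)) :=
    (continuous_stripWidth c).continuousWithinAt
  rcases ht₀.1.eq_or_lt with rfl | ht₀_pos
  · refine ⟨fun t => (stripLength t + stripWidth c t)⁻¹, ?_, ?_⟩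
    · simpa [stripLength, stripWidth] using (hlength.add hwidth).inv₀
        (by simp [stripLength, stripWidth])
    · rw [tentacledDisc_zero]
      filter_upwards [self_mem_nhdsWithin] with t ht using
        areDilationClose_discWithStrip_unitDisc (one_le_stripLength ht)
          (stripWidth_nonneg hc.le ht.1)
  · have hM₀ : 0 < stripLength t₀ := zero_lt_one.trans_le (one_le_stripLength ht₀)
    have hw₀ : 0 < stripWidth c t₀ := stripWidth_pos hc ⟨ht₀_pos, ht₀.2⟩
    refine ⟨fun t =>
      min (min (stripLength t / stripLength t₀) (stripLength t₀ / stripLength t))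
        (min (stripWidth c t / stripWidth c t₀) (stripWidth c t₀ / stripWidth c t)), ?_, ?_⟩
    · have hlength_ratio := (hlength.div_const (stripLength t₀)).min
        ((tendsto_const_nhds (x := stripLength t₀)).div hlength hM₀.ne')
      have hwidth_ratio := (hwidth.div_const (stripWidth c t₀)).min
        ((tendsto_const_nhds (x := stripWidth c t₀)).div hwidth hw₀.ne')
      simpa [div_self hM₀.ne', div_self hw₀.ne'] using hlength_ratio.min hwidth_ratio
    · filter_upwards [self_mem_nhdsWithin, nhdsWithin_le_nhds (lt_mem_nhds ht₀_pos)]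
        with t ht ht_pos using areDilationClose_discWithStrip
          (zero_lt_one.trans_le (one_le_stripLength ht)) hM₀
          (stripWidth_pos hc ⟨ht_pos, ht.2⟩) hw₀

theorem continuousOn_diagPoint_tentacledDisc (hc : 0 < c) :
    ContinuousOn (fun t => diagPoint (tentacledDisc c t)) (Ico 0 1) := by
  intro t₀ ht₀
  obtain ⟨κ, hκ, hclose⟩ := exists_tendsto_areDilationClose_tentacledDisc hc ht₀
  have hlength : ∀ᶠ t in 𝓝[Ico 0 1] t₀, stripLength t < stripLength t₀ + 1 :=
    (continuousAt_stripLength ht₀.2).continuousWithinAt.eventually (gt_mem_nhds (lt_add_one _))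
  refine tendsto_diagPoint_of_areDilationClose (R := stripLength t₀ + 1 + c)
    (isStarDomain_tentacledDisc hc.le ht₀ (by linarith)) ?_ hκ hclose
  filter_upwards [self_mem_nhdsWithin, hlength] with t ht hlt using
    isStarDomain_tentacledDisc hc.le ht (by linarith)

theorem diagPoint_fst_tentacledDisc_le (hc : 0 ≤ c) (ht : t ∈ Ico (0 : ℝ) 1) :
    (diagPoint (tentacledDisc c t)).1 ≤ (π + 4 * (c * t * (1 - t))) * dEig1 unitDisc := by
  rw [← stripWidth_mul_stripLength c ht.2]
  exact volume_mul_dEig1_discWithStrip_le (zero_le_one.trans (one_le_stripLength ht))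
    (stripWidth_nonneg hc ht.1)

theorem pi_mul_dEig1_unitDisc_le_diagPoint_fst (hc : 0 ≤ c) (hc1 : c ≤ 1 / 1000)
    (hcΛ : c * dEig1 unitDisc ≤ 1 / 1000) (ht : t ∈ Ico (0 : ℝ) 1) :
    π * dEig1 unitDisc ≤ (diagPoint (tentacledDisc c t)).1 := by
  have hwidth : stripWidth c t * (stripLength t + 1) ≤ 2 * c * t := by
    have hct : 0 ≤ c * t := mul_nonneg hc ht.1
    rw [mul_add, stripWidth_mul_stripLength c ht.2, mul_one, stripWidth]
    nlinarith [mul_le_of_le_one_right hct (by linarith [ht.1] : 1 - t ≤ 1),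
      mul_le_of_le_one_right hct (pow_le_one₀ (n := 2) (sub_pos.2 ht.2).le (by linarith [ht.1]))]
  have hlength : t ≤ stripLength t - 1 := by
    rw [stripLength, le_sub_iff_add_le, le_div_iff₀ (sub_pos.2 ht.2)]
    nlinarith [ht.1]
  have hwidthΛ := mul_le_mul_of_nonneg_right hwidth (dEig1_nonneg unitDisc)
  have hcΛt := mul_le_mul_of_nonneg_right hcΛ ht.1
  refine pi_mul_dEig1_unitDisc_le_volume_mul_dEig1_discWithStrip (one_le_stripLength ht)
    (stripWidth_nonneg hc ht.1) ?_ ?_ ?_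
  · nlinarith [ht.2]
  · linarith [ht.2]
  · linarith [ht.1]

theorem diagPoint_snd_nonneg (Ω : Set E2) : 0 ≤ (diagPoint Ω).2 :=
  mul_nonneg measureReal_nonneg (nEig1_nonneg Ω)

theorem diagPoint_snd_tentacledDisc_le (hc : 0 ≤ c) (hc1 : c ≤ 1 / 10) (ht : t ∈ Ico (0 : ℝ) 1) :
    (diagPoint (tentacledDisc c t)).2 ≤ π * nEig1 unitDisc := by
  refine volume_mul_nEig1_discWithStrip_le (one_le_stripLength ht) (stripWidth_nonneg hc ht.1)
    ((stripWidth_le hc ht).trans hc1) ?_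
  rw [stripWidth_mul_stripLength c ht.2]
  linarith [mul_mul_one_sub_le hc ht]

theorem diagPoint_snd_tentacledDisc_le_mul_one_sub (hc : 0 < c) (hc1 : c ≤ 1 / 4)
    (ht : t ∈ Ico (1 / 2 : ℝ) 1) :
    (diagPoint (tentacledDisc c t)).2 ≤ 200 / c * (1 - t) := by
  have ht' : t ∈ Ico (0 : ℝ) 1 := ⟨by linarith [ht.1], ht.2⟩
  have h1t : 0 < 1 - t := sub_pos.2 ht.2
  have hvolume : volume.real (tentacledDisc c t) ≤ 5 := by
    have h := volume_real_discWithStrip_le (zero_le_one.trans (one_le_stripLength ht'))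
      (stripWidth_nonneg hc.le ht'.1)
    rw [stripWidth_mul_stripLength c ht.2] at h
    exact h.trans (by linarith [mul_mul_one_sub_le hc.le ht', pi_lt_four])
  have hmoment : stripWidth c t * stripLength t ^ 3 / 4 = c * t / (4 * (1 - t)) := by
    unfold stripWidth stripLength
    field_simp
  have hnEig : nEig1 (tentacledDisc c t) ≤ 40 / c * (1 - t) := by
    have h := (nEig1_discWithStrip_mul_le (one_le_stripLength ht')
      (stripWidth_nonneg hc.le ht'.1)).trans hvolume
    rw [hmoment, mul_div_assoc', div_le_iff₀ (by positivity)] at h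
    rw [div_mul_eq_mul_div, le_div_iff₀ hc]
    have hhalf := mul_le_mul_of_nonneg_left ht.1
      (mul_nonneg (nEig1_nonneg (tentacledDisc c t)) hc.le)
    rw [← tentacledDisc] at h
    linarith
  calc (diagPoint (tentacledDisc c t)).2 ≤ 5 * (40 / c * (1 - t)) :=
        mul_le_mul hvolume hnEig (nEig1_nonneg _) (by norm_num)
    _ = 200 / c * (1 - t) := by ring

theorem tendsto_diagPoint_tentacledDisc (hc : 0 < c) (hc1 : c ≤ 1 / 1000)
    (hcΛ : c * dEig1 unitDisc ≤ 1 / 1000) :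
    Tendsto (fun t => diagPoint (tentacledDisc c t)) (𝓝[<] 1) (𝓝 (π * dEig1 unitDisc, 0)) := by
  have hhalf : ∀ᶠ t in 𝓝[<] (1 : ℝ), t ∈ Ico (1 / 2 : ℝ) 1 := Ico_mem_nhdsLT (by norm_num)
  have hzero : ∀ᶠ t in 𝓝[<] (1 : ℝ), t ∈ Ico (0 : ℝ) 1 := Ico_mem_nhdsLT one_pos
  have hupper : Tendsto (fun t => (π + 4 * (c * t * (1 - t))) * dEig1 unitDisc) (𝓝[<] 1)
      (𝓝 (π * dEig1 unitDisc)) :=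
    (Continuous.tendsto' (by fun_prop) _ _ (by simp)).mono_left nhdsWithin_le_nhds
  have hupper' : Tendsto (fun t => 200 / c * (1 - t)) (𝓝[<] 1) (𝓝 0) :=
    (Continuous.tendsto' (by fun_prop) _ _ (by simp)).mono_left nhdsWithin_le_nhds
  refine Tendsto.prodMk_nhds
    (tendsto_of_tendsto_of_tendsto_of_le_of_le' tendsto_const_nhds hupper
      (hzero.mono fun t => pi_mul_dEig1_unitDisc_le_diagPoint_fst hc.le hc1 hcΛ)
      (hzero.mono fun t => diagPoint_fst_tentacledDisc_le hc.le))
    (squeeze_zero' (Eventually.of_forall fun t => diagPoint_snd_nonneg _)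
      (hhalf.mono fun t => diagPoint_snd_tentacledDisc_le_mul_one_sub hc (by linarith)) hupper')

end Path

theorem exists_pos_le_and_mul_le {Λ δ : ℝ} (hΛ : 0 ≤ Λ) (hδ : 0 < δ) :
    ∃ c : ℝ, 0 < c ∧ c ≤ δ ∧ c * Λ ≤ δ := by
  refine ⟨δ / (1 + Λ), by positivity, div_le_self hδ.le (by linarith), ?_⟩
  rw [div_mul_eq_mul_div, div_le_iff₀ (by linarith)]
  nlinarith

/-- For every `η > 0` there is a continuous path inside `𝓔`, starting at the point
`A = (π λ₁(𝔻), π μ₁(𝔻))` of the unit disc, staying in the rectangle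
`[π λ₁(𝔻), π λ₁(𝔻) + η] × [0, π μ₁(𝔻)]`, and converging to the point `C = (π λ₁(𝔻), 0)`. -/
theorem path_to_bottom (η : ℝ) (hη : 0 < η) :
    ∃ γ : ℝ → ℝ × ℝ,
      ContinuousOn γ (Set.Ico 0 1) ∧
      γ 0 = (π * dEig1 unitDisc, π * nEig1 unitDisc) ∧
      (∀ t ∈ Set.Ico (0:ℝ) 1, γ t ∈ diagE) ∧
      (∀ t ∈ Set.Ico (0:ℝ) 1,
        γ t ∈ Set.Icc (π * dEig1 unitDisc) (π * dEig1 unitDisc + η) ×ˢ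
              Set.Icc (0:ℝ) (π * nEig1 unitDisc)) ∧
      Tendsto γ (nhdsWithin 1 (Set.Iio 1)) (nhds (π * dEig1 unitDisc, 0)) := by
  have hΛ := dEig1_nonneg unitDisc
  have hδ : 0 < min (1 / 1000) (η / 4) := by positivity
  obtain ⟨c, hc, hcδ, hcΛδ⟩ := exists_pos_le_and_mul_le hΛ hδ
  obtain ⟨hc1, -⟩ := le_min_iff.1 hcδ
  obtain ⟨hcΛ, hcη⟩ := le_min_iff.1 hcΛδ
  refine ⟨fun t => diagPoint (tentacledDisc c t), continuousOn_diagPoint_tentacledDisc hc, ?_,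
    fun t ht => diagPoint_tentacledDisc_mem_diagE hc.le (by linarith) ht,
    fun t ht => ⟨⟨pi_mul_dEig1_unitDisc_le_diagPoint_fst hc.le hc1 hcΛ ht, ?_⟩,
      diagPoint_snd_nonneg _, diagPoint_snd_tentacledDisc_le hc.le (by linarith) ht⟩,
    tendsto_diagPoint_tentacledDisc hc hc1 hcΛ⟩
  · simp only [tentacledDisc_zero, diagPoint, volume_real_unitDisc]
  · calc _ ≤ (π + 4 * (c * t * (1 - t))) * dEig1 unitDisc := diagPoint_fst_tentacledDisc_le hc.le ht
      _ ≤ (π + 4 * c) * dEig1 unitDisc := by gcongr; exact mul_mul_one_sub_le hc.le ht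
      _ ≤ π * dEig1 unitDisc + η := by linarith
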